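/- arXiv:2507.19293 — 6 statements merged into one kernel-verified Lean document; each statement's English description precedes it below -/
import Mathlib

section
/- For every odd n ≥ 3, there exists a balanced cyclic Gray code for S_n under all transpositions from the word 12⋯(n−1)n to the word 12⋯n(n−1), whose closing transposition is (n−1, n). -/
/-- A balanced cyclic Gray code for `S_n` under all transpositions: a cyclic listing
`π : Fin (N+1) → Perm (Fin n)` of all `n!` permutations of `[n]`, each appearing exactly
once, in which any two cyclically consecutive permutations differ by applying a
transposition, and each of the `n(n−1)/2` transpositions is applied exactly `2·(n−2)!`
times along the cycle. -/
def IsBalancedCyclicGrayCode (n N : ℕ) (π : Fin (N + 1) → Equiv.Perm (Fin n)) : Prop :=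
  N + 1 = Nat.factorial n ∧
  Function.Bijective π ∧
  (∀ s : Fin (N + 1), ∃ i j : Fin n, i ≠ j ∧ π (s + 1) = Equiv.swap i j * π s) ∧
  (∀ i j : Fin n, i ≠ j →
    (Finset.univ.filter (fun s : Fin (N + 1) =>
      π (s + 1) = Equiv.swap i j * π s)).card = 2 * Nat.factorial (n - 2))

/-!
Read a cyclic Gray code as the cyclic list of transpositions it applies. Given a balanced list for
`S_m`, each block of `S_{m+1}`, consisting of the words with a given first letter `p`, is toured by
the copy of that list avoiding the value `p`; over all blocks, every transposition is used
`(m - 1) · 2 (m - 2)! = 2 (m - 1)!` times.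

Adjacent blocks `i` and `i + 1` are spliced along `e_i = (i, i+1)`: one application of
`f_i = e_{i+2}` (cyclically) is removed from either tour and the loose ends are joined by two
applications of `e_i`, which is possible because `e_i` and `f_i` commute. Each splice costs `f_i`
twice and gains `e_i` twice, and as the `f_i` are the `e_i` in another order, all these changes
cancel in the end. Disjointness of `e_i` and `f_i` requires `4 ≤ m`, so the induction starts at
`S_4`.
-/

open Equiv

section Tours

variable {G H : Type*} [Group G] [Group H]

/-- The elements reached from `x` by multiplying on the left by the entries of `l`, last entry
first; the starting point is not recorded, the final point `l.prod * x` is. -/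
def visits (x : G) : List G → Multiset G
  | [] => 0
  | s :: l => ((s :: l).prod * x) ::ₘ visits x l

/-- Reading `l` from its last entry to its first, left multiplication leads from `x` back to `x`
through every element of `A` exactly once, and through no other element. -/
structure IsTour (l : List G) (x : G) (A : Finset G) : Prop where
  prod_eq_one : l.prod = 1
  visits_eq : visits x l = A.val

theorem visits_append (x : G) (l₁ l₂ : List G) :
    visits x (l₁ ++ l₂) = visits (l₂.prod * x) l₁ + visits x l₂ := by
  induction l₁ with
  | nil => simp [visits]
  | cons s l₁ ih => simp [visits, ih, mul_assoc]

theorem visits_map (φ : G →* H) (y : H) (l : List G) :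
    visits y (l.map φ) = (visits 1 l).map (φ · * y) := by
  induction l with
  | nil => simp [visits]
  | cons s l ih => simp [visits, ih, List.prod_hom]

theorem visits_eq_map_range (x : G) (l : List G) :
    visits x l = (Multiset.range l.length).map fun k ↦ (l.drop k).prod * x := by
  induction l with
  | nil => simp [visits]
  | cons s l ih =>
    rw [visits, ih, List.length_cons, ← Multiset.coe_range, ← Multiset.coe_range,
      List.range_succ_eq_map]
    simp [Function.comp_def]

namespace IsTour

variable {x y e f : G} {A S T : Finset G} {l l₁ l₂ a b r : List G}

theorem length_eq_card (h : IsTour l x A) : l.length = A.card := by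
  rw [Finset.card_def, ← h.visits_eq, visits_eq_map_range, Multiset.card_map, Multiset.card_range]

theorem map [Fintype G] (h : IsTour l (1 : G) Finset.univ) (φ : G →* H)
    (hφ : Function.Injective φ) (y : H) :
    IsTour (l.map φ) y (Finset.univ.map ⟨(φ · * y), (mul_left_injective y).comp hφ⟩) where
  prod_eq_one := by rw [List.prod_hom, h.prod_eq_one, map_one]
  visits_eq := by rw [visits_map, h.visits_eq]; rfl

theorem change_start [Fintype G] (h : IsTour l x Finset.univ) (y : G) :
    IsTour l y Finset.univ where
  prod_eq_one := h.prod_eq_one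
  visits_eq := by
    have htranslate : visits y l = (visits x l).map (· * (x⁻¹ * y)) := by
      simp [visits_eq_map_range, mul_assoc]
    rw [htranslate, h.visits_eq]
    exact congrArg Finset.val (Finset.map_univ_equiv (Equiv.mulRight (x⁻¹ * y)))

theorem rotate [Fintype G] (h : IsTour (l₁ ++ l₂) x Finset.univ) :
    IsTour (l₂ ++ l₁) x Finset.univ := by
  have hprod : l₁.prod * l₂.prod = 1 := by rw [← List.prod_append, h.prod_eq_one]
  refine change_start (x := l₂.prod * x) ⟨?_, ?_⟩ x
  · rw [List.prod_append, mul_eq_one_iff_eq_inv, eq_comm, inv_eq_iff_mul_eq_one, hprod]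
  · rw [← h.visits_eq, visits_append, visits_append, ← mul_assoc, hprod, one_mul, add_comm]

theorem exists_cons_perm [Fintype G] (h : IsTour l x Finset.univ) (he : e ∈ l) :
    ∃ l', (e :: l').Perm l ∧ IsTour (e :: l') x Finset.univ := by
  obtain ⟨a, b, rfl⟩ := List.append_of_mem he
  exact ⟨b ++ a, List.perm_append_comm (l₁ := e :: b), h.rotate⟩

-- Replacing the entry `f` by the detour `e r e` changes nothing else, because `r.prod = f` and `e`,
-- `f` are commuting involutions.
theorem splice [DecidableEq G] (hS : IsTour (f :: r) (e * (b.prod * x)) S)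
    (hT : IsTour (a ++ f :: b) x T) (hST : Disjoint S T) (hef : Commute e f) (he : e * e = 1)
    (hf : f * f = 1) : IsTour (a ++ e :: (r ++ e :: b)) x (S ∪ T) := by
  have hfr : f * r.prod = 1 := by simpa using hS.prod_eq_one
  have hr : r.prod = f := by
    rw [eq_inv_of_mul_eq_one_right hfr, inv_eq_of_mul_eq_one_right hf]
  have hdetour : e * (f * (e * b.prod)) = f * b.prod := by
    rw [← mul_assoc f, ← hef.eq, mul_assoc, ← mul_assoc, he, one_mul]
  constructor
  · rw [← hT.prod_eq_one]
    simp [hr, hdetour]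
  · rw [← Finset.disjUnion_eq_union S T hST, Finset.disjUnion_val, ← hS.visits_eq,
      ← hT.visits_eq]
    simp only [visits_append, visits, List.prod_append, List.prod_cons, hr, hdetour, hf, one_mul,
      mul_assoc, ← Multiset.singleton_add]
    abel

end IsTour

end Tours

section BalancedTours

variable {n : ℕ}

/-- The list of transpositions, last one first, applied along a balanced cyclic Gray code for
`S_n`. -/
structure IsBalancedTour (l : List (Perm (Fin n))) : Prop where
  isTour : IsTour l 1 Finset.univ
  isSwap : ∀ s ∈ l, s.IsSwap
  count_swap : ∀ i j : Fin n, i ≠ j → l.count (swap i j) = 2 * (n - 2).factorial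

namespace IsBalancedTour

variable {l l₁ l₂ : List (Perm (Fin n))}

theorem swap_mem (h : IsBalancedTour l) {i j : Fin n} (hij : i ≠ j) : swap i j ∈ l :=
  List.count_pos_iff.1 (by rw [h.count_swap i j hij]; positivity)

theorem rotate (h : IsBalancedTour (l₁ ++ l₂)) : IsBalancedTour (l₂ ++ l₁) where
  isTour := h.isTour.rotate
  isSwap s hs := h.isSwap s (List.perm_append_comm.mem_iff.1 hs)
  count_swap i j hij := by rw [← h.count_swap i j hij, List.perm_append_comm.count_eq]

theorem isBalancedCyclicGrayCode (h : IsBalancedTour l) {N : ℕ} (hN : l.length = N + 1) :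
    IsBalancedCyclicGrayCode n N fun s ↦ (l.drop s).prod := by
  have hcard : N + 1 = n.factorial := by
    rw [← hN, h.isTour.length_eq_card, Finset.card_univ, Fintype.card_perm, Fintype.card_fin]
  have hsurj : Function.Surjective fun s : Fin (N + 1) ↦ (l.drop s).prod := fun g ↦ by
    have hg : g ∈ visits 1 l := by rw [h.isTour.visits_eq]; exact Finset.mem_univ g
    obtain ⟨k, hk, rfl⟩ := Multiset.mem_map.1 (visits_eq_map_range 1 l ▸ hg)
    exact ⟨⟨k, hN ▸ Multiset.mem_range.1 hk⟩, by simp⟩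
  have hnext (s : Fin (N + 1)) : (l.drop (s + 1 : Fin (N + 1))).prod = (l.drop (s + 1)).prod := by
    obtain rfl | hs := eq_or_ne s (Fin.last N)
    · simp [← hN, h.isTour.prod_eq_one]
    · rw [Fin.val_add_one_of_lt (Fin.lt_last_iff_ne_last.2 hs)]
  have hstep (s : Fin (N + 1)) :
      (l.drop (s + 1 : Fin (N + 1))).prod = l[s] * (l.drop s).prod := by
    obtain ⟨i, j, -, hij⟩ := h.isSwap l[s] (List.getElem_mem _)
    have hs : (s : ℕ) < l.length := by omega
    have hdrop : (l.drop s).prod = l[s] * (l.drop (s + 1)).prod := by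
      rw [List.drop_eq_getElem_cons hs, List.prod_cons, Fin.getElem_fin]
    rw [hnext, hdrop, hij, swap_mul_self_mul]
  refine ⟨hcard, (Fintype.bijective_iff_surjective_and_card _).2 ⟨hsurj, ?_⟩, fun s ↦ ?_,
    fun i j hij ↦ ?_⟩
  · rw [Fintype.card_fin, Fintype.card_perm, Fintype.card_fin, hcard]
  · obtain ⟨i, j, hij, hs⟩ := h.isSwap l[s] (List.getElem_mem _)
    exact ⟨i, j, hij, hs ▸ hstep s⟩
  · simp only [hstep, mul_left_inj, ← h.count_swap i j hij]
    exact Fin.card_filter_univ_eq_vector_get_eq_count (swap i j) ⟨l, hN⟩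

end IsBalancedTour

theorem isBalancedTour_two : IsBalancedTour [swap (0 : Fin 2) 1, swap 0 1] where
  isTour := ⟨by decide, by decide⟩
  isSwap := by unfold Perm.IsSwap; decide
  count_swap := by decide

theorem isBalancedTour_three :
    IsBalancedTour ((List.replicate 2 [swap (0 : Fin 3) 1, swap 0 2, swap 1 2]).flatten) where
  isTour := ⟨by decide, by decide +kernel⟩
  isSwap := by unfold Perm.IsSwap; decide +kernel
  count_swap := by decide +kernel

theorem isBalancedTour_four :
    IsBalancedTour ((List.replicate 2 [swap (0 : Fin 4) 1, swap 0 2, swap 0 1, swap 0 2,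
      swap 1 3, swap 0 3, swap 1 3, swap 0 3, swap 1 2, swap 2 3, swap 1 2, swap 2 3]).flatten)
    where
  isTour := ⟨by decide +kernel, by decide +kernel⟩
  isSwap := by unfold Perm.IsSwap; decide +kernel
  count_swap := by decide +kernel

end BalancedTours

section Blocks

variable {m : ℕ}

/-- The copy of `S_m` in `S_{m+1}` that fixes the value `p`. -/
def fixingHom (p : Fin (m + 1)) : Perm (Fin m) →* Perm (Fin (m + 1)) :=
  Perm.extendDomainHom (finSuccAboveEquiv p)

/-- The words starting with the letter `p`. -/
def block (p : Fin (m + 1)) : Finset (Perm (Fin (m + 1))) := {x | x 0 = p}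

/-- The words starting with one of the letters `0, …, p`. -/
def blocksUpTo (p : Fin (m + 1)) : Finset (Perm (Fin (m + 1))) := {x | x 0 ≤ p}

theorem mem_block {p : Fin (m + 1)} {x : Perm (Fin (m + 1))} : x ∈ block p ↔ x 0 = p := by
  simp [block]

theorem mem_blocksUpTo {p : Fin (m + 1)} {x : Perm (Fin (m + 1))} :
    x ∈ blocksUpTo p ↔ x 0 ≤ p := by
  simp [blocksUpTo]

theorem blocksUpTo_zero : blocksUpTo (0 : Fin (m + 1)) = block 0 := by
  ext x; simp [mem_block, mem_blocksUpTo]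

theorem blocksUpTo_last : blocksUpTo (Fin.last m) = Finset.univ := by
  ext x; simp [mem_blocksUpTo, Fin.le_last]

theorem blocksUpTo_succ (i : Fin m) :
    blocksUpTo i.succ = blocksUpTo i.castSucc ∪ block i.succ := by
  ext x
  simp only [Finset.mem_union, mem_blocksUpTo, mem_block, Fin.le_castSucc_iff]
  exact le_iff_lt_or_eq

theorem disjoint_blocksUpTo_block (i : Fin m) :
    Disjoint (blocksUpTo i.castSucc) (block i.succ) :=
  Finset.disjoint_left.2 fun _ hx hx' ↦
    ((mem_blocksUpTo.1 hx).trans_lt Fin.castSucc_lt_succ).ne (mem_block.1 hx')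

theorem fixingHom_injective (p : Fin (m + 1)) : Function.Injective (fixingHom p) :=
  Perm.extendDomainHom_injective _

theorem fixingHom_apply_self (p : Fin (m + 1)) (g : Perm (Fin m)) : fixingHom p g p = p :=
  Perm.extendDomain_apply_not_subtype _ _ (not_not.2 rfl)

theorem fixingHom_apply_succAbove (p : Fin (m + 1)) (g : Perm (Fin m)) (i : Fin m) :
    fixingHom p g (p.succAbove i) = p.succAbove (g i) :=
  Perm.extendDomain_apply_image g (finSuccAboveEquiv p) i

theorem fixingHom_swap (p : Fin (m + 1)) (i j : Fin m) :
    fixingHom p (swap i j) = swap (p.succAbove i) (p.succAbove j) := by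
  ext1 k
  obtain rfl | ⟨k, rfl⟩ := p.eq_self_or_eq_succAbove k
  · rw [fixingHom_apply_self, swap_apply_of_ne_of_ne] <;> exact (Fin.succAbove_ne _ _).symm
  · rw [fixingHom_apply_succAbove, (Fin.succAbove_right_injective).swap_apply]

theorem exists_fixingHom_eq {p : Fin (m + 1)} {y : Perm (Fin (m + 1))} (hy : y p = p) :
    ∃ g, fixingHom p g = y := by
  have hne (k) : y k ≠ p ↔ k ≠ p := by rw [← y.injective.ne_iff (x := k), hy]
  refine ⟨(finSuccAboveEquiv p).symm.permCongr (y.subtypePerm hne), ?_⟩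
  ext1 k
  obtain rfl | hk := eq_or_ne k p
  · rw [fixingHom_apply_self, hy]
  · refine (Perm.extendDomain_apply_subtype _ (finSuccAboveEquiv p) hk).trans ?_
    simp

theorem IsTour.map_fixingHom {l : List (Perm (Fin m))} (h : IsTour l 1 Finset.univ)
    {p : Fin (m + 1)} {x : Perm (Fin (m + 1))} (hx : x ∈ block p) :
    IsTour (l.map (fixingHom p)) x (block p) := by
  convert h.map (fixingHom p) (fixingHom_injective p) x
  rw [mem_block] at hx
  ext y
  simp only [mem_block, Finset.mem_map, Finset.mem_univ, true_and, Function.Embedding.coeFn_mk]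
  constructor
  · intro hy
    obtain ⟨g, hg⟩ := exists_fixingHom_eq (y := y * x⁻¹) (p := p) (by simp [← hx, hy])
    exact ⟨g, by rw [hg, inv_mul_cancel_right]⟩
  · rintro ⟨g, rfl⟩
    rw [Perm.mul_apply, hx, fixingHom_apply_self]

theorem IsBalancedTour.count_map_fixingHom {l : List (Perm (Fin m))} (h : IsBalancedTour l)
    (p : Fin (m + 1)) {i j : Fin (m + 1)} (hij : i ≠ j) :
    (l.map (fixingHom p)).count (swap i j) =
      if i = p ∨ j = p then 0 else 2 * (m - 2).factorial := by
  split_ifs with hp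
  · rw [List.count_eq_zero, List.mem_map]
    rintro ⟨g, -, hg⟩
    have hfix : swap i j p = p := hg ▸ fixingHom_apply_self p g
    rcases hp with rfl | rfl <;> simp [hij, hij.symm] at hfix
  · push Not at hp
    obtain ⟨i, rfl⟩ := Fin.exists_succAbove_eq hp.1
    obtain ⟨j, rfl⟩ := Fin.exists_succAbove_eq hp.2
    rw [← fixingHom_swap, List.count_map_of_injective _ _ (fixingHom_injective p),
      h.count_swap i j (ne_of_apply_ne _ hij)]

theorem IsBalancedTour.swap_mem_map_fixingHom {l : List (Perm (Fin m))} (h : IsBalancedTour l)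
    {p i j : Fin (m + 1)} (hij : i ≠ j) (hi : i ≠ p) (hj : j ≠ p) :
    swap i j ∈ l.map (fixingHom p) := by
  rw [← List.count_pos_iff, h.count_map_fixingHom p hij, if_neg (by tauto)]
  positivity

end Blocks

section Splicing

variable {m : ℕ}

/-- The transposition of the values `i` and `i + 1`, which leads from block `i` to block `i + 1`. -/
def pathSwap (i : Fin m) : Perm (Fin (m + 1)) := swap i.castSucc i.succ

theorem pathSwap_mul_self (i : Fin m) : pathSwap i * pathSwap i = 1 := swap_mul_self _ _

theorem support_pathSwap (i : Fin m) : (pathSwap i).support = {i.castSucc, i.succ} :=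
  Perm.support_swap (Fin.castSucc_lt_succ (i := i)).ne

theorem pathSwap_injective : Function.Injective (pathSwap (m := m)) := fun i j hij ↦ by
  have hsupp := congrArg Perm.support hij
  simp only [support_pathSwap] at hsupp
  have hi : i.castSucc ∈ ({j.castSucc, j.succ} : Finset _) := by simp [← hsupp]
  have hi' : i.succ ∈ ({j.castSucc, j.succ} : Finset _) := by simp [← hsupp]
  simp only [Finset.mem_insert, Finset.mem_singleton, Fin.ext_iff, Fin.val_castSucc,
    Fin.val_succ] at hi hi'
  omega

theorem pathSwap_commute {i j : Fin m} (hij : (i : ℕ) + 1 < j ∨ (j : ℕ) + 1 < i) :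
    Commute (pathSwap i) (pathSwap j) := by
  refine (Perm.disjoint_iff_disjoint_support.2 ?_).commute
  simp only [support_pathSwap, Finset.disjoint_insert_left, Finset.disjoint_singleton_left,
    Finset.mem_insert, Finset.mem_singleton, Fin.ext_iff, Fin.val_castSucc, Fin.val_succ]
  omega

theorem IsBalancedTour.pathSwap_mem {l : List (Perm (Fin m))} (h : IsBalancedTour l)
    {p : Fin (m + 1)} {i : Fin m} (hi : (p : ℕ) < i ∨ (i : ℕ) + 1 < p) :
    pathSwap i ∈ l.map (fixingHom p) := by
  refine h.swap_mem_map_fixingHom (Fin.castSucc_lt_succ (i := i)).ne ?_ ?_ <;>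
  · simp only [ne_eq, Fin.ext_iff, Fin.val_castSucc, Fin.val_succ]
    omega

/-- The edge, two steps further along the path taken cyclically, whose transposition the tour of
block `p` gives up in order to be spliced with block `p + 1`. -/
def spliceEdge [NeZero m] (p : Fin (m + 1)) : Fin m := Fin.ofNat m (p + 2)

theorem spliceEdge_castSucc [NeZero m] (i : Fin m) :
    spliceEdge i.castSucc = i + Fin.ofNat m 2 := by
  ext; simp [spliceEdge, Fin.val_add]

theorem spliceEdge_val [NeZero m] (hm : 3 ≤ m) (p : Fin (m + 1)) :
    (spliceEdge p : ℕ) = p + 2 ∨ (spliceEdge p : ℕ) + m = p + 2 := by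
  obtain hp | hp := lt_or_ge (p + 2 : ℕ) m
  · exact .inl (Nat.mod_eq_of_lt hp)
  · have hmod : (spliceEdge p : ℕ) = p + 2 - m := by
      rw [spliceEdge, Fin.val_ofNat, Nat.mod_eq_sub_mod hp, Nat.mod_eq_of_lt (by omega)]
    omega

theorem IsTour.splice_block {l : List (Perm (Fin m))} {r : List (Perm (Fin (m + 1)))}
    (hl : IsTour l 1 Finset.univ) {i : Fin m} {f g : Perm (Fin (m + 1))}
    (hr : ∀ x ∈ block i.castSucc, IsTour (f :: r) x (blocksUpTo i.castSucc))
    (hf : f ∈ l.map (fixingHom i.succ)) (hg : g ∈ l.map (fixingHom i.succ)) (hfg : f ≠ g)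
    (hcomm : Commute (pathSwap i) f) (hff : f * f = 1) :
    ∃ r' : List (Perm (Fin (m + 1))),
      (∀ x ∈ block i.succ, IsTour (g :: r') x (blocksUpTo i.succ)) ∧
      (g ::ₘ ↑r') + 2 • {f} = (f ::ₘ ↑r) + (2 • {pathSwap i} + ↑(l.map (fixingHom i.succ))) := by
  obtain ⟨f, hfl, rfl⟩ := List.mem_map.1 hf
  obtain ⟨g, hgl, rfl⟩ := List.mem_map.1 hg
  obtain ⟨l', hperm, htour⟩ := hl.exists_cons_perm hgl
  have hfl' : f ∈ l' := (List.mem_cons.1 (hperm.mem_iff.2 hfl)).resolve_left (ne_of_apply_ne _ hfg)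
  obtain ⟨a, b, rfl⟩ := List.append_of_mem hfl'
  refine ⟨a.map (fixingHom i.succ) ++ pathSwap i :: (r ++ pathSwap i :: b.map (fixingHom i.succ)),
    fun x hx ↦ ?_, ?_⟩
  · have hblock : IsTour ((fixingHom i.succ g :: a.map (fixingHom i.succ)) ++
        fixingHom i.succ f :: b.map (fixingHom i.succ)) x (block i.succ) := by
      simpa using htour.map_fixingHom hx
    have hb : (b.map (fixingHom i.succ)).prod * x ∈ block i.succ := by
      rw [mem_block, List.prod_hom, Perm.mul_apply, mem_block.1 hx, fixingHom_apply_self]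
    rw [blocksUpTo_succ, ← List.cons_append]
    refine (hr _ ?_).splice hblock (disjoint_blocksUpTo_block i) hcomm (pathSwap_mul_self i) hff
    rw [mem_block] at hb ⊢
    rw [Perm.mul_apply, hb, pathSwap, swap_apply_right]
  · rw [← Multiset.coe_eq_coe.2 (hperm.map (fixingHom i.succ))]
    simp only [List.map_cons, List.map_append, ← Multiset.cons_coe, ← Multiset.coe_add,
      ← Multiset.singleton_add]
    abel

theorem filter_castSucc_lt_succ (i : Fin m) :
    ({j | j.castSucc < i.succ} : Finset (Fin m)) =
      insert i ({j | j.castSucc < i.castSucc} : Finset (Fin m)) := by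
  ext j
  simp [le_iff_eq_or_lt]

-- The transposition that the next splice removes is put first in the list, so that the tour applies
-- it inside block `p`. The removed transpositions are added on the left to avoid a subtraction.
theorem exists_tour_blocksUpTo [NeZero m] (hm : 4 ≤ m) {l : List (Perm (Fin m))}
    (hl : IsBalancedTour l) (p : Fin (m + 1)) :
    ∃ r : List (Perm (Fin (m + 1))),
      (∀ x ∈ block p, IsTour (pathSwap (spliceEdge p) :: r) x (blocksUpTo p)) ∧
      ((pathSwap (spliceEdge p) ::ₘ ↑r) +
          ∑ i : Fin m with i.castSucc < p, 2 • {pathSwap (spliceEdge i.castSucc)} :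
            Multiset (Perm (Fin (m + 1)))) =
        ↑(l.map (fixingHom 0)) +
          ∑ i : Fin m with i.castSucc < p,
            (2 • ({pathSwap i} : Multiset _) + ↑(l.map (fixingHom i.succ))) := by
  induction p using Fin.induction with
  | zero =>
    have hval := spliceEdge_val (by omega) (0 : Fin (m + 1))
    rw [Fin.val_zero] at hval
    obtain ⟨f, hfl, hf⟩ := List.mem_map.1 <|
      hl.pathSwap_mem (p := 0) (i := spliceEdge 0) (.inl (by rw [Fin.val_zero]; omega))
    obtain ⟨l', hperm, htour⟩ := hl.isTour.exists_cons_perm hfl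
    refine ⟨l'.map (fixingHom 0), fun x hx ↦ ?_, ?_⟩
    · rw [blocksUpTo_zero, ← hf, ← List.map_cons]
      exact htour.map_fixingHom hx
    · simp [← hf, ← Multiset.coe_eq_coe.2 (hperm.map (fixingHom 0))]
  | succ i ih =>
    obtain ⟨r, htour, hsteps⟩ := ih
    have hval := spliceEdge_val (by omega) i.castSucc
    have hval' := spliceEdge_val (by omega) i.succ
    simp only [Fin.val_castSucc, Fin.val_succ] at hval hval'
    obtain ⟨r', htour', hsteps'⟩ := hl.isTour.splice_block htour
      (hl.pathSwap_mem (by rw [Fin.val_succ]; omega)) (hl.pathSwap_mem (i := spliceEdge i.succ)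
        (by rw [Fin.val_succ]; omega))
      (pathSwap_injective.ne (by omega)) (pathSwap_commute (by omega)) (pathSwap_mul_self _)
    refine ⟨r', htour', ?_⟩
    rw [filter_castSucc_lt_succ, Finset.sum_insert (by simp), Finset.sum_insert (by simp),
      ← add_assoc, hsteps', add_right_comm, hsteps]
    abel

theorem IsBalancedTour.exists_tour_steps (hm : 4 ≤ m) {l : List (Perm (Fin m))}
    (hl : IsBalancedTour l) :
    ∃ l' : List (Perm (Fin (m + 1))), IsTour l' 1 Finset.univ ∧
      (l' : Multiset (Perm (Fin (m + 1)))) = ∑ p, ↑(l.map (fixingHom p)) := by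
  have : NeZero m := ⟨by omega⟩
  obtain ⟨r, htour, hsteps⟩ := exists_tour_blocksUpTo hm hl (Fin.last m)
  have hall : IsTour _ (swap 0 (Fin.last m)) Finset.univ :=
    blocksUpTo_last ▸ htour _ (by rw [mem_block, swap_apply_left])
  refine ⟨_, hall.change_start 1, ?_⟩
  have hshift : ∑ i : Fin m, ({pathSwap (spliceEdge i.castSucc)} : Multiset _) =
      ∑ i : Fin m, {pathSwap i} := by
    simp only [spliceEdge_castSucc]
    exact Equiv.sum_comp (Equiv.addRight (Fin.ofNat m 2)) fun i ↦ ({pathSwap i} : Multiset _)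
  simp only [Fin.castSucc_lt_last, Finset.filter_true, Finset.sum_add_distrib, ← Finset.smul_sum,
    hshift] at hsteps
  rw [Fin.sum_univ_succ, ← Multiset.cons_coe]
  refine add_right_cancel (hsteps.trans ?_)
  abel

theorem IsBalancedTour.exists_succ (hm : 4 ≤ m) {l : List (Perm (Fin m))}
    (hl : IsBalancedTour l) : ∃ l' : List (Perm (Fin (m + 1))), IsBalancedTour l' := by
  obtain ⟨l', htour, hsteps⟩ := hl.exists_tour_steps hm
  refine ⟨l', htour, fun s hs ↦ ?_, fun i j hij ↦ ?_⟩
  · rw [← Multiset.mem_coe, hsteps, Multiset.mem_sum] at hs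
    obtain ⟨p, -, hp⟩ := hs
    obtain ⟨g, hg, rfl⟩ := List.mem_map.1 hp
    obtain ⟨i, j, hij, rfl⟩ := hl.isSwap g hg
    exact ⟨_, _, Fin.succAbove_right_injective.ne hij, fixingHom_swap p i j⟩
  · have hcard : ({p | ¬(i = p ∨ j = p)} : Finset (Fin (m + 1))).card = m - 1 := by
      have hcompl : ({p | ¬(i = p ∨ j = p)} : Finset (Fin (m + 1))) = {i, j}ᶜ := by
        ext p; simp [eq_comm]
      rw [hcompl, Finset.card_compl, Finset.card_pair hij, Fintype.card_fin]
      omega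
    rw [← Multiset.coe_count, hsteps, Multiset.count_sum']
    simp only [Multiset.coe_count, hl.count_map_fixingHom _ hij]
    rw [Finset.sum_ite, Finset.sum_const_zero, zero_add, Finset.sum_const, hcard, smul_eq_mul]
    obtain ⟨k, rfl⟩ := Nat.exists_eq_add_of_le' (show 2 ≤ m by omega)
    simp only [Nat.add_sub_cancel, Nat.factorial_succ, Nat.reduceSubDiff]
    ring

end Splicing

theorem exists_isBalancedTour {n : ℕ} (hn : 2 ≤ n) :
    ∃ l : List (Perm (Fin n)), IsBalancedTour l := by
  obtain rfl | rfl | hn4 : n = 2 ∨ n = 3 ∨ 4 ≤ n := by omega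
  · exact ⟨_, isBalancedTour_two⟩
  · exact ⟨_, isBalancedTour_three⟩
  · induction n, hn4 using Nat.le_induction with
    | base => exact ⟨_, isBalancedTour_four⟩
    | succ m hm ih => exact (ih (by omega)).elim fun l hl ↦ hl.exists_succ hm

theorem balanced_gray_code_odd_general {n : ℕ} {p q : Fin n} (hpq : p ≠ q) :
    ∃ (N : ℕ) (π : Fin (N + 1) → Perm (Fin n)),
      IsBalancedCyclicGrayCode n N π ∧ π 0 = 1 ∧ π (Fin.last N) = swap p q ∧
        π 0 = swap p q * π (Fin.last N) := by
  obtain ⟨l, hl⟩ := exists_isBalancedTour (n := n) (by omega)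
  obtain ⟨a, b, rfl⟩ := List.append_of_mem (hl.swap_mem hpq)
  have hrot : IsBalancedTour ((b ++ a) ++ [swap p q]) := by
    rw [List.append_assoc]; exact IsBalancedTour.rotate (by simpa using hl)
  have hfirst : (b ++ (a ++ [swap p q])).prod = 1 := by simpa using hrot.isTour.prod_eq_one
  exact ⟨_, _, hrot.isBalancedCyclicGrayCode List.length_append, by simpa using hfirst, by simp,
    by simpa using hfirst⟩

/-- For every odd `n ≥ 3` there exists a balanced cyclic Gray code for `S_n`
under all transpositions from the identity word `12⋯(n−1)n` to the word `12⋯n(n−1)`,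
whose closing transposition is `(n−1, n)`. -/
theorem balanced_gray_code_odd (n : ℕ) (hn : 3 ≤ n) (hodd : Odd n) :
    ∃ (N : ℕ) (π : Fin (N + 1) → Equiv.Perm (Fin n)),
      IsBalancedCyclicGrayCode n N π ∧
      π 0 = 1 ∧
      π (Fin.last N) = Equiv.swap ⟨n - 2, by omega⟩ ⟨n - 1, by omega⟩ ∧
      π 0 = Equiv.swap ⟨n - 2, by omega⟩ ⟨n - 1, by omega⟩ * π (Fin.last N) :=
  balanced_gray_code_odd_general (by simp only [ne_eq, Fin.mk.injEq]; omega)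
end

section
/- Let n ≥ 3 be odd. Suppose there exists a balanced cyclic Gray code for S_n under all transpositions from 12⋯(n−1)n to 12⋯n(n−1) whose closing transposition is (n−1, n). Then there exist two almost balanced Gray codes for S_{n+1}: a code L from the word 12⋯(n+1) to the word 23⋯(n+1)1, and a code R from the word 12⋯(n+1) to the word (n+1)12⋯n, such that every transposition on [n+1] is applied the same number of times in R as in L. -/
/-- An almost balanced Gray code for `S_m` from `a` to `b`: a (non-cyclic) listing
`π : Fin (N+1) → Perm (Fin m)` of all `m!` permutations, each exactly once, starting at
`a`, ending at `b`, consecutive ones differing by applying a transposition, in which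
every wide transposition (`|i−j| ≠ 1`) on `[m]` is applied exactly `2·(m−2)!` times. -/
def IsAlmostBalancedGrayCodeFromTo (m N : ℕ) (π : Fin (N + 1) → Equiv.Perm (Fin m))
    (a b : Equiv.Perm (Fin m)) : Prop :=
  N + 1 = Nat.factorial m ∧
  Function.Bijective π ∧
  π 0 = a ∧
  π (Fin.last N) = b ∧
  (∀ s : Fin (N + 1), (s : ℕ) < N →
    ∃ i j : Fin m, i ≠ j ∧ π (s + 1) = Equiv.swap i j * π s) ∧
  (∀ i j : Fin m, i ≠ j →
    ¬((i : ℕ) + 1 = (j : ℕ) ∨ (j : ℕ) + 1 = (i : ℕ)) →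
    (Finset.univ.filter (fun s : Fin (N + 1) =>
      (s : ℕ) < N ∧ π (s + 1) = Equiv.swap i j * π s)).card = 2 * Nat.factorial (m - 2))

/-!
Number the words of `S_{n+1}` by their first letter `q = 0, …, n`. Within block `q` we follow the
given code of `S_n` on the remaining values, labelled so that the two values exchanged by the
closing transposition become consecutive: `n - 1, n` for `q ≤ n - 2`, and `0, 1` for the two largest
`q`. From block `q` the code passes to block `q + 1` by the adjacent transposition `(q, q + 1)`.
Since `n` is odd, the blocks pair up as `2 * k, 2 * k + 1`; both members of a pair shift the end of
their block by the same adjacent transposition, and the two shifts cancel, so the whole path leads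
from the identity to the inverse rotation. This is `R`, and `L` is `R` run backwards and multiplied
on the right by the rotation.

A wide transposition `(i, j)` is applied only inside the `n - 1` blocks `q ≠ i, j`, and in each of
them exactly as often as in the balanced cycle, that is `2 (n - 2)!` times, because the omitted
closing transposition is adjacent.
-/

section Sequences

variable {m N : ℕ}

section Mul

variable {G : Type*} [Mul G] [DecidableEq G]

/-- How often left multiplication by `g` is the step taken among the first `N` steps of the
sequence `f`. -/
def transitionCount (f : ℕ → G) (N : ℕ) (g : G) : ℕ :=
  Nat.count (fun s => f (s + 1) = g * f s) N

lemma transitionCount_eq_sum (f : ℕ → G) (N : ℕ) (g : G) :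
    transitionCount f N g = ∑ s ∈ Finset.range N, if f (s + 1) = g * f s then 1 else 0 := by
  rw [transitionCount, Nat.count_eq_card_filter_range, Finset.card_filter]

lemma transitionCount_add (f : ℕ → G) (M N : ℕ) (g : G) :
    transitionCount f (M + N) g =
      transitionCount f M g + transitionCount (fun s => f (M + s)) N g :=
  Nat.count_add _ M N

lemma transitionCount_congr {f f' : ℕ → G} (h : ∀ s ≤ N, f s = f' s) (g : G) :
    transitionCount f N g = transitionCount f' N g := by
  simp only [transitionCount_eq_sum]
  refine Finset.sum_congr rfl fun s hs => ?_
  rw [Finset.mem_range] at hs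
  rw [h s hs.le, h (s + 1) hs]

lemma card_filter_fin_eq_transitionCount (f : ℕ → G) (N : ℕ) (g : G) :
    (Finset.univ.filter fun s : Fin (N + 1) =>
      (s : ℕ) < N ∧ f (s + 1 : Fin (N + 1)) = g * f s).card = transitionCount f N g := by
  rw [Finset.card_filter, Fin.sum_univ_castSucc, transitionCount_eq_sum, ← Fin.sum_univ_eq_sum_range
    fun s => if f (s + 1) = g * f s then 1 else 0]
  simp

end Mul

section Group

variable {G H : Type*} [Group G] [Group H] [DecidableEq H]

lemma transitionCount_map_of_notMem_range (φ : G →* H) {h : H} (hh : h ∉ φ.range)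
    (f : ℕ → G) (N : ℕ) : transitionCount (fun s => φ (f s)) N h = 0 := by
  rw [transitionCount_eq_sum]
  refine Finset.sum_eq_zero fun s _ => if_neg fun hs => hh ⟨f (s + 1) * (f s)⁻¹, ?_⟩
  rw [map_mul, map_inv, hs, mul_inv_cancel_right]

variable [DecidableEq G]

lemma transitionCount_mul_right (f : ℕ → G) (w : G) (N : ℕ) (g : G) :
    transitionCount (fun s => f s * w) N g = transitionCount f N g := by
  simp only [transitionCount, ← mul_assoc, mul_left_inj]

lemma transitionCount_reverse (f : ℕ → G) (N : ℕ) (g : G) :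
    transitionCount (fun s => f (N - s)) N g = transitionCount f N g⁻¹ := by
  simp only [transitionCount_eq_sum]
  rw [← Finset.sum_range_reflect]
  refine Finset.sum_congr rfl fun s hs => ?_
  rw [Finset.mem_range] at hs
  rw [show N - (N - 1 - s + 1) = s by omega, show N - (N - 1 - s) = s + 1 by omega]
  exact if_congr (by rw [eq_inv_mul_iff_mul_eq, eq_comm]) rfl rfl

lemma transitionCount_map {φ : G →* H} (hφ : Function.Injective φ) (f : ℕ → G) (N : ℕ) (g : G) :
    transitionCount (fun s => φ (f s)) N (φ g) = transitionCount f N g := by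
  simp only [transitionCount, ← map_mul, hφ.eq_iff]

end Group

section Blocks

variable {α : Type*}

/-- The concatenation of `m + 1` blocks of length `N + 1`: the terms `b q 0, …, b q N` of block `q`
occupy the positions `q * (N + 1), …, q * (N + 1) + N`, so the last position is `m * (N + 1) + N`
(later values are junk). -/
def concatBlocks (N : ℕ) (b : Fin (m + 1) → ℕ → α) (s : ℕ) : α :=
  b (Fin.ofNat (m + 1) (s / (N + 1))) (s % (N + 1))

lemma concatBlocks_apply (b : Fin (m + 1) → ℕ → α) (q : Fin (m + 1)) {r : ℕ} (hr : r ≤ N) :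
    concatBlocks N b (q * (N + 1) + r) = b q r := by
  have hr' : r < N + 1 := Nat.lt_succ_of_le hr
  rw [concatBlocks, Nat.mul_add_mod_of_lt hr', mul_comm, Nat.mul_add_div N.succ_pos,
    Nat.div_eq_of_lt hr', add_zero, Fin.ofNat_val_eq_self]

lemma concatBlocks_succ_start (b : Fin (m + 1) → ℕ → α) (q : Fin m) :
    concatBlocks N b (q * (N + 1) + N + 1) = b q.succ 0 := by
  rw [← concatBlocks_apply b q.succ N.zero_le, Fin.val_succ]
  congr 1
  ring

lemma exists_block_position {s : ℕ} (hs : s ≤ m * (N + 1) + N) :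
    ∃ q : Fin (m + 1), ∃ r ≤ N, s = q * (N + 1) + r := by
  have hq : s / (N + 1) < m + 1 := by
    rw [Nat.div_lt_iff_lt_mul N.succ_pos]
    linarith
  exact ⟨⟨s / (N + 1), hq⟩, s % (N + 1), Nat.le_of_lt_succ (Nat.mod_lt _ N.succ_pos),
    (Nat.div_add_mod' s (N + 1)).symm⟩

lemma concatBlocks_step {P : α → α → Prop} {b : Fin (m + 1) → ℕ → α}
    (within : ∀ q, ∀ r < N, P (b q r) (b q (r + 1)))
    (across : ∀ q : Fin m, P (b q.castSucc N) (b q.succ 0)) {s : ℕ} (hs : s < m * (N + 1) + N) :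
    P (concatBlocks N b s) (concatBlocks N b (s + 1)) := by
  obtain ⟨q, r, hr, rfl⟩ := exists_block_position hs.le
  rcases hr.lt_or_eq with hr | rfl
  · rw [add_assoc, concatBlocks_apply b q hr.le, concatBlocks_apply b q hr]
    exact within q r hr
  · cases q using Fin.lastCases with
    | last => simp at hs
    | cast q =>
      rw [concatBlocks_apply b q.castSucc le_rfl]
      exact (concatBlocks_succ_start b q).symm ▸ across q

lemma injOn_concatBlocks {b : Fin (m + 1) → ℕ → α} (within : ∀ q, Set.InjOn (b q) (Set.Iic N))
    (across : ∀ q q', ∀ r ≤ N, ∀ r' ≤ N, b q r = b q' r' → q = q') :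
    Set.InjOn (concatBlocks N b) (Set.Iic (m * (N + 1) + N)) := by
  intro s hs s' hs' h
  obtain ⟨q, r, hr, rfl⟩ := exists_block_position hs
  obtain ⟨q', r', hr', rfl⟩ := exists_block_position hs'
  rw [concatBlocks_apply b q hr, concatBlocks_apply b q' hr'] at h
  obtain rfl := across q q' r hr r' hr' h
  rw [within q hr hr' h]

lemma transitionCount_concatBlocks {G : Type*} [Mul G] [DecidableEq G]
    {b : Fin (m + 1) → ℕ → G} {g : G}
    (across : ∀ q : Fin m, b q.succ 0 ≠ g * b q.castSucc N) :
    transitionCount (concatBlocks N b) (m * (N + 1) + N) g = ∑ q, transitionCount (b q) N g := by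
  induction m with
  | zero =>
    rw [Fin.sum_univ_one, zero_mul, zero_add]
    refine transitionCount_congr (fun s hs => ?_) g
    simpa using concatBlocks_apply b 0 hs
  | succ m ih =>
    set M := m * (N + 1) + N with hM
    have initial : transitionCount (concatBlocks N b) M g =
        ∑ q : Fin (m + 1), transitionCount (b q.castSucc) N g := by
      rw [← ih fun q => across q.castSucc]
      refine transitionCount_congr (fun s hs => ?_) g
      obtain ⟨q, r, hr, rfl⟩ := exists_block_position hs
      rw [concatBlocks_apply _ q hr]
      exact concatBlocks_apply b q.castSucc hr
    have crossing : transitionCount (fun s => concatBlocks N b (M + s)) 1 g = 0 := by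
      have hstart := concatBlocks_succ_start (N := N) b (Fin.last m)
      have hend := concatBlocks_apply b (Fin.last m).castSucc (le_refl N)
      simp only [Fin.val_last, Fin.val_castSucc, ← hM] at hstart hend
      simpa [transitionCount_eq_sum, hstart, hend] using across (Fin.last m)
    have final : transitionCount (fun s => concatBlocks N b (M + 1 + s)) N g =
        transitionCount (b (Fin.last (m + 1))) N g := by
      refine transitionCount_congr (fun s hs => ?_) g
      rw [← concatBlocks_apply b _ hs, Fin.val_last]
      congr 1
      ring
    rw [show (m + 1) * (N + 1) + N = M + 1 + N by ring, transitionCount_add, transitionCount_add,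
      initial, crossing, final, add_zero, Fin.sum_univ_castSucc (n := m + 1)]

end Blocks

end Sequences

section Permutations

open Equiv Equiv.Perm

section GrayPath

variable {α β : Type*} [DecidableEq α] [DecidableEq β] {f : ℕ → Perm α} {N : ℕ}

/-- The terms `f 0, …, f N` are pairwise distinct permutations, each obtained from the preceding
one by applying a transposition: a Gray code, but for exhaustiveness. Indexing by `ℕ` keeps
positions free of the wrap-around of addition in `Fin (N + 1)`. -/
structure IsGrayPath (f : ℕ → Perm α) (N : ℕ) : Prop where
  injOn : Set.InjOn f (Set.Iic N)
  isSwap_step : ∀ s < N, (f (s + 1) * (f s)⁻¹).IsSwap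

lemma isSwap_inv {σ : Perm α} (hσ : σ.IsSwap) : σ⁻¹.IsSwap := by
  obtain ⟨i, j, hij, rfl⟩ := hσ
  exact ⟨i, j, hij, swap_inv i j⟩

lemma viaEmbeddingHom_swap (ι : α ↪ β) (i j : α) :
    viaEmbeddingHom ι (swap i j) = swap (ι i) (ι j) := by
  ext y
  by_cases hy : y ∈ Set.range ι
  · obtain ⟨x, rfl⟩ := hy
    rw [viaEmbeddingHom_apply, viaEmbedding_apply, ι.injective.swap_apply]
  · have hyi : y ≠ ι i := fun h => hy ⟨i, h.symm⟩
    have hyj : y ≠ ι j := fun h => hy ⟨j, h.symm⟩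
    rw [viaEmbeddingHom_apply, viaEmbedding_apply_of_notMem _ _ _ hy,
      swap_apply_of_ne_of_ne hyi hyj]

lemma transitionCount_swap_reverse_mul_right [Fintype α] (f : ℕ → Perm α) (w : Perm α) (N : ℕ)
    (i j : α) :
    transitionCount (fun s => f (N - s) * w) N (swap i j) = transitionCount f N (swap i j) := by
  rw [transitionCount_mul_right (fun s => f (N - s)), transitionCount_reverse, swap_inv]

namespace IsGrayPath

lemma mul_right (hf : IsGrayPath f N) (w : Perm α) : IsGrayPath (fun s => f s * w) N where
  injOn := fun _ hs _ hs' h => hf.injOn hs hs' (mul_right_cancel h)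
  isSwap_step s hs := by simpa [mul_assoc] using hf.isSwap_step s hs

lemma reverse (hf : IsGrayPath f N) : IsGrayPath (fun s => f (N - s)) N where
  injOn s hs s' hs' h := by
    have := hf.injOn (Nat.sub_le N s) (Nat.sub_le N s') h
    rw [Set.mem_Iic] at hs hs'
    omega
  isSwap_step s hs := by
    have hstep := isSwap_inv (hf.isSwap_step (N - (s + 1)) (by omega))
    rwa [show N - (s + 1) + 1 = N - s by omega, mul_inv_rev, inv_inv] at hstep

lemma viaEmbedding (hf : IsGrayPath f N) (ι : α ↪ β) :
    IsGrayPath (fun s => viaEmbeddingHom ι (f s)) N where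
  injOn := (viaEmbeddingHom_injective ι).comp_injOn hf.injOn
  isSwap_step s hs := by
    obtain ⟨i, j, hij, hstep⟩ := hf.isSwap_step s hs
    refine ⟨ι i, ι j, ι.injective.ne hij, ?_⟩
    rw [← map_inv, ← map_mul, hstep, viaEmbeddingHom_swap]

lemma isAlmostBalancedGrayCodeFromTo {m : ℕ} {f : ℕ → Perm (Fin m)} (hf : IsGrayPath f N)
    {σ τ : Perm (Fin m)} (hN : N + 1 = m.factorial) (hfirst : f 0 = σ) (hlast : f N = τ)
    (hcount : ∀ i j : Fin m, i ≠ j → ¬((i : ℕ) + 1 = j ∨ (j : ℕ) + 1 = i) →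
      transitionCount f N (swap i j) = 2 * (m - 2).factorial) :
    IsAlmostBalancedGrayCodeFromTo m N (fun s => f s) σ τ := by
  refine ⟨hN, ?_, hfirst, hlast, fun s hs => ?_, fun i j hij hwide => ?_⟩
  · refine (Fintype.bijective_iff_injective_and_card _).2 ⟨fun s s' h => ?_, ?_⟩
    · exact Fin.ext (hf.injOn s.is_le s'.is_le h)
    · rw [Fintype.card_fin, Fintype.card_perm, Fintype.card_fin, hN]
  · obtain ⟨i, j, hij, hstep⟩ := hf.isSwap_step s hs
    refine ⟨i, j, hij, ?_⟩
    have hval : ((s + 1 : Fin (N + 1)) : ℕ) = s + 1 := Fin.val_add_one_of_lt (Fin.lt_def.2 hs)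
    simp only [hval]
    exact mul_inv_eq_iff_eq_mul.1 hstep
  · rw [card_filter_fin_eq_transitionCount f N, hcount i j hij hwide]

end IsGrayPath

namespace IsBalancedCyclicGrayCode

variable {n : ℕ} {π : Fin (N + 1) → Perm (Fin n)}

lemma isGrayPath (hπ : IsBalancedCyclicGrayCode n N π) :
    IsGrayPath (fun s => π (Fin.ofNat (N + 1) s)) N := by
  obtain ⟨-, hbij, hstep, -⟩ := hπ
  refine ⟨fun s hs s' hs' h => ?_, fun s _ => ?_⟩
  · simpa [Nat.mod_eq_of_lt (Nat.lt_succ_of_le hs), Nat.mod_eq_of_lt (Nat.lt_succ_of_le hs')] using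
      congrArg Fin.val (hbij.injective h)
  · obtain ⟨i, j, hij, h⟩ := hstep (Fin.ofNat (N + 1) s)
    refine ⟨i, j, hij, mul_inv_eq_of_eq_mul ?_⟩
    rw [← h]
    congr 1
    ext
    simp [Fin.val_add]

lemma transitionCount_eq (hπ : IsBalancedCyclicGrayCode n N π) {i j : Fin n} (hij : i ≠ j)
    (hclosing : π 0 ≠ swap i j * π (Fin.last N)) :
    transitionCount (fun s => π (Fin.ofNat (N + 1) s)) N (swap i j) = 2 * (n - 2).factorial := by
  rw [← hπ.2.2.2 i j hij, ← card_filter_fin_eq_transitionCount]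
  congr 1
  refine Finset.filter_congr fun s _ => ?_
  simp only [Fin.ofNat_val_eq_self, and_iff_right_iff_imp]
  intro hs
  refine Fin.lt_last_iff_ne_last.2 ?_
  rintro rfl
  rw [Fin.last_add_one] at hs
  exact hclosing hs

end IsBalancedCyclicGrayCode

end GrayPath

section AdjacentSwap

variable {n : ℕ}

/-- A transposition of two consecutive values; the transpositions that are not adjacent are the
wide ones. -/
def IsAdjacentSwap (σ : Perm (Fin n)) : Prop :=
  ∃ i j : Fin n, (i : ℕ) + 1 = j ∧ σ = swap i j

lemma adjacent_of_isAdjacentSwap_swap {i j : Fin n} (h : IsAdjacentSwap (swap i j)) :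
    (i : ℕ) + 1 = j ∨ (j : ℕ) + 1 = i := by
  obtain ⟨a, b, hab, h⟩ := h
  have hne : a ≠ b := by rintro rfl; omega
  have ha : swap i j a = b := by rw [h, swap_apply_left]
  rw [swap_apply_def] at ha
  split_ifs at ha with hai haj
  · exact .inl (hai ▸ ha ▸ hab)
  · exact .inr (haj ▸ ha ▸ hab)
  · exact absurd ha hne

end AdjacentSwap

section Blocks

variable {n : ℕ}

/-- An embedding of `Fin n` onto the complement of `q`. It is order preserving for `q ≤ n - 2` and
order reversing for the two largest `q`; in both cases it keeps the two largest values of `Fin n`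
adjacent (for `3 ≤ n`), and when `n` is odd this choice depends only on the pair
`{2 * k, 2 * k + 1}` containing `q`. -/
def skipEmbedding (q : Fin (n + 1)) : Fin n ↪ Fin (n + 1) :=
  if (q : ℕ) + 2 ≤ n then q.succAboveEmb else Fin.revPerm.toEmbedding.trans q.succAboveEmb

lemma range_skipEmbedding (q : Fin (n + 1)) : Set.range (skipEmbedding q) = {q}ᶜ := by
  rw [skipEmbedding]
  split_ifs
  · exact Fin.range_succAbove q
  · exact (Fin.revPerm.surjective.range_comp _).trans (Fin.range_succAbove q)

lemma skipEmbedding_penultimate (hn : 3 ≤ n) {a : Fin n} (ha : (a : ℕ) + 2 = n)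
    (q : Fin (n + 1)) : (skipEmbedding q a : ℕ) = if (q : ℕ) + 2 ≤ n then n - 1 else 1 := by
  rw [skipEmbedding]
  split_ifs with hq
  · have hqa : q ≤ a.castSucc := Fin.le_def.2 (by rw [Fin.val_castSucc]; omega)
    rw [Fin.coe_succAboveEmb, Fin.succAbove_of_le_castSucc _ _ hqa, Fin.val_succ]
    omega
  · have haq : a.rev.castSucc < q :=
      Fin.lt_def.2 (by rw [Fin.val_castSucc, Fin.val_rev]; omega)
    change (q.succAbove a.rev : ℕ) = 1
    rw [Fin.succAbove_of_castSucc_lt _ _ haq, Fin.val_castSucc, Fin.val_rev]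
    omega

lemma skipEmbedding_last (hn : 3 ≤ n) {b : Fin n} (hb : (b : ℕ) + 1 = n)
    (q : Fin (n + 1)) : (skipEmbedding q b : ℕ) = if (q : ℕ) + 2 ≤ n then n else 0 := by
  rw [skipEmbedding]
  split_ifs with hq
  · have hqb : q ≤ b.castSucc := Fin.le_def.2 (by rw [Fin.val_castSucc]; omega)
    rw [Fin.coe_succAboveEmb, Fin.succAbove_of_le_castSucc _ _ hqb, Fin.val_succ, hb]
  · have hbq : b.rev.castSucc < q :=
      Fin.lt_def.2 (by rw [Fin.val_castSucc, Fin.val_rev]; omega)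
    change (q.succAbove b.rev : ℕ) = 0
    rw [Fin.succAbove_of_castSucc_lt _ _ hbq, Fin.val_castSucc, Fin.val_rev, hb, Nat.sub_self]

/-- The action of a permutation of `Fin n` on the values other than `q`, labelled through
`skipEmbedding q`. -/
noncomputable def extendSkipping (q : Fin (n + 1)) : Perm (Fin n) →* Perm (Fin (n + 1)) :=
  viaEmbeddingHom (skipEmbedding q)

lemma extendSkipping_apply_self (q : Fin (n + 1)) (σ : Perm (Fin n)) :
    extendSkipping q σ q = q :=
  viaEmbedding_apply_of_notMem _ _ _ (by simp [range_skipEmbedding])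

lemma extendSkipping_swap (q : Fin (n + 1)) (i j : Fin n) :
    extendSkipping q (swap i j) = swap (skipEmbedding q i) (skipEmbedding q j) :=
  viaEmbeddingHom_swap _ i j

lemma swap_notMem_range_extendSkipping {i j : Fin (n + 1)} (hij : i ≠ j) {q : Fin (n + 1)}
    (hq : q = i ∨ q = j) : swap i j ∉ (extendSkipping q).range := by
  rintro ⟨σ, hσ⟩
  have hfix : swap i j q = q := hσ ▸ extendSkipping_apply_self q σ
  rcases hq with rfl | rfl
  · exact hij (by rwa [swap_apply_left, eq_comm] at hfix)
  · exact hij (by rwa [swap_apply_right] at hfix)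

lemma isAdjacentSwap_extendSkipping_swap (hn : 3 ≤ n) {a b : Fin n} (ha : (a : ℕ) + 2 = n)
    (hb : (b : ℕ) + 1 = n) (q : Fin (n + 1)) :
    IsAdjacentSwap (extendSkipping q (swap a b)) := by
  have hea := skipEmbedding_penultimate hn ha q
  have heb := skipEmbedding_last hn hb q
  rw [extendSkipping_swap]
  by_cases hq : (q : ℕ) + 2 ≤ n
  · rw [if_pos hq] at hea heb
    exact ⟨_, _, by omega, rfl⟩
  · rw [if_neg hq] at hea heb
    exact ⟨_, _, by omega, swap_comm _ _⟩

lemma extendSkipping_swap_succ (hn : 3 ≤ n) (hodd : Odd n) {a b : Fin n} (ha : (a : ℕ) + 2 = n)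
    (hb : (b : ℕ) + 1 = n) {q : Fin n} (hq : Even (q : ℕ)) :
    extendSkipping q.succ (swap a b) = extendSkipping q.castSucc (swap a b) := by
  have same_side : (q.succ : ℕ) + 2 ≤ n ↔ (q.castSucc : ℕ) + 2 ≤ n := by
    rw [Fin.val_succ, Fin.val_castSucc]
    grind
  rw [extendSkipping_swap, extendSkipping_swap]
  congr 1 <;> ext
  · simp only [skipEmbedding_penultimate hn ha, same_side]
  · simp only [skipEmbedding_last hn hb, same_side]

lemma cycleRange_succ_inv (q : Fin n) :
    q.succ.cycleRange⁻¹ = swap q.castSucc q.succ * q.castSucc.cycleRange⁻¹ := by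
  ext x : 1
  rw [Perm.mul_apply]
  cases x using Fin.cases with
  | zero => simp
  | succ j =>
    change q.succ.cycleRange.symm j.succ =
      swap q.castSucc q.succ (q.castSucc.cycleRange.symm j.succ)
    rw [Fin.cycleRange_symm_succ, Fin.cycleRange_symm_succ]
    rcases lt_trichotomy j q with hj | rfl | hj
    · rw [Fin.succAbove_succ_of_le _ _ hj.le, Fin.succAbove_castSucc_of_lt _ _ hj,
        swap_apply_of_ne_of_ne (Fin.castSucc_injective n |>.ne hj.ne)
          ((Fin.castSucc_lt_castSucc_iff.2 hj).trans Fin.castSucc_lt_succ).ne]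
    · rw [Fin.succAbove_succ_self, Fin.succAbove_castSucc_self, swap_apply_right]
    · rw [Fin.succAbove_succ_of_lt _ _ hj, Fin.succAbove_castSucc_of_le _ _ hj.le,
        swap_apply_of_ne_of_ne (Fin.castSucc_lt_succ.trans (Fin.succ_lt_succ_iff.2 hj)).ne'
          (Fin.succ_injective n |>.ne hj.ne')]

/-- The permutation at which the block with first letter `q` starts, when the block applies `τ`
(acting on the values other than `q`) between its first and last permutations. -/
noncomputable def blockStart (τ : Perm (Fin n)) (q : Fin (n + 1)) : Perm (Fin (n + 1)) :=
  if Even (q : ℕ) then q.cycleRange⁻¹ else extendSkipping q τ * q.cycleRange⁻¹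

lemma blockStart_zero (τ : Perm (Fin n)) : blockStart τ 0 = 1 := by
  simp [blockStart]

lemma blockStart_apply_zero (τ : Perm (Fin n)) (q : Fin (n + 1)) : blockStart τ q 0 = q := by
  have hcycle : q.cycleRange⁻¹ 0 = q := Fin.cycleRange_symm_zero q
  rw [blockStart]
  split_ifs
  · exact hcycle
  · rw [Perm.mul_apply, hcycle, extendSkipping_apply_self]

lemma extendSkipping_mul_blockStart_of_odd {τ : Perm (Fin n)} (hτ : τ * τ = 1) {q : Fin (n + 1)}
    (hq : Odd (q : ℕ)) : extendSkipping q τ * blockStart τ q = q.cycleRange⁻¹ := by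
  rw [blockStart, if_neg (Nat.not_even_iff_odd.2 hq), ← mul_assoc, ← map_mul, hτ, map_one, one_mul]

-- For even `q` the extension of `τ` fixes both `q` and `q + 1`, so it commutes with their swap.
lemma blockStart_succ {τ : Perm (Fin n)} (hτ : τ * τ = 1) (q : Fin n)
    (hsucc : Even (q : ℕ) → extendSkipping q.succ τ = extendSkipping q.castSucc τ) :
    blockStart τ q.succ =
      swap q.castSucc q.succ * (extendSkipping q.castSucc τ * blockStart τ q.castSucc) := by
  rcases Nat.even_or_odd (q : ℕ) with hq | hq
  · have hcomm : extendSkipping q.castSucc τ * swap q.castSucc q.succ =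
        swap q.castSucc q.succ * extendSkipping q.castSucc τ := by
      rw [mul_swap_eq_swap_mul, extendSkipping_apply_self, ← hsucc hq, extendSkipping_apply_self]
    rw [blockStart, blockStart, if_neg (by simpa [Nat.even_add_one] using hq), if_pos (by simpa),
      cycleRange_succ_inv, hsucc hq, ← mul_assoc, hcomm, mul_assoc]
  · rw [extendSkipping_mul_blockStart_of_odd hτ (by simpa), blockStart,
      if_pos (by simpa [Nat.even_add_one] using hq), cycleRange_succ_inv]

end Blocks

section Extension

variable {n N : ℕ} {p : ℕ → Perm (Fin n)}

/-- Block `q` of the Gray code for `S_{n+1}` built from a Gray code `p 0, …, p N` for `S_n`: the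
words with first letter `q`, on whose remaining values `p` acts. -/
noncomputable def grayBlock (N : ℕ) (p : ℕ → Perm (Fin n)) (q : Fin (n + 1)) (r : ℕ) :
    Perm (Fin (n + 1)) :=
  extendSkipping q (p r) * blockStart (p N) q

/-- The Gray code for `S_{n+1}` that runs through the words starting with `0`, then with `1`, and so
on, following `p 0, …, p N` within each block. -/
noncomputable def extendedGrayCode (N : ℕ) (p : ℕ → Perm (Fin n)) : ℕ → Perm (Fin (n + 1)) :=
  concatBlocks N (grayBlock N p)

lemma grayBlock_apply_zero (N : ℕ) (p : ℕ → Perm (Fin n)) (q : Fin (n + 1)) (r : ℕ) :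
    grayBlock N p q r 0 = q := by
  rw [grayBlock, Perm.mul_apply, blockStart_apply_zero, extendSkipping_apply_self]

lemma extendedGrayCode_zero (hp0 : p 0 = 1) : extendedGrayCode N p 0 = 1 := by
  simpa [extendedGrayCode, grayBlock, hp0, blockStart_zero] using
    concatBlocks_apply (grayBlock N p) 0 N.zero_le

lemma extendedGrayCode_last (hodd : Odd n) (hpN : p N * p N = 1) :
    extendedGrayCode N p (n * (N + 1) + N) = (finRotate (n + 1))⁻¹ := by
  have hlast := concatBlocks_apply (grayBlock N p) (Fin.last n) (le_refl N)
  rwa [grayBlock, extendSkipping_mul_blockStart_of_odd hpN (by simpa), Fin.cycleRange_last] at hlast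

lemma grayBlock_succ_zero (hn : 3 ≤ n) (hodd : Odd n) {a b : Fin n} (ha : (a : ℕ) + 2 = n)
    (hb : (b : ℕ) + 1 = n) (hp0 : p 0 = 1) (hpN : p N = swap a b) (q : Fin n) :
    grayBlock N p q.succ 0 = swap q.castSucc q.succ * grayBlock N p q.castSucc N := by
  rw [grayBlock, grayBlock, hp0, map_one, one_mul, hpN]
  exact blockStart_succ (swap_mul_self a b) q fun hq => extendSkipping_swap_succ hn hodd ha hb hq

lemma IsGrayPath.extendedGrayCode (hn : 3 ≤ n) (hodd : Odd n) (hp : IsGrayPath p N) {a b : Fin n}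
    (ha : (a : ℕ) + 2 = n) (hb : (b : ℕ) + 1 = n) (hp0 : p 0 = 1) (hpN : p N = swap a b) :
    IsGrayPath (extendedGrayCode N p) (n * (N + 1) + N) := by
  have hblock (q : Fin (n + 1)) : IsGrayPath (grayBlock N p q) N :=
    (hp.viaEmbedding (skipEmbedding q)).mul_right _
  refine ⟨injOn_concatBlocks (fun q => (hblock q).injOn) fun q q' r _ r' _ h => ?_, fun s hs => ?_⟩
  · rw [← grayBlock_apply_zero N p q r, h, grayBlock_apply_zero]
  · refine concatBlocks_step (P := fun σ σ' => IsSwap (σ' * σ⁻¹))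
      (fun q => (hblock q).isSwap_step) (fun q => ?_) hs
    rw [grayBlock_succ_zero hn hodd ha hb hp0 hpN, mul_inv_cancel_right]
    exact ⟨_, _, Fin.castSucc_lt_succ.ne, rfl⟩

lemma transitionCount_grayBlock_of_mem (N : ℕ) (p : ℕ → Perm (Fin n)) {i j : Fin (n + 1)}
    (hij : i ≠ j) {q : Fin (n + 1)} (hq : q = i ∨ q = j) :
    transitionCount (grayBlock N p q) N (swap i j) = 0 :=
  (transitionCount_mul_right _ _ N _).trans
    (transitionCount_map_of_notMem_range _ (swap_notMem_range_extendSkipping hij hq) p N)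

lemma transitionCount_grayBlock_skipEmbedding (N : ℕ) (p : ℕ → Perm (Fin n)) (q : Fin (n + 1))
    (i j : Fin n) :
    transitionCount (grayBlock N p q) N (swap (skipEmbedding q i) (skipEmbedding q j)) =
      transitionCount p N (swap i j) := by
  rw [← extendSkipping_swap]
  exact (transitionCount_mul_right _ _ N _).trans
    (transitionCount_map (viaEmbeddingHom_injective _) p N _)

lemma transitionCount_extendedGrayCode (hn : 3 ≤ n) (hodd : Odd n) {a b : Fin n}
    (ha : (a : ℕ) + 2 = n) (hb : (b : ℕ) + 1 = n) (hp0 : p 0 = 1) (hpN : p N = swap a b) {c : ℕ}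
    (hcount : ∀ i j : Fin n, i ≠ j → swap i j ≠ swap a b → transitionCount p N (swap i j) = c)
    {i j : Fin (n + 1)} (hij : i ≠ j) (hwide : ¬IsAdjacentSwap (swap i j)) :
    transitionCount (extendedGrayCode N p) (n * (N + 1) + N) (swap i j) = (n - 1) * c := by
  have across (q : Fin n) : grayBlock N p q.succ 0 ≠ swap i j * grayBlock N p q.castSucc N := by
    rw [grayBlock_succ_zero hn hodd ha hb hp0 hpN]
    exact fun h => hwide (mul_right_cancel h ▸ ⟨_, _, by simp, rfl⟩)
  have within (q : Fin (n + 1)) :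
      transitionCount (grayBlock N p q) N (swap i j) =
        if q ∈ ({i, j} : Finset _)ᶜ then c else 0 := by
    split_ifs with hq
    · simp only [Finset.mem_compl, Finset.mem_insert, Finset.mem_singleton, not_or] at hq
      have hrange := range_skipEmbedding q
      obtain ⟨i, rfl⟩ : i ∈ Set.range (skipEmbedding q) := by rw [hrange]; exact Ne.symm hq.1
      obtain ⟨j, rfl⟩ : j ∈ Set.range (skipEmbedding q) := by rw [hrange]; exact Ne.symm hq.2
      rw [transitionCount_grayBlock_skipEmbedding]
      refine hcount i j (ne_of_apply_ne _ hij) fun hclosing => hwide ?_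
      rw [← extendSkipping_swap, hclosing]
      exact isAdjacentSwap_extendSkipping_swap hn ha hb q
    · exact transitionCount_grayBlock_of_mem N p hij (by simpa [or_iff_not_imp_left] using hq)
  rw [extendedGrayCode, transitionCount_concatBlocks across,
    Finset.sum_congr rfl fun q _ => within q, Finset.sum_ite_mem, Finset.sum_const,
    Finset.univ_inter, Finset.card_compl, Finset.card_pair hij, Fintype.card_fin, smul_eq_mul]
  rfl

lemma IsBalancedCyclicGrayCode.transitionCount_extendedGrayCode_of_wide (hn : 3 ≤ n)
    (hodd : Odd n) {π : Fin (N + 1) → Perm (Fin n)} (hπ : IsBalancedCyclicGrayCode n N π)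
    {a b : Fin n} (ha : (a : ℕ) + 2 = n) (hb : (b : ℕ) + 1 = n) (h0 : π 0 = 1)
    (hlast : π (Fin.last N) = swap a b) {i j : Fin (n + 1)} (hij : i ≠ j)
    (hwide : ¬IsAdjacentSwap (swap i j)) :
    transitionCount (extendedGrayCode N fun s => π (Fin.ofNat (N + 1) s)) (n * (N + 1) + N)
      (swap i j) = 2 * (n - 1).factorial := by
  have hcount (i j : Fin n) (hij : i ≠ j) (hne : swap i j ≠ swap a b) :
      transitionCount (fun s => π (Fin.ofNat (N + 1) s)) N (swap i j) =
        2 * (n - 2).factorial := by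
    refine hπ.transitionCount_eq hij fun hclosing => hne ?_
    rw [h0, hlast, eq_comm, mul_eq_one_iff_eq_inv, swap_inv] at hclosing
    exact hclosing
  have hN : π (Fin.ofNat (N + 1) N) = swap a b :=
    (congrArg π (Fin.ofNat_val_eq_self (Fin.last N))).trans hlast
  rw [transitionCount_extendedGrayCode hn hodd ha hb h0 hN hcount hij hwide, mul_left_comm]
  exact congrArg (2 * ·) (Nat.mul_factorial_pred (n := n - 1) (by omega))

end Extension

end Permutations

/-- Let `n ≥ 3` be odd. If `S_n` has a balanced cyclic Gray code under all
transpositions from `12⋯(n−1)n` to `12⋯n(n−1)` with closing transposition `(n−1, n)`, then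
there exist two almost balanced Gray codes for `S_{n+1}`: a code `L` from the identity word
`12⋯(n+1)` to `23⋯(n+1)1` (the rotation `finRotate (n+1)`), and a code `R` from `12⋯(n+1)`
to `(n+1)12⋯n` (the inverse rotation), such that every transposition on `[n+1]` is applied
the same number of times in `R` as in `L`. -/
theorem two_almost_balanced_gray_codes (n : ℕ) (hn : 3 ≤ n) (hodd : Odd n)
    (h : ∃ (N : ℕ) (π : Fin (N + 1) → Equiv.Perm (Fin n)),
      IsBalancedCyclicGrayCode n N π ∧
      π 0 = 1 ∧
      π (Fin.last N) = Equiv.swap ⟨n - 2, by omega⟩ ⟨n - 1, by omega⟩ ∧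
      π 0 = Equiv.swap ⟨n - 2, by omega⟩ ⟨n - 1, by omega⟩ * π (Fin.last N)) :
    ∃ (M : ℕ) (L R : Fin (M + 1) → Equiv.Perm (Fin (n + 1))),
      IsAlmostBalancedGrayCodeFromTo (n + 1) M L 1 (finRotate (n + 1)) ∧
      IsAlmostBalancedGrayCodeFromTo (n + 1) M R 1 (finRotate (n + 1))⁻¹ ∧
      (∀ i j : Fin (n + 1), i ≠ j →
        (Finset.univ.filter (fun s : Fin (M + 1) =>
          (s : ℕ) < M ∧ R (s + 1) = Equiv.swap i j * R s)).card
        = (Finset.univ.filter (fun s : Fin (M + 1) =>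
          (s : ℕ) < M ∧ L (s + 1) = Equiv.swap i j * L s)).card) := by
  obtain ⟨N, π, hπ, h0, hlast, -⟩ := h
  let M := n * (N + 1) + N
  let R := extendedGrayCode N fun s => π (Fin.ofNat (N + 1) s)
  let L : ℕ → Equiv.Perm (Fin (n + 1)) := fun s => R (M - s) * finRotate (n + 1)
  have ha : n - 2 + 2 = n := by omega
  have hb : n - 1 + 1 = n := by omega
  have hN : π (Fin.ofNat (N + 1) N) = Equiv.swap ⟨n - 2, by omega⟩ ⟨n - 1, by omega⟩ :=
    (congrArg π (Fin.ofNat_val_eq_self (Fin.last N))).trans hlast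
  have hM : M + 1 = (n + 1).factorial := by rw [Nat.factorial_succ, ← hπ.1]; ring
  have hR : IsGrayPath R M := hπ.isGrayPath.extendedGrayCode hn hodd ha hb h0 hN
  have hR0 : R 0 = 1 := extendedGrayCode_zero h0
  have hRM : R M = (finRotate (n + 1))⁻¹ :=
    extendedGrayCode_last hodd (by rw [hN, Equiv.swap_mul_self])
  have count_L (i j) :
      transitionCount L M (Equiv.swap i j) = transitionCount R M (Equiv.swap i j) :=
    transitionCount_swap_reverse_mul_right R _ M i j
  have wide_R (i j) (hij : i ≠ j) (hwide) : transitionCount R M (Equiv.swap i j) = _ :=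
    hπ.transitionCount_extendedGrayCode_of_wide hn hodd ha hb h0 hlast hij
      (mt adjacent_of_isAdjacentSwap_swap hwide)
  refine ⟨M, fun s => L s, fun s => R s,
    (hR.reverse.mul_right _).isAlmostBalancedGrayCodeFromTo hM (by simp [hRM]) (by simp [hR0])
      fun i j hij hwide => (count_L i j).trans (wide_R i j hij hwide),
    hR.isAlmostBalancedGrayCodeFromTo hM hR0 hRM wide_R, fun i j _ => ?_⟩
  rw [card_filter_fin_eq_transitionCount R, card_filter_fin_eq_transitionCount L, count_L]
end

section
/- Let n ≥ 3 be odd. Then there exist a balanced cyclic Gray code G for S_n under all transpositions from the word 12⋯(n−1)n to the word 12⋯n(n−1) with closing transposition (n−1, n), and a (non-cyclic) Gray code H for S_n from the word 23⋯(n−1)1n to the word n12⋯(n−1), such that every transposition on [n] is applied the same number of times in H as in G (not counting the closing transposition of G). -/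
/-!
`S_{n+1}` splits into blocks according to the first letter `i` of the word, each a copy of `S_n`
permuting the other values. Run a path through each block that applies all transpositions equally
often but for one that is missing once, and pass from block `i` to block `i + 1` by the
transposition `(i, i + 1)`. The resulting path is again balanced up to one transposition if the
missing ones match the links, and its endpoint is a rotation times the product of the endpoints
of the paths in the blocks.

If `S_{2k}` has such a path ending at the rotation `R`, choosing `R` or `R⁻¹` as the endpoint in
each block produces both codes for `S_{2k+1}`. Conversely, in the code `G` the missing
transposition and the endpoint agree, and can be any transposition. For `2k + 1 ≥ 5` the blocks of
`S_{2k+2}` can be given the endpoints `x₁ ⋯ x_k y y x₁ ⋯ x_k`, where the `x_j` are disjoint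
transpositions; their product is the identity, so the path ends at the rotation of `S_{2k+2}`.
As this fails for `k = 1`, `S_5` is reached from `S_3` by explicit choices.
-/

section

open Equiv SimpleGraph

section Walks

variable {α β : Type*} [DecidableEq α] [DecidableEq β]

variable (α) in
/-- The Cayley graph of the symmetric group on `α` for *left* multiplication by transpositions:
adjacent permutations, written as words, differ by an interchange of two values. -/
def transpositionGraph : SimpleGraph (Perm α) where
  Adj σ τ := ∃ t : Perm α, t.IsSwap ∧ τ = t * σ
  symm := ⟨by
    rintro σ _ ⟨_, ⟨x, y, hxy, rfl⟩, rfl⟩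
    exact ⟨swap x y, ⟨x, y, hxy, rfl⟩, (swap_mul_self_mul x y σ).symm⟩⟩
  loopless := ⟨by
    rintro σ ⟨_, ⟨x, y, hxy, rfl⟩, h⟩
    exact hxy (swap_eq_one_iff.mp (right_eq_mul.mp h))⟩

/-- The graph homomorphism `σ ↦ ψ σ * u` induced by a group homomorphism `ψ` that sends
transpositions to transpositions. -/
def transpositionGraph.hom (ψ : Perm α →* Perm β) (hψ : ∀ t, t.IsSwap → (ψ t).IsSwap)
    (u : Perm β) : transpositionGraph α →g transpositionGraph β where
  toFun σ := ψ σ * u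
  map_rel' := by
    rintro σ _ ⟨t, ht, rfl⟩
    exact ⟨ψ t, hψ t ht, by rw [map_mul, mul_assoc]⟩

variable [Fintype α] [Fintype β] {σ τ υ : Perm α}

/-- The number of times the transposition `t` is applied along the walk `p`. -/
def usage (p : (transpositionGraph α).Walk σ τ) (t : Perm α) : ℕ :=
  p.darts.countP fun d => d.snd = t * d.fst

theorem usage_nil (t : Perm α) : usage (Walk.nil : (transpositionGraph α).Walk σ σ) t = 0 := rfl

theorem usage_cons (h : (transpositionGraph α).Adj σ τ) (p : (transpositionGraph α).Walk τ υ)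
    (t : Perm α) : usage (p.cons h) t = usage p t + if τ = t * σ then 1 else 0 := by
  simp [usage, List.countP_cons]

theorem usage_append (p : (transpositionGraph α).Walk σ τ) (q : (transpositionGraph α).Walk τ υ)
    (t : Perm α) : usage (p.append q) t = usage p t + usage q t := by
  simp only [usage, Walk.darts_append, List.countP_append]

theorem usage_reverse (p : (transpositionGraph α).Walk σ τ) {t : Perm α} (ht : t.IsSwap) :
    usage p.reverse t = usage p t := by
  obtain ⟨x, y, -, rfl⟩ := ht
  simp only [usage, Walk.darts_reverse, List.countP_reverse, List.countP_map]
  refine List.countP_congr fun d _ => ?_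
  simp only [Function.comp_apply, decide_eq_true_eq]
  change d.fst = swap x y * d.snd ↔ d.snd = swap x y * d.fst
  rw [← inv_mul_eq_iff_eq_mul, swap_inv, eq_comm]

theorem usage_map_apply {ψ : Perm α →* Perm β} (hψ : ∀ t, t.IsSwap → (ψ t).IsSwap)
    (hinj : Function.Injective ψ) (u : Perm β) (p : (transpositionGraph α).Walk σ τ)
    (t : Perm α) : usage (p.map (transpositionGraph.hom ψ hψ u)) (ψ t) = usage p t := by
  simp only [usage, Walk.darts_map, List.countP_map]
  refine List.countP_congr fun d _ => ?_
  simp only [Function.comp_apply, decide_eq_true_eq]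
  change ψ d.snd * u = ψ t * (ψ d.fst * u) ↔ _
  rw [← mul_assoc, mul_left_inj, ← map_mul, hinj.eq_iff]

omit [Fintype α] in
theorem usage_map_of_notMem_range {ψ : Perm α →* Perm β} (hψ : ∀ t, t.IsSwap → (ψ t).IsSwap)
    (u : Perm β) (p : (transpositionGraph α).Walk σ τ) {t : Perm β} (ht : t ∉ Set.range ψ) :
    usage (p.map (transpositionGraph.hom ψ hψ u)) t = 0 := by
  simp only [usage, Walk.darts_map, List.countP_map, List.countP_eq_zero]
  intro d _
  obtain ⟨s, -, hs⟩ := d.adj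
  simp only [Function.comp_apply, decide_eq_true_eq]
  change ¬ ψ d.snd * u = t * (ψ d.fst * u)
  rw [← mul_assoc, mul_left_inj, hs, map_mul, mul_left_inj]
  exact fun h => ht ⟨s, h⟩

theorem usage_eq_card (p : (transpositionGraph α).Walk σ τ) (t : Perm α) :
    usage p t = ((Finset.range p.length).filter fun i =>
      p.getVert (i + 1) = t * p.getVert i).card := by
  induction p with
  | nil => rfl
  | cons h p ih =>
    rw [usage_cons, ih, Walk.length_cons, Finset.card_filter, Finset.card_filter,
      Finset.sum_range_succ']
    congr 2
    simp only [zero_add, Walk.getVert_cons_succ, Walk.getVert_zero]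

theorem exists_walk_of_links {n : ℕ} (u v : Fin (n + 1) → Perm α) (s : Fin n → Perm α)
    (hs : ∀ i, (s i).IsSwap) (hlink : ∀ i, u i.succ = s i * v i.castSucc)
    (w : ∀ i, (transpositionGraph α).Walk (u i) (v i)) :
    ∃ p : (transpositionGraph α).Walk (u 0) (v (Fin.last n)),
      (∀ τ, p.support.count τ = ∑ i, (w i).support.count τ) ∧
      ∀ t, usage p t = ∑ i, usage (w i) t + ∑ i, if s i = t then 1 else 0 := by
  induction n with
  | zero => exact ⟨w 0, by simp, by simp⟩
  | succ n ih =>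
    have hinit := ih (fun i => u i.castSucc) (fun i => v i.castSucc) (fun i => s i.castSucc)
      (fun i => hs _) (fun i => hlink i.castSucc) (fun i => w i.castSucc)
    rw [Fin.castSucc_zero] at hinit
    obtain ⟨p, hcount, husage⟩ := hinit
    have hadj : (transpositionGraph α).Adj (v (Fin.last n).castSucc) (u (Fin.last n).succ) :=
      ⟨s (Fin.last n), hs _, hlink _⟩
    refine ⟨p.append (.cons hadj (w (Fin.last (n + 1)))), fun τ => ?_, fun t => ?_⟩
    · rw [Walk.support_append, Walk.support_cons, List.tail_cons, List.count_append, hcount,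
        Fin.sum_univ_castSucc (n := n + 1)]
    · simp only [usage_append, usage_cons, husage, hlink, mul_left_inj]
      rw [Fin.sum_univ_castSucc (n := n + 1),
        Fin.sum_univ_castSucc (n := n) (fun i => if s i = t then 1 else 0)]
      ring

end Walks

/-- There is a Hamiltonian path from `σ` to `τ` in the transposition graph along which each
transposition is applied `2 * (card α - 2)!` times, except that `t` is applied once less. Closing
it up by `t`, where possible, gives a balanced cyclic Gray code. -/
def HasNearlyBalancedPath {α : Type*} [DecidableEq α] [Fintype α] (t σ τ : Perm α) : Prop :=
  ∃ p : (transpositionGraph α).Walk σ τ, p.IsHamiltonian ∧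
    ∀ s : Perm α, s.IsSwap → usage p s + (if s = t then 1 else 0) =
      2 * Nat.factorial (Fintype.card α - 2)

theorem isSwap_conj {α : Type*} [DecidableEq α] {t : Perm α} (ht : t.IsSwap) (g : Perm α) :
    (g * t * g⁻¹).IsSwap := by
  obtain ⟨x, y, hxy, rfl⟩ := ht
  exact ⟨g x, g y, g.injective.ne hxy, (swap_apply_apply g x y).symm⟩

namespace HasNearlyBalancedPath

variable {α : Type*} [DecidableEq α] [Fintype α] {t σ τ π : Perm α}

theorem symm (h : HasNearlyBalancedPath t σ τ) : HasNearlyBalancedPath t τ σ := by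
  obtain ⟨p, hp, husage⟩ := h
  refine ⟨p.reverse, fun υ => ?_, fun s hs => ?_⟩
  · rw [Walk.support_reverse, List.count_reverse, hp]
  · rw [usage_reverse p hs, husage s hs]

theorem translate (h : HasNearlyBalancedPath t σ τ) (g u : Perm α) :
    HasNearlyBalancedPath (g * t * g⁻¹) (g * σ * u) (g * τ * u) := by
  obtain ⟨p, hp, husage⟩ := h
  have hconj : ∀ s : Perm α, s.IsSwap → (MulAut.conj g s).IsSwap := fun s hs => isSwap_conj hs g
  let f := transpositionGraph.hom (MulAut.conj g).toMonoidHom hconj (g * u)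
  have hf : ∀ υ, f υ = g * υ * u := fun υ => by
    change g * υ * g⁻¹ * (g * u) = _
    group
  have hbij : Function.Bijective f := by
    convert ((Equiv.mulLeft g).trans (Equiv.mulRight u)).bijective using 1
    exact funext hf
  rw [← hf, ← hf]
  refine ⟨p.map f, hp.map f hbij, fun s hs => ?_⟩
  obtain ⟨r, rfl⟩ := (MulAut.conj g).surjective s
  have hr : r.IsSwap := by simpa [mul_assoc] using isSwap_conj hs g⁻¹
  simp only [← husage r hr, ← MulAut.conj_apply, (MulAut.conj g).injective.eq_iff]
  congr 1
  exact usage_map_apply hconj (MulAut.conj g).injective _ p r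

theorem mul_right (h : HasNearlyBalancedPath t σ τ) (u : Perm α) :
    HasNearlyBalancedPath t (σ * u) (τ * u) := by
  simpa using h.translate 1 u

theorem inv (h : HasNearlyBalancedPath t 1 π) : HasNearlyBalancedPath t 1 π⁻¹ := by
  simpa using h.symm.mul_right π⁻¹

theorem conj (h : HasNearlyBalancedPath t 1 π) (g : Perm α) :
    HasNearlyBalancedPath (g * t * g⁻¹) 1 (g * π * g⁻¹) := by
  simpa using h.translate g g⁻¹

end HasNearlyBalancedPath

section Fixing

variable {n : ℕ}

/-- The embedding of `S_n` into `S_{n+1}` as the stabilizer of the value `i`. -/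
def fixing (i : Fin (n + 1)) : Perm (Fin n) →* Perm (Fin (n + 1)) :=
  Perm.extendDomainHom (finSuccAboveEquiv i)

theorem fixing_injective (i : Fin (n + 1)) : Function.Injective (fixing i) :=
  Perm.extendDomainHom_injective _

theorem fixing_apply_self (i : Fin (n + 1)) (σ : Perm (Fin n)) : fixing i σ i = i :=
  Perm.extendDomain_apply_not_subtype σ _ (by simp)

theorem fixing_apply_succAbove (i : Fin (n + 1)) (σ : Perm (Fin n)) (j : Fin n) :
    fixing i σ (i.succAbove j) = i.succAbove (σ j) :=
  Perm.extendDomain_apply_image σ (finSuccAboveEquiv i) j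

theorem exists_fixing_eq {i : Fin (n + 1)} {τ : Perm (Fin (n + 1))} (h : τ i = i) :
    ∃ σ, fixing i σ = τ := by
  have hτ : ∀ j, τ j ≠ i ↔ j ≠ i := fun j => by
    conv_lhs => rw [← h]
    exact τ.injective.ne_iff
  refine ⟨(finSuccAboveEquiv i).symm.permCongr (τ.subtypePerm hτ), ?_⟩
  ext j : 1
  obtain rfl | ⟨j, rfl⟩ := i.eq_self_or_eq_succAbove j
  · rw [fixing_apply_self, h]
  · rw [fixing_apply_succAbove, permCongr_apply, symm_symm]
    exact congrArg Subtype.val ((finSuccAboveEquiv i).apply_symm_apply _)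

theorem fixing_swap (i : Fin (n + 1)) (a b : Fin n) :
    fixing i (swap a b) = swap (i.succAbove a) (i.succAbove b) := by
  ext j : 1
  obtain rfl | ⟨j, rfl⟩ := i.eq_self_or_eq_succAbove j
  · rw [fixing_apply_self,
      swap_apply_of_ne_of_ne (Fin.succAbove_ne _ a).symm (Fin.succAbove_ne _ b).symm]
  · rw [fixing_apply_succAbove, ← Fin.succAbove_right_injective.swap_apply]

theorem isSwap_fixing_iff {i : Fin (n + 1)} {t : Perm (Fin n)} :
    (fixing i t).IsSwap ↔ t.IsSwap := by
  rw [← Perm.card_support_eq_two, ← Perm.card_support_eq_two]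
  exact Eq.congr_left (Perm.card_support_extend_domain (finSuccAboveEquiv i))

theorem fixing_mul_cycleRange_inv (i : Fin (n + 1)) (σ : Perm (Fin n)) :
    fixing i σ * i.cycleRange⁻¹ = i.cycleRange⁻¹ * fixing 0 σ := by
  ext j : 1
  cases j using Fin.cases with
  | zero => simp [fixing_apply_self]
  | succ j =>
    simpa [fixing_apply_succAbove] using
      congrArg i.cycleRange.symm (fixing_apply_succAbove 0 σ j).symm

theorem swap_mul_cycleRange_inv (i : Fin n) :
    swap i.castSucc i.succ * i.castSucc.cycleRange⁻¹ = i.succ.cycleRange⁻¹ := by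
  cases n with
  | zero => exact i.elim0
  | succ n =>
    ext j : 1
    cases j using Fin.cases with
    | zero => simp
    | succ j =>
      simp only [Perm.mul_apply, Perm.inv_def, Fin.cycleRange_symm_succ]
      grind [Fin.succAbove]

theorem swap_mul_fixing_finRotate (n : ℕ) :
    swap 0 1 * fixing 0 (finRotate (n + 1)) = finRotate (n + 2) := by
  rw [finRotate_succ_eq_decomposeFin (n := n + 1)]
  ext j : 1
  cases j using Fin.cases with
  | zero => simp [fixing_apply_self]
  | succ j =>
    rw [Perm.mul_apply, ← Fin.succAbove_zero, fixing_apply_succAbove, Fin.succAbove_zero,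
      Perm.decomposeFin_symm_apply_succ]

end Fixing

section Glue

variable {n : ℕ}

/-- The analogue of `HasNearlyBalancedPath` for the block of the permutations `υ` with
`υ 0 = i`: a path that visits exactly this block and applies each transposition fixing `i` equally
often, except that `t` is applied once less. -/
def HasNearlyBalancedBlockPath (i : Fin (n + 1)) (t σ τ : Perm (Fin (n + 1))) : Prop :=
  ∃ p : (transpositionGraph (Fin (n + 1))).Walk σ τ,
    (∀ υ, p.support.count υ = if υ 0 = i then 1 else 0) ∧
    ∀ s : Perm (Fin (n + 1)), s.IsSwap → usage p s + (if s = t then 1 else 0) =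
      if s i = i then 2 * Nat.factorial (n - 2) else 0

theorem HasNearlyBalancedPath.block {t σ τ : Perm (Fin n)} (h : HasNearlyBalancedPath t σ τ)
    (i : Fin (n + 1)) {u : Perm (Fin (n + 1))} (hu : u 0 = i) :
    HasNearlyBalancedBlockPath i (fixing i t) (fixing i σ * u) (fixing i τ * u) := by
  obtain ⟨p, hp, husage⟩ := h
  let f := transpositionGraph.hom (fixing i) (fun _ => isSwap_fixing_iff.mpr) u
  have hf : ∀ υ, f υ = fixing i υ * u := fun _ => rfl
  have hf_inj : Function.Injective f := fun _ _ hυ => fixing_injective i (mul_right_cancel hυ)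
  rw [← hf, ← hf]
  refine ⟨p.map f, fun υ => ?_, fun s hs => ?_⟩
  · rw [Walk.support_map]
    split_ifs with hυ
    · obtain ⟨ω, hω⟩ := exists_fixing_eq (i := i) (τ := υ * u⁻¹) (by simp [← hu, hυ])
      have hfω : f ω = υ := by rw [hf, hω, inv_mul_cancel_right]
      rw [← hfω, List.count_map_of_injective _ f hf_inj, hp]
    · refine List.count_eq_zero.mpr fun hmem => hυ ?_
      obtain ⟨ω, -, rfl⟩ := List.mem_map.mp hmem
      rw [hf, Perm.mul_apply, hu, fixing_apply_self]
  · by_cases hsi : s i = i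
    · obtain ⟨r, rfl⟩ := exists_fixing_eq hsi
      have hr := husage r (isSwap_fixing_iff.mp hs)
      rw [Fintype.card_fin] at hr
      simp only [if_pos hsi, ← hr, (fixing_injective i).eq_iff, add_left_inj]
      exact usage_map_apply _ (fixing_injective i) u p r
    · have hne : ∀ r, fixing i r ≠ s := fun r hr => hsi (hr ▸ fixing_apply_self i r)
      rw [if_neg hsi, if_neg (hne t).symm, usage_map_of_notMem_range _ u p fun ⟨r, hr⟩ => hne r hr]

theorem sum_ite_apply_eq_self_of_isSwap {α : Type*} [DecidableEq α] [Fintype α] {s : Perm α}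
    (hs : s.IsSwap) (c : ℕ) : ∑ i, (if s i = i then c else 0) = (Fintype.card α - 2) * c := by
  have hfixed : Finset.univ.filter (fun i => s i = i) = s.supportᶜ := by ext; simp
  rw [← Finset.sum_filter, Finset.sum_const, smul_eq_mul, hfixed, Finset.card_compl,
    Perm.card_support_eq_two.mpr hs]

/-- A transposition fixes all but two values `i`, so it is applied equally often within all blocks
together once the missing transpositions are made up for. The bijection `e` makes up for them by
the transpositions linking consecutive blocks and by `t₀`. -/
theorem hasNearlyBalancedPath_of_blocks {u v t : Fin (n + 3) → Perm (Fin (n + 3))}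
    {t₀ : Perm (Fin (n + 3))} (hblock : ∀ i, HasNearlyBalancedBlockPath i (t i) (u i) (v i))
    (hlink : ∀ j : Fin (n + 2), u j.succ = swap j.castSucc j.succ * v j.castSucc)
    {e : Fin (n + 3) → Fin (n + 3)} (he : Function.Injective e)
    (hmatch : ∀ i, t i =
      Fin.snoc (α := fun _ => Perm (Fin (n + 3))) (fun j => swap j.castSucc j.succ) t₀ (e i)) :
    HasNearlyBalancedPath t₀ (u 0) (v (Fin.last (n + 2))) := by
  choose w hcount husage using hblock
  obtain ⟨p, hp_count, hp_usage⟩ := exists_walk_of_links u v (fun j => swap j.castSucc j.succ)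
    (fun j => ⟨_, _, j.castSucc_lt_succ.ne, rfl⟩) hlink w
  have hmissing : ∀ s : Perm (Fin (n + 3)), ∑ i, (if s = t i then 1 else 0) =
      ∑ j : Fin (n + 2), (if swap j.castSucc j.succ = s then 1 else 0) +
        if s = t₀ then 1 else 0 := fun s => by
    let link : Fin (n + 3) → Perm (Fin (n + 3)) := Fin.snoc (fun j => swap j.castSucc j.succ) t₀
    have hreindex := (Equiv.ofBijective e (Finite.injective_iff_bijective.mp he)).sum_comp
      fun j => if s = link j then 1 else 0
    simp only [Equiv.ofBijective_apply, link, ← hmatch] at hreindex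
    rw [hreindex, Fin.sum_univ_castSucc]
    simp only [Fin.snoc_castSucc, Fin.snoc_last, eq_comm]
  refine ⟨p, fun υ => ?_, fun s hs => ?_⟩
  · simp only [hp_count, hcount, Finset.sum_ite_eq, Finset.mem_univ, if_true]
  · rw [hp_usage, add_assoc, ← hmissing, ← Finset.sum_add_distrib,
      Finset.sum_congr rfl fun i _ => husage i s hs, sum_ite_apply_eq_self_of_isSwap hs,
      Fintype.card_fin, show n + 3 - 2 = n + 1 from rfl, Nat.factorial_succ,
      show n + 2 - 2 = n from rfl]
    ring

theorem hasNearlyBalancedPath_glue {t ρ : Fin (n + 3) → Perm (Fin (n + 2))}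
    {t₀ : Perm (Fin (n + 3))} (hblock : ∀ i, HasNearlyBalancedPath (t i) 1 (ρ i))
    {e : Fin (n + 3) → Fin (n + 3)} (he : Function.Injective e)
    (hmatch : ∀ i, fixing i (t i) =
      Fin.snoc (α := fun _ => Perm (Fin (n + 3))) (fun j => swap j.castSucc j.succ) t₀ (e i)) :
    HasNearlyBalancedPath t₀ 1 (fixing 0 (List.ofFn ρ).prod * finRotate (n + 3)) := by
  -- `u i` and `v i` begin and end the path in block `i`. The link replaces the first letter `i` by
  -- `i + 1`, which changes only the factor `cycleRange`.
  let u (i : Fin (n + 3)) := i.cycleRange⁻¹ * fixing 0 (Fin.partialProd ρ i.castSucc)⁻¹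
  let v (i : Fin (n + 3)) := i.cycleRange⁻¹ * fixing 0 (Fin.partialProd ρ i.succ)⁻¹
  have hv : ∀ i, fixing i (ρ i)⁻¹ * u i = v i := fun i => by
    simp only [u, v, ← mul_assoc, fixing_mul_cycleRange_inv, Fin.partialProd_succ, mul_inv_rev,
      map_mul]
  have hu : ∀ i, u i 0 = i := fun i => by
    rw [Perm.mul_apply, fixing_apply_self, Perm.inv_def, Fin.cycleRange_symm_zero]
  have hwalk : ∀ i, HasNearlyBalancedBlockPath i (fixing i (t i)) (u i) (v i) := fun i => by
    simpa only [map_one, one_mul, hv] using (hblock i).inv.block i (hu i)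
  have hpath := hasNearlyBalancedPath_of_blocks hwalk (fun j => by
    simp only [u, v, ← mul_assoc, swap_mul_cycleRange_inv, Fin.succ_castSucc]) he hmatch
  have hstart : u 0 = 1 := by simp [u]
  have hend : v (Fin.last (n + 2)) = (fixing 0 (List.ofFn ρ).prod * finRotate (n + 3))⁻¹ := by
    simp only [v, Fin.cycleRange_last, Fin.partialProd, Fin.succ_last, Fin.val_last, map_inv,
      mul_inv_rev]
    rw [List.take_of_length_le (List.length_ofFn).le]
  rw [hstart, hend] at hpath
  simpa only [inv_inv] using hpath.inv

end Glue

section Recursion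

variable {n : ℕ}

theorem finRotate_pow_self : ∀ n : ℕ, finRotate n ^ n = 1
  | 0 => pow_zero _
  | 1 => Subsingleton.elim _ _
  | n + 2 => by
    have horder : orderOf (finRotate (n + 2)) = n + 2 := by
      rw [isCycle_finRotate.orderOf, support_finRotate, Finset.card_univ, Fintype.card_fin]
    simpa only [horder] using pow_orderOf_eq_one (finRotate (n + 2))

theorem swap_zero_one_eq_finRotate_mul_fixing (n : ℕ) :
    swap 0 1 = finRotate (n + 3) * fixing 0 (finRotate (n + 2))⁻¹ := by
  rw [← swap_mul_fixing_finRotate, map_inv, mul_inv_cancel_right]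

theorem finRotate_mul_swap_mul_finRotate (n : ℕ) :
    finRotate (n + 3) * swap 0 1 * finRotate (n + 3) =
      finRotate (n + 3) * fixing 0 (finRotate (n + 2)) := by
  rw [mul_assoc, ← swap_mul_fixing_finRotate (n + 1), swap_mul_self_mul]

theorem hasNearlyBalancedPath_glue_cyclic {t ρ : Fin (n + 3) → Perm (Fin (n + 2))}
    (hblock : ∀ i, HasNearlyBalancedPath (t i) 1 (ρ i))
    {e : Fin (n + 3) → Fin (n + 3)} (he : Function.Injective e)
    (hmatch : ∀ i, fixing i (t i) = swap (e i) (e i + 1)) :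
    HasNearlyBalancedPath (swap 0 1) 1 (finRotate (n + 3) * fixing 0 (List.ofFn ρ).prod) := by
  have hlink : ∀ j : Fin (n + 3), swap j (j + 1) =
      Fin.snoc (α := fun _ => Perm (Fin (n + 3))) (fun j => swap j.castSucc j.succ)
        (swap (Fin.last (n + 2)) 0) j := fun j => by
    cases j using Fin.lastCases with
    | last => rw [Fin.snoc_last, Fin.last_add_one]
    | cast j => rw [Fin.snoc_castSucc, Fin.coeSucc_eq_succ]
  have h := (hasNearlyBalancedPath_glue hblock he fun i => (hmatch i).trans (hlink (e i))).conj
    (finRotate (n + 3))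
  rw [← swap_apply_apply, finRotate_last, finRotate_apply_zero] at h
  simpa only [mul_assoc, mul_inv_cancel, mul_one] using h

theorem exists_fixing_swap_add_one_eq (i : Fin (n + 3)) :
    ∃ a : Fin (n + 2), fixing i (swap a (a + 1)) = swap (i + 1) (i + 1 + 1) := by
  simp only [fixing_swap]
  cases i using Fin.lastCases with
  | last => exact ⟨0, by simp [Fin.succAbove_last]⟩
  | cast j =>
    refine ⟨j, ?_⟩
    rw [Fin.succAbove_castSucc_self, Fin.coeSucc_eq_succ]
    cases j using Fin.lastCases with
    | last => simp [Fin.succAbove_ne_zero_zero, Fin.succ_last]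
    | cast k =>
      rw [Fin.coeSucc_eq_succ, Fin.succ_castSucc, Fin.coeSucc_eq_succ,
        Fin.succAbove_of_le_castSucc _ _ (by simp [Fin.le_def])]

namespace HasNearlyBalancedPath

theorem swap_of_swap {α : Type*} [DecidableEq α] [Fintype α] {x y a b : α}
    (h : HasNearlyBalancedPath (swap x y) 1 (swap x y)) (hxy : x ≠ y) (hab : a ≠ b) :
    HasNearlyBalancedPath (swap a b) 1 (swap a b) := by
  obtain ⟨g, hg⟩ := isConj_iff.mp (Perm.isConj_swap hxy hab)
  simpa only [hg] using h.conj g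

theorem finRotate_of_finRotate
    (h : HasNearlyBalancedPath (swap 0 1) 1 (finRotate (n + 2))) (a : Fin (n + 2)) :
    HasNearlyBalancedPath (swap a (a + 1)) 1 (finRotate (n + 2)) := by
  have hcomm :
      Equiv.addRight a * finRotate (n + 2) * (Equiv.addRight a)⁻¹ = finRotate (n + 2) := by
    rw [mul_inv_eq_iff_eq_mul]
    ext j : 1
    simp [add_right_comm]
  have hconj := h.conj (Equiv.addRight a)
  rw [← swap_apply_apply, hcomm] at hconj
  simpa [add_comm] using hconj

theorem succ_of_finRotate (h : HasNearlyBalancedPath (swap 0 1) 1 (finRotate (n + 2)))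
    {ρ : Fin (n + 3) → Perm (Fin (n + 2))}
    (hρ : ∀ i, ρ i = finRotate (n + 2) ∨ ρ i = (finRotate (n + 2))⁻¹) :
    HasNearlyBalancedPath (swap 0 1) 1 (finRotate (n + 3) * fixing 0 (List.ofFn ρ).prod) := by
  choose a ha using exists_fixing_swap_add_one_eq (n := n)
  refine hasNearlyBalancedPath_glue_cyclic (t := fun i => swap (a i) (a i + 1)) (fun i => ?_)
    (add_left_injective 1) ha
  obtain hi | hi := hρ i
  · rw [hi]
    exact h.finRotate_of_finRotate (a i)
  · rw [hi]
    exact (h.finRotate_of_finRotate (a i)).inv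

theorem swap_succ_of_finRotate (h : HasNearlyBalancedPath (swap 0 1) 1 (finRotate (n + 2))) :
    HasNearlyBalancedPath (swap 0 1) 1 (swap 0 (1 : Fin (n + 3))) := by
  have hprod : (List.ofFn fun _ : Fin (n + 3) => (finRotate (n + 2))⁻¹).prod =
      (finRotate (n + 2))⁻¹ := by
    rw [List.ofFn_const, List.prod_replicate, pow_succ, inv_pow, finRotate_pow_self, inv_one,
      one_mul]
  have hpath := h.succ_of_finRotate (ρ := fun _ => (finRotate (n + 2))⁻¹) fun _ => .inr rfl
  rwa [hprod, ← swap_zero_one_eq_finRotate_mul_fixing] at hpath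

theorem rotated_swap_succ_of_finRotate
    (h : HasNearlyBalancedPath (swap 0 1) 1 (finRotate (n + 2))) :
    HasNearlyBalancedPath (swap 0 1) 1 (finRotate (n + 3) * swap 0 1 * finRotate (n + 3)) := by
  let ρ : Fin (n + 3) → Perm (Fin (n + 2)) := Fin.cons (finRotate (n + 2)) fun _ =>
    (finRotate (n + 2))⁻¹
  have hprod : (List.ofFn ρ).prod = finRotate (n + 2) := by
    rw [List.ofFn_cons, List.prod_cons, List.ofFn_const, List.prod_replicate, inv_pow,
      finRotate_pow_self, inv_one, mul_one]
  have hρ : ∀ i, ρ i = finRotate (n + 2) ∨ ρ i = (finRotate (n + 2))⁻¹ :=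
    Fin.cases (.inl rfl) fun _ => .inr rfl
  rw [finRotate_mul_swap_mul_finRotate, ← hprod]
  exact h.succ_of_finRotate hρ

end HasNearlyBalancedPath

end Recursion

section BaseCases

theorem hasNearlyBalancedPath_finRotate_two :
    HasNearlyBalancedPath (swap 0 1) 1 (finRotate 2) := by
  have hadj : (transpositionGraph (Fin 2)).Adj 1 (finRotate 2) :=
    ⟨swap 0 1, ⟨0, 1, by decide, rfl⟩, by decide⟩
  refine ⟨.cons hadj .nil, fun σ => ?_, ?_⟩
  · rw [Walk.support_cons, Walk.support_nil]
    decide +revert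
  · rintro _ ⟨x, y, hxy, rfl⟩
    rw [usage_cons, usage_nil]
    decide +revert

theorem hasNearlyBalancedPath_swap_four
    (h : HasNearlyBalancedPath (swap 0 1) 1 (swap 0 (1 : Fin 3))) :
    HasNearlyBalancedPath (swap 0 1) 1 (swap 0 (1 : Fin 4)) := by
  let ρ : Fin 4 → Perm (Fin 3) := ![swap 0 1, swap 1 2, swap 0 2, swap 0 1]
  have hblock : ∀ i, HasNearlyBalancedPath (ρ i) 1 (ρ i) := by
    simp only [ρ, Fin.forall_fin_succ]
    refine ⟨?_, ?_, ?_, ?_, nofun⟩ <;> exact h.swap_of_swap (by decide) (by decide)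
  have hpath := hasNearlyBalancedPath_glue_cyclic hblock (e := ![1, 2, 3, 0]) (by decide)
    (by decide)
  have hend : finRotate 4 * fixing 0 (List.ofFn ρ).prod = swap 0 1 := by decide
  rwa [hend] at hpath

theorem hasNearlyBalancedPath_disjoint_swap_four
    (h : HasNearlyBalancedPath (swap 0 1) 1 (swap 0 (1 : Fin 3))) :
    HasNearlyBalancedPath (swap 2 3) 1 (swap 0 (1 : Fin 4)) := by
  let ρ : Fin 4 → Perm (Fin 3) := ![swap 0 1, swap 1 2, swap 0 1, swap 1 2]
  have hblock : ∀ i, HasNearlyBalancedPath (ρ i) 1 (ρ i) := by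
    simp only [ρ, Fin.forall_fin_succ]
    refine ⟨?_, ?_, ?_, ?_, nofun⟩ <;> exact h.swap_of_swap (by decide) (by decide)
  have hpath := hasNearlyBalancedPath_glue hblock (t₀ := swap 1 2) (e := ![1, 2, 0, 3])
    (by decide) (by decide)
  have hend : fixing 0 (List.ofFn ρ).prod * finRotate 4 = swap 0 3 := by decide
  rw [hend] at hpath
  convert hpath.conj (finRotate 4) using 1 <;> decide

theorem hasNearlyBalancedPath_glue_five {ρ : Fin 5 → Perm (Fin 4)}
    (hblock : ∀ i, HasNearlyBalancedPath
      (![swap 0 1, swap 2 3, swap 0 1, swap 0 3, swap 2 3] i) 1 (ρ i)) :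
    HasNearlyBalancedPath (swap 0 1) 1 (finRotate 5 * fixing 0 (List.ofFn ρ).prod) :=
  hasNearlyBalancedPath_glue_cyclic hblock (e := ![1, 3, 0, 4, 2]) (by decide) (by decide)

theorem hasNearlyBalancedPath_swap_five
    (h : HasNearlyBalancedPath (swap 0 1) 1 (swap 0 (1 : Fin 3))) :
    HasNearlyBalancedPath (swap 0 1) 1 (swap 0 (1 : Fin 5)) := by
  let ρ : Fin 5 → Perm (Fin 4) := ![swap 0 1, swap 2 3, swap 2 3, swap 0 3, swap 2 3]
  have hswap : ∀ {a b : Fin 4}, a ≠ b → HasNearlyBalancedPath (swap a b) 1 (swap a b) :=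
    (hasNearlyBalancedPath_swap_four h).swap_of_swap (by decide)
  have hdisjoint : HasNearlyBalancedPath (swap 0 1) 1 (swap 2 (3 : Fin 4)) := by
    convert (hasNearlyBalancedPath_disjoint_swap_four h).conj (finRotate 4 ^ 2) using 1 <;> decide
  have hpath := hasNearlyBalancedPath_glue_five (ρ := ρ) (by
    simp only [Fin.forall_fin_succ]
    exact ⟨hswap (by decide), hswap (by decide), hdisjoint, hswap (by decide),
      hswap (by decide), nofun⟩)
  have hend : finRotate 5 * fixing 0 (List.ofFn ρ).prod = swap 0 1 := by decide
  rwa [hend] at hpath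

theorem hasNearlyBalancedPath_rotated_swap_five
    (h : HasNearlyBalancedPath (swap 0 1) 1 (swap 0 (1 : Fin 3))) :
    HasNearlyBalancedPath (swap 0 1) 1 (finRotate 5 * swap 0 1 * finRotate 5) := by
  let ρ : Fin 5 → Perm (Fin 4) := ![swap 0 1, swap 2 3, swap 0 1, swap 0 3, swap 0 1]
  have hswap : ∀ {a b : Fin 4}, a ≠ b → HasNearlyBalancedPath (swap a b) 1 (swap a b) :=
    (hasNearlyBalancedPath_swap_four h).swap_of_swap (by decide)
  have hpath := hasNearlyBalancedPath_glue_five (ρ := ρ) (by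
    simp only [Fin.forall_fin_succ]
    exact ⟨hswap (by decide), hswap (by decide), hswap (by decide), hswap (by decide),
      hasNearlyBalancedPath_disjoint_swap_four h, nofun⟩)
  have hend : finRotate 5 * fixing 0 (List.ofFn ρ).prod =
      finRotate 5 * swap 0 1 * finRotate 5 := by decide
  rwa [hend] at hpath

end BaseCases

section OddToEven

theorem prod_mul_prod_eq_one_of_commute {M : Type*} [Monoid M] {l : List M}
    (hsq : ∀ x ∈ l, x * x = 1) (hcomm : l.Pairwise Commute) : l.prod * l.prod = 1 := by
  induction l with
  | nil => exact mul_one 1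
  | cons x l ih =>
    rw [List.forall_mem_cons] at hsq
    rw [List.pairwise_cons] at hcomm
    have hx : Commute x l.prod := Commute.list_prod_right _ _ hcomm.1
    rw [List.prod_cons, hx.symm.mul_mul_mul_comm, hsq.1, ih hsq.2 hcomm.2, one_mul]

/-- The transposition `swap b (b + 1)`, with both values read modulo `n + 1`. -/
def adjacentSwap (n b : ℕ) : Perm (Fin (n + 1)) :=
  swap (Fin.ofNat (n + 1) b) (Fin.ofNat (n + 1) (b + 1))

theorem adjacentSwap_eq_swap {n b : ℕ} (hb : b < n) :
    adjacentSwap n b = swap ⟨b, by omega⟩ ⟨b + 1, by omega⟩ := by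
  have hlow : Fin.ofNat (n + 1) b = ⟨b, by omega⟩ := Fin.ext (Nat.mod_eq_of_lt (by omega))
  have hhigh : Fin.ofNat (n + 1) (b + 1) = ⟨b + 1, by omega⟩ :=
    Fin.ext (Nat.mod_eq_of_lt (by omega))
  rw [adjacentSwap, hlow, hhigh]

theorem commute_adjacentSwap {n a b : ℕ} (hab : a + 1 < b) (hb : b < n) :
    Commute (adjacentSwap n a) (adjacentSwap n b) := by
  rw [adjacentSwap_eq_swap (by omega), adjacentSwap_eq_swap hb]
  refine (Perm.disjoint_swap_swap ?_).commute
  simp only [List.nodup_cons, List.mem_cons, Fin.mk.injEq, List.not_mem_nil, or_false,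
    List.nodup_nil, not_false_eq_true, and_true]
  omega

theorem fixing_adjacentSwap_of_lt {n b : ℕ} (hb : b < n) {i : Fin (n + 2)} (hi : b + 1 < i) :
    fixing i (adjacentSwap n b) = adjacentSwap (n + 1) b := by
  have hlow : (⟨b, by omega⟩ : Fin (n + 1)).castSucc < i := Nat.lt_of_succ_lt hi
  have hhigh : (⟨b + 1, by omega⟩ : Fin (n + 1)).castSucc < i := hi
  rw [adjacentSwap_eq_swap hb, adjacentSwap_eq_swap (by omega), fixing_swap,
    Fin.succAbove_of_castSucc_lt _ _ hlow, Fin.succAbove_of_castSucc_lt _ _ hhigh]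
  rfl

theorem fixing_adjacentSwap_of_le {n b : ℕ} (hb : b < n) {i : Fin (n + 2)} (hi : i ≤ b) :
    fixing i (adjacentSwap n b) = adjacentSwap (n + 1) (b + 1) := by
  have hlow : i ≤ (⟨b, by omega⟩ : Fin (n + 1)).castSucc := hi
  have hhigh : i ≤ (⟨b + 1, by omega⟩ : Fin (n + 1)).castSucc := Nat.le_succ_of_le hi
  rw [adjacentSwap_eq_swap hb, adjacentSwap_eq_swap (by omega), fixing_swap,
    Fin.succAbove_of_le_castSucc _ _ hlow, Fin.succAbove_of_le_castSucc _ _ hhigh]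
  rfl

/-- The block `i` of `S_{2 * m + 2}` lacks the transposition `adjacentSwap (2 * m) (pairIndex m i)`.
The blocks before and after the two middle ones run through the same pairwise disjoint
transpositions, so that all the block endpoints together multiply to the identity. -/
def pairIndex (m i : ℕ) : ℕ :=
  if i < m then 2 * i + 1 else if i < m + 2 then 0 else 2 * (i - (m + 2)) + 1

theorem map_pairIndex_range (m : ℕ) : (List.range (2 * m + 2)).map (pairIndex m) =
    (List.range m).map (2 * · + 1) ++ [0, 0] ++ (List.range m).map (2 * · + 1) := by
  rw [show 2 * m + 2 = m + 2 + m by ring, List.range_add, List.range_add, List.map_append,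
    List.map_append, List.map_map, List.map_map]
  congr 1
  · congr 1
    · exact List.map_congr_left fun i hi => if_pos (List.mem_range.mp hi)
    · simp [pairIndex, List.range_succ]
  · refine List.map_congr_left fun i _ => ?_
    simp only [Function.comp_apply, pairIndex]
    grind

theorem prod_adjacentSwap_pairIndex (m : ℕ) :
    (List.ofFn fun i : Fin (2 * m + 2) => adjacentSwap (2 * m) (pairIndex m i)).prod = 1 := by
  have hlist : (List.ofFn fun i : Fin (2 * m + 2) => adjacentSwap (2 * m) (pairIndex m i)) =
      ((List.range (2 * m + 2)).map (pairIndex m)).map (adjacentSwap (2 * m)) := by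
    rw [List.ofFn_eq_map, ← List.map_coe_finRange_eq_range, List.map_map, List.map_map]
    rfl
  have hsq : ∀ b, adjacentSwap (2 * m) b * adjacentSwap (2 * m) b = 1 :=
    fun _ => swap_mul_self _ _
  rw [hlist, map_pairIndex_range, List.map_append, List.map_append, List.prod_append,
    List.prod_append]
  simp only [List.map_cons, List.map_nil, List.prod_cons, List.prod_nil, mul_one, hsq]
  refine prod_mul_prod_eq_one_of_commute (List.forall_mem_map.mpr fun b _ => hsq b) ?_
  rw [List.map_map, List.pairwise_map]
  refine List.pairwise_lt_range.imp_of_mem fun {i j} _ hj hij => ?_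
  have hjm := List.mem_range.mp hj
  exact commute_adjacentSwap (a := 2 * i + 1) (b := 2 * j + 1) (by omega) (by omega)

/-- The transposition missing from block `i` of `S_{2 * m + 2}` is the one that links the blocks
`linkIndex m i` and `linkIndex m i + 1`, or, for `linkIndex m i = 2 * m + 1`, the missing
transposition `swap 0 1` of the whole path. -/
def linkIndex (m i : ℕ) : ℕ :=
  if i < m then 2 * i + 2 else if i = m then 0 else if i = m + 1 then 2 * m + 1
    else 2 * (i - (m + 2)) + 1

theorem fixing_adjacentSwap_pairIndex {m : ℕ} (hm : 2 ≤ m) (i : Fin (2 * m + 2)) :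
    fixing i (adjacentSwap (2 * m) (pairIndex m i)) =
      if linkIndex m i < 2 * m + 1 then adjacentSwap (2 * m + 1) (linkIndex m i) else swap 0 1 := by
  have hi := i.isLt
  obtain h | h | h | h : (i : ℕ) < m ∨ (i : ℕ) = m ∨ (i : ℕ) = m + 1 ∨ m + 2 ≤ (i : ℕ) := by omega
  · have hp : pairIndex m i = 2 * i + 1 := by grind [pairIndex]
    have hl : linkIndex m i = 2 * i + 2 := by grind [linkIndex]
    rw [hp, hl, fixing_adjacentSwap_of_le (by omega) (by omega), if_pos (by omega)]
  · have hp : pairIndex m i = 0 := by grind [pairIndex]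
    have hl : linkIndex m i = 0 := by grind [linkIndex]
    rw [hp, hl, fixing_adjacentSwap_of_lt (by omega) (by omega), if_pos (by omega)]
  · have hp : pairIndex m i = 0 := by grind [pairIndex]
    have hl : linkIndex m i = 2 * m + 1 := by grind [linkIndex]
    rw [hp, hl, fixing_adjacentSwap_of_lt (by omega) (by omega), if_neg (by omega)]
    rfl
  · have hp : pairIndex m i = 2 * (i - (m + 2)) + 1 := by grind [pairIndex]
    have hl : linkIndex m i = 2 * (i - (m + 2)) + 1 := by grind [linkIndex]
    rw [hp, hl, fixing_adjacentSwap_of_lt (by omega) (by omega), if_pos (by omega)]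

theorem snoc_swap_eq_ite {n : ℕ} (t₀ : Perm (Fin (n + 1))) (j : Fin (n + 1)) :
    Fin.snoc (α := fun _ => Perm (Fin (n + 1))) (fun j => swap j.castSucc j.succ) t₀ j =
      if (j : ℕ) < n then adjacentSwap n j else t₀ := by
  cases j using Fin.lastCases with
  | last => simp
  | cast j =>
    rw [Fin.snoc_castSucc, Fin.val_castSucc, if_pos j.isLt, adjacentSwap_eq_swap j.isLt]
    rfl

theorem HasNearlyBalancedPath.finRotate_succ_of_swap {m : ℕ} (hm : 2 ≤ m)
    (h : HasNearlyBalancedPath (swap 0 1) 1 (swap 0 (1 : Fin (2 * m + 1)))) :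
    HasNearlyBalancedPath (swap 0 1) 1 (finRotate (2 * m + 2)) := by
  obtain ⟨n, rfl⟩ : ∃ n, m = n + 1 := ⟨m - 1, by omega⟩
  have hlink : ∀ i : Fin (2 * (n + 1) + 2), linkIndex (n + 1) i < 2 * (n + 1) + 2 := fun i => by
    grind [linkIndex]
  have hblock : ∀ i : Fin (2 * (n + 1) + 2), HasNearlyBalancedPath
      (adjacentSwap (2 * (n + 1)) (pairIndex (n + 1) i)) 1
      (adjacentSwap (2 * (n + 1)) (pairIndex (n + 1) i)) := fun i => by
    have hi : pairIndex (n + 1) i < 2 * (n + 1) := by grind [pairIndex]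
    rw [adjacentSwap_eq_swap hi]
    exact h.swap_of_swap (by simp) (by simp)
  have hpath : HasNearlyBalancedPath (swap 0 1) 1
      (fixing 0 (List.ofFn fun i : Fin (2 * (n + 1) + 2) =>
        adjacentSwap (2 * (n + 1)) (pairIndex (n + 1) i)).prod * finRotate (2 * (n + 1) + 2)) :=
    hasNearlyBalancedPath_glue (n := 2 * n + 1) hblock
      (e := fun i => ⟨linkIndex (n + 1) i, hlink i⟩) (fun i j hij => by grind [linkIndex])
      fun i => (fixing_adjacentSwap_pairIndex hm i).trans
        (snoc_swap_eq_ite (swap 0 1) ⟨_, hlink i⟩).symm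
  rwa [prod_adjacentSwap_pairIndex, map_one, one_mul] at hpath

end OddToEven

theorem hasNearlyBalancedPath_swap_and_rotated_swap (k : ℕ) :
    HasNearlyBalancedPath (swap 0 1) 1 (swap 0 (1 : Fin (2 * k + 3))) ∧
    HasNearlyBalancedPath (swap 0 1) 1
      (finRotate (2 * k + 3) * swap 0 1 * finRotate (2 * k + 3)) := by
  have base := hasNearlyBalancedPath_finRotate_two
  induction k with
  | zero => exact ⟨base.swap_succ_of_finRotate, base.rotated_swap_succ_of_finRotate⟩
  | succ k ih =>
    cases k with
    | zero =>
      exact ⟨hasNearlyBalancedPath_swap_five ih.1, hasNearlyBalancedPath_rotated_swap_five ih.1⟩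
    | succ k =>
      have hstep := ih.1.finRotate_succ_of_swap (m := k + 2) (by omega)
      exact ⟨hstep.swap_succ_of_finRotate, hstep.rotated_swap_succ_of_finRotate⟩

theorem cycleRange_castSucc_last (n : ℕ) : (Fin.last n).castSucc.cycleRange =
    finRotate (n + 2) * swap (Fin.last n).castSucc (Fin.last (n + 1)) := by
  have h := swap_mul_cycleRange_inv (Fin.last n)
  rw [← inv_inj, mul_inv_rev, inv_inv, inv_inv, swap_inv, Fin.succ_last, Fin.cycleRange_last] at h
  exact (eq_mul_inv_of_mul_eq h).trans (by rw [swap_inv])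

theorem swap_castSucc_last_eq_conj (n : ℕ) : swap (Fin.last n).castSucc (Fin.last (n + 1)) =
    (finRotate (n + 2))⁻¹ ^ 2 * swap 0 1 * ((finRotate (n + 2))⁻¹ ^ 2)⁻¹ := by
  have hzero : (finRotate (n + 2))⁻¹ 0 = Fin.last (n + 1) :=
    Perm.inv_eq_iff_eq.mpr finRotate_last.symm
  have hone : (finRotate (n + 2))⁻¹ 1 = 0 := by simp
  have hlast : (finRotate (n + 2))⁻¹ (Fin.last (n + 1)) = (Fin.last n).castSucc := by
    rw [Perm.inv_eq_iff_eq, finRotate_apply, Fin.coeSucc_eq_succ, Fin.succ_last]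
  rw [← swap_apply_apply, pow_two, Perm.mul_apply, Perm.mul_apply, hzero, hone, hlast, hzero]

theorem HasNearlyBalancedPath.cycleRange_finRotate_inv {n : ℕ}
    (h : HasNearlyBalancedPath (swap 0 1) 1
      (finRotate (n + 2) * swap 0 1 * finRotate (n + 2))) :
    HasNearlyBalancedPath (swap (Fin.last n).castSucc (Fin.last (n + 1)))
      (Fin.last n).castSucc.cycleRange (finRotate (n + 2))⁻¹ := by
  convert (h.inv.conj ((finRotate (n + 2))⁻¹ ^ 2)).mul_right (Fin.last n).castSucc.cycleRange
    using 1
  · exact swap_castSucc_last_eq_conj n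
  · rw [one_mul]
  · rw [cycleRange_castSucc_last, swap_castSucc_last_eq_conj]
    group

section Sequences

variable {n N : ℕ}

/-- `HasNearlyBalancedPath` for the explicit list `X` of the permutations visited. As `s + 1` wraps
around in `Fin (N + 1)`, the step from the last to the first permutation is excluded by `s < N`. -/
def IsNearlyBalancedSequence (t : Perm (Fin n)) (X : Fin (N + 1) → Perm (Fin n)) : Prop :=
  Function.Bijective X ∧
  (∀ s : Fin (N + 1), (s : ℕ) < N → ∃ i j, i ≠ j ∧ X (s + 1) = swap i j * X s) ∧
  ∀ i j, i ≠ j → (Finset.univ.filter fun s : Fin (N + 1) =>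
    (s : ℕ) < N ∧ X (s + 1) = swap i j * X s).card + (if swap i j = t then 1 else 0) =
      2 * Nat.factorial (n - 2)

theorem HasNearlyBalancedPath.exists_sequence (hN : N + 1 = Nat.factorial n)
    {t σ τ : Perm (Fin n)} (h : HasNearlyBalancedPath t σ τ) :
    ∃ X : Fin (N + 1) → Perm (Fin n),
      IsNearlyBalancedSequence t X ∧ X 0 = σ ∧ X (Fin.last N) = τ := by
  obtain ⟨p, hp, husage⟩ := h
  have hlength : p.length = N := by
    rw [hp.length_eq, Fintype.card_perm, Fintype.card_fin, ← hN, Nat.add_sub_cancel]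
  subst hlength
  refine ⟨fun s => p.getVert s, ⟨?_, fun s hs => ?_, fun i j hij => ?_⟩, by simp, by simp⟩
  · exact ((finCongr p.length_support.symm).trans hp.getVertEquiv).bijective
  · obtain ⟨_, ⟨i, j, hij, rfl⟩, h⟩ := p.adj_getVert_succ hs
    have hsucc : ((s + 1 : Fin _) : ℕ) = s + 1 := Fin.val_add_one_of_lt (Fin.lt_def.mpr hs)
    exact ⟨i, j, hij, by simpa only [hsucc] using h⟩
  · have hcard := husage _ ⟨i, j, hij, rfl⟩
    rw [usage_eq_card, Finset.card_filter, Finset.sum_range, Fintype.card_fin] at hcard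
    rw [Finset.card_filter, Fin.sum_univ_castSucc, ← hcard]
    simp [Fin.coeSucc_eq_succ]

theorem IsNearlyBalancedSequence.isBalancedCyclicGrayCode {a b : Fin n}
    {X : Fin (N + 1) → Perm (Fin n)} (hX : IsNearlyBalancedSequence (swap a b) X)
    (hN : N + 1 = Nat.factorial n) (hab : a ≠ b) (hclose : X 0 = swap a b * X (Fin.last N)) :
    IsBalancedCyclicGrayCode n N X := by
  obtain ⟨hbij, hstep, hcard⟩ := hX
  refine ⟨hN, hbij, fun s => ?_, fun i j hij => ?_⟩
  · cases s using Fin.lastCases with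
    | last => exact ⟨a, b, hab, by rwa [Fin.last_add_one]⟩
    | cast s => exact hstep _ s.isLt
  · rw [← hcard i j hij, Finset.card_filter, Finset.card_filter, Fin.sum_univ_castSucc,
      Fin.sum_univ_castSucc]
    simp [hclose, eq_comm]

end Sequences

end

/-- Let `n ≥ 3` be odd. Then there are a balanced cyclic Gray code `G` for
`S_n` under all transpositions from the identity word `12⋯(n−1)n` to `12⋯n(n−1)` with
closing transposition `(n−1, n)`, and a (non-cyclic) Gray code `H` for `S_n` from the word
`23⋯(n−1)1n` (the cycle `Fin.cycleRange ⟨n−2⟩`) to the word `n12⋯(n−1)` (the inverse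
rotation `(finRotate n)⁻¹`), such that every transposition on `[n]` is applied the same
number of times in `H` as in `G` (not counting the closing step of `G`). -/
theorem same_transpositions_gray_codes (n : ℕ) (hn : 3 ≤ n) (hodd : Odd n) :
    ∃ (N : ℕ) (G H : Fin (N + 1) → Equiv.Perm (Fin n)),
      IsBalancedCyclicGrayCode n N G ∧
      G 0 = 1 ∧
      G (Fin.last N) = Equiv.swap ⟨n - 2, by omega⟩ ⟨n - 1, by omega⟩ ∧
      G 0 = Equiv.swap ⟨n - 2, by omega⟩ ⟨n - 1, by omega⟩ * G (Fin.last N) ∧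
      Function.Bijective H ∧
      H 0 = Fin.cycleRange ⟨n - 2, by omega⟩ ∧
      H (Fin.last N) = (finRotate n)⁻¹ ∧
      (∀ s : Fin (N + 1), (s : ℕ) < N →
        ∃ i j : Fin n, i ≠ j ∧ H (s + 1) = Equiv.swap i j * H s) ∧
      (∀ i j : Fin n, i ≠ j →
        (Finset.univ.filter (fun s : Fin (N + 1) =>
          (s : ℕ) < N ∧ H (s + 1) = Equiv.swap i j * H s)).card
        = (Finset.univ.filter (fun s : Fin (N + 1) =>
          (s : ℕ) < N ∧ G (s + 1) = Equiv.swap i j * G s)).card) := by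
  obtain ⟨k, rfl⟩ : ∃ k, n = 2 * k + 3 := by
    obtain ⟨m, rfl⟩ := hodd
    exact ⟨m - 1, by omega⟩
  obtain ⟨N, hN⟩ : ∃ N, N + 1 = (2 * k + 3).factorial :=
    ⟨_, Nat.succ_pred_eq_of_pos (Nat.factorial_pos _)⟩
  obtain ⟨hpathG, hpathH⟩ := hasNearlyBalancedPath_swap_and_rotated_swap k
  have hne : (⟨2 * k + 3 - 2, by omega⟩ : Fin (2 * k + 3)) ≠ ⟨2 * k + 3 - 1, by omega⟩ := by
    simp [Fin.ext_iff]
  obtain ⟨G, hG, hG_zero, hG_last⟩ := (hpathG.swap_of_swap (by simp) hne).exists_sequence hN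
  obtain ⟨H, hH, hH_zero, hH_last⟩ := hpathH.cycleRange_finRotate_inv.exists_sequence hN
  have hclose : G 0 = Equiv.swap ⟨2 * k + 3 - 2, by omega⟩ ⟨2 * k + 3 - 1, by omega⟩ *
      G (Fin.last N) := by
    rw [hG_zero, hG_last, Equiv.swap_mul_self]
  refine ⟨N, G, H, hG.isBalancedCyclicGrayCode hN hne hclose, hG_zero, hG_last, hclose, hH.1,
    hH_zero, hH_last, hH.2.1, fun i j hij => ?_⟩
  exact Nat.add_right_cancel ((hH.2.2 i j hij).trans (hG.2.2 i j hij).symm)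
end

section
/- For every even n ≥ 2, there exists a balanced cyclic Gray code for S_n under all transpositions from the word 12⋯n to the word n23⋯(n−1)1, whose closing transposition is (1, n). -/
/-!
Fix a position `p` of `A`, `3 ≤ |A|`, and sort the permutations of `A` by their value at `p`. The
block with value `v` is a coset of the symmetric group on `A.erase v`, so by induction it carries a
closed walk using each transposition of `A.erase v` equally often, and a closed walk can be opened
at any occurrence of any of its letters. Summed over all `v ∈ A`, these blocks use every
transposition of `A` equally often, as each pair avoids `|A| - 2` values. It remains to join the
blocks into one closed walk without changing the multiset of letters: the letters removed to open
the blocks must be exactly those that link them. A walk that is at value `v` before its removed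
letter `(x y)` can absorb the two blocks `x` and `y`, with removed letters `(v y)` and `(v x)`, or
the three blocks `x`, `y`, `z`, with removed letters `(y z)`, `(v z)` and `(v x)`. Starting from a
single block, pairs suffice when `|A|` is odd; when `|A|` is even one triple comes first.
-/

namespace GrayCode

section CayleyPath

variable {G : Type*} [Group G]

/-- Paths in the left Cayley graph of `G`, remembered only up to what a balanced Gray code has to
account for: `CayleyPath g h V L` says that some walk from `g` to `h`, each step of which multiplies
on the left by a letter, visits the multiset `V` of vertices (both ends included) and uses the
multiset `L` of letters. -/
inductive CayleyPath : G → G → Multiset G → Multiset G → Prop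
  | nil (g : G) : CayleyPath g g {g} 0
  | cons {g h : G} {V L : Multiset G} (t : G) :
      CayleyPath (t * g) h V L → CayleyPath g h (g ::ₘ V) (t ::ₘ L)

namespace CayleyPath

variable {g h : G} {V L : Multiset G}

theorem start_mem (P : CayleyPath g h V L) : g ∈ V := by
  cases P <;> simp

theorem end_mem (P : CayleyPath g h V L) : h ∈ V := by
  induction P with
  | nil => simp
  | cons _ _ ih => exact Multiset.mem_cons_of_mem ih

theorem append {t k : G} {V' L' : Multiset G} (P : CayleyPath g h V L)
    (Q : CayleyPath (t * h) k V' L') : CayleyPath g k (V + V') (t ::ₘ (L + L')) := by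
  induction P with
  | nil g => simpa using Q.cons t
  | cons s _ ih =>
    rw [Multiset.cons_add, Multiset.cons_add, Multiset.cons_swap]
    exact (ih Q).cons s

theorem mul_right (P : CayleyPath g h V L) (a : G) :
    CayleyPath (g * a) (h * a) (V.map (· * a)) L := by
  induction P with
  | nil g => simpa using nil (g * a)
  | cons t _ ih =>
    rw [Multiset.map_cons]
    exact cons t (by rwa [← mul_assoc])

theorem exists_split {t : G} (P : CayleyPath g h V L) (ht : t ∈ L) :
    ∃ k V₁ V₂ L₁ L₂, CayleyPath g k V₁ L₁ ∧ CayleyPath (t * k) h V₂ L₂ ∧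
      V₁ + V₂ = V ∧ t ::ₘ (L₁ + L₂) = L := by
  induction P with
  | nil g => simp at ht
  | @cons g h V L s P ih =>
    rcases Multiset.mem_cons.1 ht with rfl | ht
    · exact ⟨g, {g}, V, 0, L, nil g, P, by simp, by simp⟩
    · obtain ⟨k, V₁, V₂, L₁, L₂, P₁, P₂, rfl, rfl⟩ := ih ht
      exact ⟨k, g ::ₘ V₁, V₂, s ::ₘ L₁, L₂, P₁.cons s, P₂, by simp,
        by rw [Multiset.cons_add, Multiset.cons_swap]⟩

theorem exists_enumeration (P : CayleyPath g h V L) :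
    ∃ (N : ℕ) (π : Fin (N + 1) → G), π 0 = g ∧ π (Fin.last N) = h ∧
      Finset.univ.val.map π = V ∧
      Finset.univ.val.map (fun i : Fin N => π i.succ * (π i.castSucc)⁻¹) = L := by
  induction P with
  | nil g => exact ⟨0, fun _ => g, rfl, rfl, rfl, rfl⟩
  | @cons g h V L t _ ih =>
    obtain ⟨N, π, h0, hlast, hV, hL⟩ := ih
    refine ⟨N + 1, Fin.cons g π, rfl, hlast, ?_, ?_⟩
    · rw [← hV]
      simp [Fin.univ_val_map]
    · rw [← hL, Fin.univ_val_map, List.ofFn_succ]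
      simp [Fin.univ_val_map, h0]

end CayleyPath

/-- A closed walk in the left Cayley graph of `G` visiting the multiset `V` of vertices and using
the multiset `L` of letters, closing letter included. -/
def CayleyCycle (V L : Multiset G) : Prop :=
  ∃ t L' h, L = t ::ₘ L' ∧ CayleyPath (t * h) h V L'

theorem CayleyPath.cayleyCycle {g h t : G} {V L : Multiset G} (P : CayleyPath g h V L)
    (ht : t * h = g) : CayleyCycle V (t ::ₘ L) :=
  ⟨t, L, h, rfl, ht ▸ P⟩

theorem CayleyCycle.exists_path_erase [DecidableEq G] {V L : Multiset G} {t : G}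
    (C : CayleyCycle V L) (ht : t ∈ L) : ∃ h, CayleyPath (t * h) h V (L.erase t) := by
  obtain ⟨s, L, h, rfl, P⟩ := C
  rcases Multiset.mem_cons.1 ht with rfl | ht
  · exact ⟨h, by rwa [Multiset.erase_cons_head]⟩
  · obtain ⟨k, V₁, V₂, L₁, L₂, P₁, P₂, rfl, rfl⟩ := P.exists_split ht
    refine ⟨k, ?_⟩
    rw [Multiset.cons_swap, Multiset.erase_cons_head, add_comm V₁, add_comm L₁]
    exact P₂.append P₁

theorem CayleyCycle.exists_path_from [DecidableEq G] {V L : Multiset G} {t : G}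
    (C : CayleyCycle V L) (ht : t ∈ L) (a : G) :
    ∃ b ∈ V, CayleyPath a (t⁻¹ * a) (V.map (· * (b⁻¹ * a))) (L.erase t) := by
  obtain ⟨h, P⟩ := C.exists_path_erase ht
  refine ⟨t * h, P.start_mem, ?_⟩
  simpa [mul_assoc] using P.mul_right ((t * h)⁻¹ * a)

theorem map_univ_add_one_mul_inv {N : ℕ} (π : Fin (N + 1) → G) :
    Finset.univ.val.map (fun s => π (s + 1) * (π s)⁻¹) =
      π 0 * (π (Fin.last N))⁻¹ ::ₘ
        Finset.univ.val.map (fun i : Fin N => π i.succ * (π i.castSucc)⁻¹) := by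
  simp [Fin.univ_castSuccEmb, Function.comp_def]

end CayleyPath

open Equiv Equiv.Perm

section Swap

variable {α : Type*} [DecidableEq α] {v x y z : α}

theorem swap_hexagon (hvx : v ≠ x) (hvy : v ≠ y) (hxy : x ≠ y) (g : Perm α) :
    swap v y * (swap v x * (swap x y * (swap v y * (swap v x * g)))) = swap x y * g := by
  ext u
  simp only [Perm.mul_apply, swap_apply_def]
  grind

theorem swap_octagon (hvx : v ≠ x) (hvy : v ≠ y) (hvz : v ≠ z) (hxy : x ≠ y) (hxz : x ≠ z)
    (hyz : y ≠ z) (g : Perm α) :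
    swap v z * (swap v x * (swap y z * (swap v z * (swap x y * (swap y z * (swap v x * g)))))) =
      swap x y * g := by
  ext u
  simp only [Perm.mul_apply]
  generalize g u = u
  simp only [swap_apply_def]
  grind

end Swap

section Perm

variable {α : Type*} [DecidableEq α] [Fintype α]

/-- The symmetric group on `A`, as a set of permutations of the ambient type. -/
def permsOn (A : Finset α) : Finset (Perm α) :=
  {σ | σ.support ⊆ A}

/-- The transpositions exchanging two elements of `A`; `t` is one when its support is a pair
contained in `A`. -/
def transpositionsOn (A : Finset α) : Finset (Perm α) :=
  {t | t.support ∈ A.powersetCard 2}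

/-- The permutations of `A` that have the value `v` at position `p`: for `p, v ∈ A`, a right
coset of `permsOn (A.erase v)`. -/
def valueBlock (A : Finset α) (p v : α) : Finset (Perm α) :=
  {σ ∈ permsOn A | σ p = v}

variable {A B : Finset α} {p v x y z i j : α} {k : ℕ} {σ τ h g : Perm α}

theorem mem_permsOn : σ ∈ permsOn A ↔ σ.support ⊆ A := by
  simp [permsOn]

theorem mem_transpositionsOn : σ ∈ transpositionsOn A ↔ σ.support ⊆ A ∧ σ.support.card = 2 := by
  simp [transpositionsOn, Finset.mem_powersetCard]

theorem mem_valueBlock : σ ∈ valueBlock A p v ↔ σ.support ⊆ A ∧ σ p = v := by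
  simp [valueBlock, mem_permsOn]

theorem apply_mem_of_mem_permsOn (hσ : σ ∈ permsOn A) (hp : p ∈ A) : σ p ∈ A := by
  by_cases hσp : σ p = p
  · rwa [hσp]
  · exact mem_permsOn.1 hσ (apply_mem_support.2 (mem_support.2 hσp))

theorem permsOn_univ : permsOn (Finset.univ : Finset α) = Finset.univ := by
  ext; simp [mem_permsOn]

theorem swap_mem_transpositionsOn (hij : i ≠ j) (hi : i ∈ A) (hj : j ∈ A) :
    swap i j ∈ transpositionsOn A := by
  simp [mem_transpositionsOn, support_swap hij, Finset.insert_subset_iff, hi, hj, hij]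

theorem swap_mem_nsmul_transpositionsOn (hk : k ≠ 0) (hij : i ≠ j) (hi : i ∈ A) (hj : j ∈ A) :
    swap i j ∈ k • (transpositionsOn A).val :=
  Multiset.mem_nsmul.2 ⟨hk, swap_mem_transpositionsOn hij hi hj⟩

theorem permsOn_erase : permsOn (A.erase v) = valueBlock A v v := by
  ext σ
  simp [mem_permsOn, mem_valueBlock, Finset.subset_erase]

theorem mul_mem_valueBlock (hσ : σ ∈ valueBlock A v x) (hτ : τ ∈ valueBlock A p v) :
    σ * τ ∈ valueBlock A p x := by
  obtain ⟨hσA, rfl⟩ := mem_valueBlock.1 hσ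
  obtain ⟨hτA, rfl⟩ := mem_valueBlock.1 hτ
  exact mem_valueBlock.2
    ⟨(support_mul_le σ τ).trans (Finset.union_subset hσA hτA), mul_apply σ τ p⟩

theorem inv_mem_valueBlock (hσ : σ ∈ valueBlock A p v) : σ⁻¹ ∈ valueBlock A v p := by
  obtain ⟨hσA, rfl⟩ := mem_valueBlock.1 hσ
  simpa [mem_valueBlock] using hσA

theorem swap_mul_mem_valueBlock (hσ : σ ∈ valueBlock A p v) (hij : i ≠ j) (hi : i ∈ A)
    (hj : j ∈ A) : swap i j * σ ∈ valueBlock A p (swap i j v) :=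
  mul_mem_valueBlock (mem_valueBlock.2
    ⟨(mem_transpositionsOn.1 (swap_mem_transpositionsOn hij hi hj)).1, rfl⟩) hσ

theorem map_mul_right_permsOn_erase {a : Perm α} (ha : a ∈ valueBlock A p v) :
    (permsOn (A.erase v)).val.map (· * a) = (valueBlock A p v).val := by
  rw [permsOn_erase]
  refine (((Finset.nodup _).map (mul_left_injective a)).ext (Finset.nodup _)).2 fun σ => ?_
  simp only [Multiset.mem_map, Finset.mem_val]
  constructor
  · rintro ⟨τ, hτ, rfl⟩
    exact mul_mem_valueBlock hτ ha
  · intro hσ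
    exact ⟨σ * a⁻¹, mul_mem_valueBlock hσ (inv_mem_valueBlock ha), inv_mul_cancel_right σ a⟩

theorem CayleyCycle.path_valueBlock {L : Multiset (Perm α)} {t a : Perm α}
    (C : CayleyCycle (permsOn (A.erase v)).val L) (ht : t ∈ L) (ha : a ∈ valueBlock A p v) :
    CayleyPath a (t⁻¹ * a) (valueBlock A p v).val (L.erase t) := by
  obtain ⟨b, hb, P⟩ := C.exists_path_from ht a
  rw [Finset.mem_val, permsOn_erase] at hb
  rwa [map_mul_right_permsOn_erase (mul_mem_valueBlock (inv_mem_valueBlock hb) ha)] at P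

theorem sum_valueBlock (hp : p ∈ A) :
    ∑ v ∈ A, (valueBlock A p v).val = (permsOn A).val := by
  ext σ
  simp only [Multiset.count_sum', Multiset.count_eq_of_nodup (Finset.nodup _), Finset.mem_val,
    mem_valueBlock]
  by_cases hσ : σ ∈ permsOn A
  · simp [hσ, mem_permsOn.1 hσ, apply_mem_of_mem_permsOn hσ hp]
  · simp [hσ, mem_permsOn.not.1 hσ]

theorem sum_transpositionsOn_erase :
    ∑ v ∈ A, (transpositionsOn (A.erase v)).val = (A.card - 2) • (transpositionsOn A).val := by
  ext t
  simp only [Multiset.count_sum', Multiset.count_nsmul,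
    Multiset.count_eq_of_nodup (Finset.nodup _), Finset.mem_val, mem_transpositionsOn,
    Finset.subset_erase]
  by_cases ht : t.support ⊆ A ∧ t.support.card = 2
  · have hcard : (A \ t.support).card = A.card - 2 := by
      rw [Finset.card_sdiff_of_subset ht.1, ht.2]
    simpa [ht, Finset.sdiff_eq_filter] using hcard
  · rw [if_neg ht, mul_zero]
    exact Finset.sum_eq_zero fun v _ => if_neg fun h => ht ⟨h.1.1, h.2⟩

theorem transpositionsOn_pair (hij : i ≠ j) : transpositionsOn {i, j} = {swap i j} := by
  ext t
  rw [Finset.mem_singleton]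
  constructor
  · intro ht
    obtain ⟨hsub, hcard⟩ := mem_transpositionsOn.1 ht
    obtain ⟨a, b, hab, rfl⟩ := card_support_eq_two.1 hcard
    rw [support_swap hab] at hsub
    have ha : a = i ∨ a = j := by simpa using hsub (Finset.mem_insert_self a {b})
    have hb : b = i ∨ b = j := by
      simpa using hsub (Finset.mem_insert_of_mem (Finset.mem_singleton_self b))
    rcases ha with rfl | rfl <;> rcases hb with rfl | rfl
    · contradiction
    · rfl
    · exact swap_comm _ _
    · contradiction
  · rintro rfl
    exact swap_mem_transpositionsOn hij (by simp) (by simp)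

theorem permsOn_pair (hij : i ≠ j) : permsOn {i, j} = {1, swap i j} := by
  ext σ
  rw [Finset.mem_insert, ← transpositionsOn_pair hij, mem_permsOn, mem_transpositionsOn]
  rcases eq_or_ne σ 1 with rfl | hσ
  · simp
  · have hcard := two_le_card_support_of_ne_one hσ
    simp only [hσ, false_or, iff_self_and]
    intro hsub
    exact le_antisymm ((Finset.card_le_card hsub).trans Finset.card_le_two) hcard

/-- A closed Gray code for the permutations of `A` that applies every transposition of `A`
exactly `k` times. -/
def HasBalancedCycle (A : Finset α) (k : ℕ) : Prop :=
  CayleyCycle (permsOn A).val (k • (transpositionsOn A).val)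

theorem hasBalancedCycle_of_card_eq_two (hA : A.card = 2) : HasBalancedCycle A 2 := by
  obtain ⟨i, j, hij, rfl⟩ := Finset.card_eq_two.1 hA
  have P : CayleyPath 1 (swap i j) (1 ::ₘ {swap i j}) {swap i j} := by
    refine .cons (swap i j) ?_
    rw [mul_one]
    exact .nil _
  have hne : (1 : Perm α) ≠ swap i j := fun h => hij (swap_eq_one_iff.1 h.symm)
  have C := P.cayleyCycle (swap_mul_self i j)
  rw [HasBalancedCycle, transpositionsOn_pair hij, permsOn_pair hij, two_nsmul]
  rwa [Finset.insert_val_of_notMem (by simpa using hne)]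

/-- The closed walks through the value blocks `valueBlock A p v`, `v ∈ B`, each applying every
transposition of `A.erase v` exactly `k` times, can be joined into one closed walk without changing
how often each transposition is applied. -/
def BlocksMerged (A : Finset α) (p : α) (k : ℕ) (B : Finset α) : Prop :=
  CayleyCycle (∑ v ∈ B, (valueBlock A p v).val) (∑ v ∈ B, k • (transpositionsOn (A.erase v)).val)

theorem BlocksMerged.singleton (H : HasBalancedCycle (A.erase p) k) : BlocksMerged A p k {p} := by
  simpa [BlocksMerged, HasBalancedCycle, permsOn_erase] using H

theorem BlocksMerged.hasBalancedCycle (hp : p ∈ A) (M : BlocksMerged A p k A) :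
    HasBalancedCycle A (k * (A.card - 2)) := by
  rwa [BlocksMerged, sum_valueBlock hp, ← Finset.smul_sum, sum_transpositionsOn_erase,
    ← mul_nsmul'] at M

theorem mem_sum_valueBlock (hp : p ∈ A) (hσ : σ ∈ ∑ v ∈ B, (valueBlock A p v).val) :
    ∃ v ∈ A ∩ B, σ ∈ valueBlock A p v := by
  obtain ⟨v, hvB, hσv⟩ := Multiset.mem_sum.1 hσ
  obtain ⟨hσA, rfl⟩ := mem_valueBlock.1 hσv
  exact ⟨σ p, Finset.mem_inter.2 ⟨apply_mem_of_mem_permsOn (mem_permsOn.2 hσA) hp, hvB⟩, hσv⟩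

theorem BlocksMerged.exists_path (M : BlocksMerged A p k B) (hk : k ≠ 0) (hp : p ∈ A)
    (hx : x ∈ A \ B) (hy : y ∈ A \ B) (hxy : x ≠ y) :
    ∃ v ∈ A ∩ B, ∃ h ∈ valueBlock A p v, ∃ L,
      CayleyPath (swap x y * h) h (∑ v ∈ B, (valueBlock A p v).val) L ∧
      swap x y ::ₘ L = ∑ v ∈ B, k • (transpositionsOn (A.erase v)).val := by
  have hmem : swap x y ∈ ∑ v ∈ B, k • (transpositionsOn (A.erase v)).val := by
    have ⟨_, _, g, _, P⟩ := M
    obtain ⟨u, hu, -⟩ := mem_sum_valueBlock hp P.end_mem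
    rw [Finset.mem_sdiff] at hx hy
    have huB := Finset.mem_of_mem_inter_right hu
    have hxu : x ≠ u := (ne_of_mem_of_not_mem huB hx.2).symm
    have hyu : y ≠ u := (ne_of_mem_of_not_mem huB hy.2).symm
    exact Multiset.mem_sum.2 ⟨u, huB, swap_mem_nsmul_transpositionsOn hk hxy
      (Finset.mem_erase.2 ⟨hxu, hx.1⟩) (Finset.mem_erase.2 ⟨hyu, hy.1⟩)⟩
  obtain ⟨h, P⟩ := CayleyCycle.exists_path_erase M hmem
  obtain ⟨v, hv, hh⟩ := mem_sum_valueBlock hp P.end_mem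
  exact ⟨v, hv, h, hh, _, P, Multiset.cons_erase hmem⟩

theorem CayleyPath.append_valueBlock {V L : Multiset (Perm α)} (P : CayleyPath g h V L)
    (H : HasBalancedCycle (A.erase x) k) (hk : k ≠ 0) (hh : h ∈ valueBlock A p v)
    (hx : x ∈ A) (hv : v ∈ A.erase x) (hi : i ∈ A.erase x) (hj : j ∈ A.erase x) (hij : i ≠ j) :
    swap i j * (swap v x * h) ∈ valueBlock A p x ∧ ∃ K,
      CayleyPath g (swap i j * (swap v x * h)) (V + (valueBlock A p x).val)
        (swap v x ::ₘ (L + K)) ∧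
      swap i j ::ₘ K = k • (transpositionsOn (A.erase x)).val := by
  have hstart : swap v x * h ∈ valueBlock A p x := by
    simpa using
      swap_mul_mem_valueBlock hh (Finset.ne_of_mem_erase hv) (Finset.mem_of_mem_erase hv) hx
  have hmem := swap_mem_nsmul_transpositionsOn hk hij hi hj
  have Q := CayleyCycle.path_valueBlock H hmem hstart
  rw [swap_inv] at Q
  exact ⟨Q.end_mem, _, P.append Q, Multiset.cons_erase hmem⟩

theorem BlocksMerged.insert_pair (M : BlocksMerged A p k B)
    (H : ∀ v ∈ A, HasBalancedCycle (A.erase v) k) (hk : k ≠ 0) (hp : p ∈ A)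
    (hx : x ∈ A \ B) (hy : y ∈ A \ B) (hxy : x ≠ y) :
    BlocksMerged A p k (insert y (insert x B)) := by
  obtain ⟨v, hv, h, hh, L, P, hL⟩ := M.exists_path hk hp hx hy hxy
  obtain ⟨hvA, hvB⟩ := Finset.mem_inter.1 hv
  obtain ⟨hxA, hxB⟩ := Finset.mem_sdiff.1 hx
  obtain ⟨hyA, hyB⟩ := Finset.mem_sdiff.1 hy
  have hvx : v ≠ x := ne_of_mem_of_not_mem hvB hxB
  have hvy : v ≠ y := ne_of_mem_of_not_mem hvB hyB
  obtain ⟨hhx, Kx, Px, hKx⟩ := P.append_valueBlock (i := v) (j := y) (H x hxA) hk hh hxA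
    (by simp [*]) (by simp [*]) (by simp [*, hxy.symm]) hvy
  obtain ⟨-, Ky, Py, hKy⟩ := Px.append_valueBlock (i := v) (j := x) (H y hyA) hk hhx hyA
    (by simp [*]) (by simp [*]) (by simp [*]) hvx
  have C := Py.cayleyCycle (swap_hexagon hvx hvy hxy h)
  rw [BlocksMerged, Finset.sum_insert (by simp [hxy.symm, hyB]), Finset.sum_insert hxB,
    Finset.sum_insert (by simp [hxy.symm, hyB]), Finset.sum_insert hxB, ← hL, ← hKx, ← hKy]
  convert C using 1
  · abel
  · simp only [← Multiset.singleton_add]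
    abel

theorem BlocksMerged.insert_triple (M : BlocksMerged A p k B)
    (H : ∀ v ∈ A, HasBalancedCycle (A.erase v) k) (hk : k ≠ 0) (hp : p ∈ A)
    (hx : x ∈ A \ B) (hy : y ∈ A \ B) (hz : z ∈ A \ B) (hxy : x ≠ y) (hxz : x ≠ z)
    (hyz : y ≠ z) : BlocksMerged A p k (insert z (insert y (insert x B))) := by
  obtain ⟨v, hv, h, hh, L, P, hL⟩ := M.exists_path hk hp hx hy hxy
  obtain ⟨hvA, hvB⟩ := Finset.mem_inter.1 hv
  obtain ⟨hxA, hxB⟩ := Finset.mem_sdiff.1 hx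
  obtain ⟨hyA, hyB⟩ := Finset.mem_sdiff.1 hy
  obtain ⟨hzA, hzB⟩ := Finset.mem_sdiff.1 hz
  have hvx : v ≠ x := ne_of_mem_of_not_mem hvB hxB
  have hvy : v ≠ y := ne_of_mem_of_not_mem hvB hyB
  have hvz : v ≠ z := ne_of_mem_of_not_mem hvB hzB
  obtain ⟨hhx, Kx, Px, hKx⟩ := P.append_valueBlock (i := y) (j := z) (H x hxA) hk hh hxA
    (by simp [*]) (by simp [*, hxy.symm]) (by simp [*, hxz.symm]) hyz
  obtain ⟨hhy, Ky, Py, hKy⟩ := Px.append_valueBlock (i := v) (j := z) (H y hyA) hk hhx hyA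
    (by simp [*]) (by simp [*]) (by simp [*, hyz.symm]) hvz
  obtain ⟨-, Kz, Pz, hKz⟩ := Py.append_valueBlock (i := v) (j := x) (H z hzA) hk hhy hzA
    (by simp [*]) (by simp [*]) (by simp [*]) hvx
  have C := Pz.cayleyCycle (swap_octagon hvx hvy hvz hxy hxz hyz h)
  have hyxB : y ∉ insert x B := by simp [hxy.symm, hyB]
  have hzyxB : z ∉ insert y (insert x B) := by simp [hxz.symm, hyz.symm, hzB]
  rw [BlocksMerged, Finset.sum_insert hzyxB, Finset.sum_insert hyxB, Finset.sum_insert hxB,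
    Finset.sum_insert hzyxB, Finset.sum_insert hyxB, Finset.sum_insert hxB,
    ← hL, ← hKx, ← hKy, ← hKz]
  convert C using 1
  · abel
  · simp only [← Multiset.singleton_add]
    abel

theorem BlocksMerged.of_card_eq_add (M : BlocksMerged A p k B)
    (H : ∀ v ∈ A, HasBalancedCycle (A.erase v) k) (hk : k ≠ 0) (hp : p ∈ A) (hBA : B ⊆ A)
    {r : ℕ} (hr : A.card = B.card + 2 * r) : BlocksMerged A p k A := by
  induction r generalizing B with
  | zero => rwa [Finset.eq_of_subset_of_card_le hBA hr.le] at M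
  | succ r ih =>
    have hcard := Finset.card_sdiff_of_subset hBA
    obtain ⟨x, hx, y, hy, hxy⟩ := Finset.one_lt_card.1 (show 1 < (A \ B).card by omega)
    refine ih (M.insert_pair H hk hp hx hy hxy) ?_ ?_
    · simp_all [Finset.insert_subset_iff]
    · rw [Finset.mem_sdiff] at hx hy
      rw [Finset.card_insert_of_notMem (by simp [hy, hxy.symm]), Finset.card_insert_of_notMem hx.2]
      omega

theorem HasBalancedCycle.of_erase (H : ∀ v ∈ A, HasBalancedCycle (A.erase v) k) (hk : k ≠ 0)
    (hA : 3 ≤ A.card) : HasBalancedCycle A (k * (A.card - 2)) := by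
  obtain ⟨p, hp⟩ : A.Nonempty := Finset.card_pos.1 (by omega)
  refine BlocksMerged.hasBalancedCycle hp ?_
  have M := BlocksMerged.singleton (H p hp)
  rcases Nat.even_or_odd' A.card with ⟨r, hr | hr⟩
  · have hcard : (A \ {p}).card = A.card - 1 := by
      rw [← Finset.erase_eq, Finset.card_erase_of_mem hp]
    obtain ⟨x, y, z, hx, hy, hz, hxy, hxz, hyz⟩ :=
      Finset.two_lt_card_iff.1 (show 2 < (A \ {p}).card by omega)
    have hfour : ({z, y, x, p} : Finset α).card = 4 := by
      simp_all [hxy.symm, hxz.symm, hyz.symm]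
    have M₄ := M.insert_triple H hk hp hx hy hz hxy hxz hyz
    refine M₄.of_card_eq_add H hk hp (r := r - 2) ?_ ?_
    · simp_all [Finset.insert_subset_iff]
    · omega
  · refine M.of_card_eq_add H hk hp (r := r) (by simpa) ?_
    rw [Finset.card_singleton]
    omega

theorem hasBalancedCycle_of_card_eq_add_two {m : ℕ} (hA : A.card = m + 2) :
    HasBalancedCycle A (2 * m.factorial) := by
  induction m generalizing A with
  | zero => exact hasBalancedCycle_of_card_eq_two hA
  | succ m ih =>
    have H := HasBalancedCycle.of_erase (fun v hv => ih (A := A.erase v) (by simp [*]))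
      (by positivity) (by omega)
    rwa [hA, Nat.add_sub_cancel, mul_assoc, mul_comm m.factorial, ← Nat.factorial_succ] at H

theorem isBalancedCyclicGrayCode_of_map {n N : ℕ} {π : Fin (N + 1) → Perm (Fin n)}
    (hV : Finset.univ.val.map π = Finset.univ.val)
    (hL : Finset.univ.val.map (fun s => π (s + 1) * (π s)⁻¹) =
      (2 * (n - 2).factorial) • (transpositionsOn Finset.univ).val) :
    IsBalancedCyclicGrayCode n N π := by
  have hinj : Function.Injective π := fun s t hst =>
    Multiset.inj_on_of_nodup_map (hV ▸ Finset.nodup _) s (by simp) t (by simp) hst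
  refine ⟨?_, ⟨hinj, fun σ => ?_⟩, fun s => ?_, fun i j hij => ?_⟩
  · simpa [Fintype.card_perm] using congrArg Multiset.card hV
  · have hσ : σ ∈ Finset.univ.val.map π := hV ▸ Finset.mem_univ_val σ
    obtain ⟨s, -, hs⟩ := Multiset.mem_map.1 hσ
    exact ⟨s, hs⟩
  · have hs := Multiset.mem_map_of_mem (fun s => π (s + 1) * (π s)⁻¹) (Finset.mem_univ_val s)
    rw [hL] at hs
    have ht := mem_transpositionsOn.1 (Multiset.mem_of_mem_nsmul hs)
    obtain ⟨i, j, hij, h⟩ := card_support_eq_two.1 ht.2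
    exact ⟨i, j, hij, mul_inv_eq_iff_eq_mul.1 h⟩
  · have hcount := congrArg (Multiset.count (swap i j)) hL
    rw [Multiset.count_nsmul, Multiset.count_eq_one_of_mem (Finset.nodup _)
      (swap_mem_transpositionsOn hij (by simp) (by simp)), mul_one, Multiset.count_map] at hcount
    rw [← hcount]
    exact congrArg Finset.card
      (Finset.filter_congr fun s _ => eq_comm.trans eq_mul_inv_iff_mul_eq.symm)

end Perm
end GrayCode

open GrayCode in
theorem balanced_gray_code_even_general {n : ℕ} {a b : Fin n} (hab : a ≠ b) :
    ∃ (N : ℕ) (π : Fin (N + 1) → Equiv.Perm (Fin n)),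
      IsBalancedCyclicGrayCode n N π ∧
      π 0 = 1 ∧
      π (Fin.last N) = Equiv.swap a b ∧
      π 0 = Equiv.swap a b * π (Fin.last N) := by
  obtain ⟨m, rfl⟩ : ∃ m, n = m + 2 := ⟨n - 2, by omega⟩
  have C : HasBalancedCycle (Finset.univ : Finset (Fin (m + 2))) (2 * m.factorial) :=
    hasBalancedCycle_of_card_eq_add_two (by simp)
  have hmem : Equiv.swap a b ∈ (2 * m.factorial) • (transpositionsOn Finset.univ).val :=
    swap_mem_nsmul_transpositionsOn (by positivity) hab (Finset.mem_univ a) (Finset.mem_univ b)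
  obtain ⟨σ, -, P⟩ := CayleyCycle.exists_path_from C hmem 1
  obtain ⟨N, π, h0, hlast, hV, hL⟩ := P.exists_enumeration
  rw [mul_one, Equiv.swap_inv] at hlast
  refine ⟨N, π, isBalancedCyclicGrayCode_of_map ?_ ?_, h0, hlast, ?_⟩
  · rw [hV, permsOn_univ]
    exact Multiset.map_univ_val_equiv (Equiv.mulRight _)
  · rw [map_univ_add_one_mul_inv, hL, h0, hlast, one_mul, Equiv.swap_inv,
      Multiset.cons_erase hmem, Nat.add_sub_cancel]
  · rw [h0, hlast, Equiv.swap_mul_self]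

/-- For every even `n ≥ 2` there exists a balanced cyclic Gray code for `S_n`
under all transpositions from the identity word `12⋯n` to the word `n23⋯(n−1)1`
(the swap of the values `1` and `n`), whose closing transposition is `(1, n)`. -/
theorem balanced_gray_code_even (n : ℕ) (hn : 2 ≤ n) (he : Even n) :
    ∃ (N : ℕ) (π : Fin (N + 1) → Equiv.Perm (Fin n)),
      IsBalancedCyclicGrayCode n N π ∧
      π 0 = 1 ∧
      π (Fin.last N) = Equiv.swap ⟨0, by omega⟩ ⟨n - 1, by omega⟩ ∧
      π 0 = Equiv.swap ⟨0, by omega⟩ ⟨n - 1, by omega⟩ * π (Fin.last N) :=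
  balanced_gray_code_even_general (by simp [Fin.ext_iff]; omega)
end

section
/- Let k ≥ 2 and let M ≥ 2 be an even integer. If there exists an M-rainbow cycle for S_k under all transpositions, then there exists an M-rainbow cycle for S_{k+1} under all transpositions, i.e., a cyclically ordered list of pairwise distinct permutations of [k+1] in which any two cyclically consecutive permutations differ by applying a transposition and each of the (k+1)k/2 transpositions on [k+1] is applied exactly M times around the cycle. -/
/-!
View a rainbow cycle for `S_k` as a closed walk in the permutations of `[k + 1]` fixing the new
value `∞`. Since `(d a) = (a ∞)(d a)(d ∞)`, a step `(d a)` of the walk can be replaced by a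
detour `(d ∞), (d a), (a ∞)` with the same effect. A detour does not change how often the old
transpositions are used, and adds one use of `(d ∞)` and one of `(a ∞)`. So it suffices to
detour along a set `S` of steps in which every value of `[k]` occurs exactly `M` times: take
`M / 2` of the steps applying `(i (i + 1))` for each `i`, cyclically. The new permutations are
distinct unless a detour `(d a)` is followed immediately by a detour `(a b)`. As `(d a)` may be
replaced by `(a d)`, this is avoided greedily along the cycle, started at a step outside `S`.
This choice of `S` needs `k ≥ 3`; for `k = 2` one detours along every step, all written `(0 1)`.
-/

open Finset Equiv Relation

variable {ι α β : Type*}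

/-- Every element is reached from every other by iterating `next`. On a finite type this says that
the elements form a single cyclic list with successor map `next`. -/
def IsSingleCycle (next : ι → ι) : Prop :=
  ∀ x y, ReflTransGen (next · = ·) x y

namespace IsSingleCycle

variable {next : ι → ι}

theorem surjective (h : IsSingleCycle next) : Function.Surjective next := fun y => by
  rcases (h (next y) y).cases_tail with hy | ⟨z, -, hz⟩
  exacts [⟨y, hy.symm⟩, ⟨z, hz⟩]

theorem exists_iterate_eq (h : IsSingleCycle next) (x y : ι) : ∃ n, next^[n] x = y := by
  induction h x y with
  | refl => exact ⟨0, rfl⟩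
  | tail _ hz ih =>
    obtain ⟨n, rfl⟩ := ih
    exact ⟨n + 1, (Function.iterate_succ_apply' next n x).trans hz⟩

theorem exists_equiv_fin (h : IsSingleCycle next) (x₀ : ι) :
    ∃ (N : ℕ) (e : Fin (N + 1) ≃ ι), e 0 = x₀ ∧ ∀ s, e (s + 1) = next (e s) := by
  have x₀_periodic : x₀ ∈ Function.periodicPts next := by
    obtain ⟨n, hn⟩ := h.exists_iterate_eq (next x₀) x₀
    exact ⟨n + 1, n.succ_pos, hn⟩
  obtain ⟨N, hN⟩ := Nat.exists_eq_add_one_of_ne_zero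
    (Function.minimalPeriod_pos_of_mem_periodicPts x₀_periodic).ne'
  have bijective : Function.Bijective fun s : Fin (N + 1) => next^[s] x₀ := by
    constructor
    · intro s t hst
      have injOn := Function.iterate_injOn_Iio_minimalPeriod (f := next) (x := x₀)
      rw [hN] at injOn
      exact Fin.ext (injOn s.2 t.2 hst)
    · intro x
      obtain ⟨n, rfl⟩ := h.exists_iterate_eq x₀ x
      refine ⟨⟨n % (N + 1), Nat.mod_lt _ N.succ_pos⟩, ?_⟩
      simp only [← hN, Function.iterate_mod_minimalPeriod_eq]
  refine ⟨N, Equiv.ofBijective _ bijective, rfl, fun s => ?_⟩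
  simp only [Equiv.ofBijective_apply, ← Function.iterate_succ_apply' next]
  rcases eq_or_ne s (Fin.last N) with rfl | hs
  · have hlast := Function.iterate_minimalPeriod (f := next) (x := x₀)
    rw [hN] at hlast
    simpa using hlast.symm
  · rw [Fin.val_add_one_of_lt (Fin.lt_last_iff_ne_last.2 hs)]

end IsSingleCycle

theorem isSingleCycle_fin_add_one (N : ℕ) : IsSingleCycle fun s : Fin (N + 1) => s + 1 := by
  have from_zero (s : Fin (N + 1)) : ReflTransGen (fun s t : Fin (N + 1) => s + 1 = t) 0 s := by
    induction s using Fin.induction with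
    | zero => exact .refl
    | succ s ih => exact ih.tail (Fin.coeSucc_eq_succ)
  intro x y
  have shifted : ReflTransGen (fun s t : Fin (N + 1) => s + 1 = t) (0 + x) (y - x + x) :=
    (from_zero (y - x)).lift (· + x) fun s _ hs => hs ▸ add_right_comm s x 1
  simpa using shifted

/-! ### Orienting the steps -/

section Orientation

variable [DecidableEq α]

/-- The orientation of the pairs `t 0, t 1, …` in which each pair is swapped precisely when this
is needed for its first entry to differ from the second entry of the preceding pair. -/
def greedyOrientation (t : ℕ → α × α) : ℕ → α × α
  | 0 => t 0
  | n + 1 => if (t (n + 1)).1 = (greedyOrientation t n).2 then (t (n + 1)).swap else t (n + 1)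

theorem sym2_greedyOrientation (t : ℕ → α × α) (n : ℕ) :
    s((greedyOrientation t n).1, (greedyOrientation t n).2) = s((t n).1, (t n).2) := by
  cases n with
  | zero => rfl
  | succ n =>
    rw [greedyOrientation]
    split_ifs
    exacts [Sym2.eq_swap, rfl]

theorem greedyOrientation_succ_fst_ne {t : ℕ → α × α} (ht : ∀ n, (t n).1 ≠ (t n).2) (n : ℕ) :
    (greedyOrientation t (n + 1)).1 ≠ (greedyOrientation t n).2 := by
  rw [greedyOrientation]
  split_ifs with h
  · rw [← h]
    exact (ht (n + 1)).symm
  · exact h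

end Orientation

theorem IsSingleCycle.exists_orientation {next : ι → ι} (h : IsSingleCycle next) (x₀ : ι)
    {u v : ι → α} (huv : ∀ x, u x ≠ v x) :
    ∃ d a : ι → α, (∀ x, s(d x, a x) = s(u x, v x)) ∧
      ∀ x, next x ≠ x₀ → d (next x) ≠ a x := by
  classical
  obtain ⟨N, e, e_zero, e_succ⟩ := h.exists_equiv_fin x₀
  let t (n : ℕ) : α × α := (u (e (Fin.ofNat _ n)), v (e (Fin.ofNat _ n)))
  refine ⟨fun x => (greedyOrientation t (e.symm x)).1,
    fun x => (greedyOrientation t (e.symm x)).2, fun x => ?_, fun x hx => ?_⟩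
  · simpa [t] using sym2_greedyOrientation t (e.symm x)
  · obtain ⟨s, rfl⟩ := e.surjective x
    have hs : s ≠ Fin.last N := by
      rintro rfl
      rw [← e_succ, Fin.last_add_one] at hx
      exact hx e_zero
    simpa [← e_succ, Fin.val_add_one_of_lt (Fin.lt_last_iff_ne_last.2 hs)] using
      greedyOrientation_succ_fst_ne (t := t) (fun _ => huv _) s

/-! ### Rainbow cycles -/

theorem swap_eq_swap_iff_sym2 [DecidableEq α] {a b c d : α} (hab : a ≠ b) :
    swap a b = swap c d ↔ s(a, b) = s(c, d) := by
  rw [Sym2.eq_iff]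
  refine ⟨fun h => ?_, ?_⟩
  · have hb : swap c d a = b := by rw [← h, swap_apply_left]
    have hac : a = c ∨ a = d := by
      by_contra! hne
      exact hab ((swap_apply_of_ne_of_ne hne.1 hne.2).symm.trans hb)
    rcases hac with rfl | rfl
    · exact .inl ⟨rfl, by simpa using hb.symm⟩
    · exact .inr ⟨rfl, by simpa using hb.symm⟩
  · rintro (⟨rfl, rfl⟩ | ⟨rfl, rfl⟩)
    exacts [rfl, swap_comm a b]

/-- The permutations `p x`, for `x` in the cyclic list `ι`, form an `M`-rainbow cycle under all
transpositions, where the step out of `x` applies the transposition `(u x, v x)`. -/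
structure IsRainbowCycle [DecidableEq α] [Fintype ι] (M : ℕ) (next : ι → ι) (p : ι → Perm α)
    (u v : ι → α) : Prop where
  nonempty : Nonempty ι
  isSingleCycle : IsSingleCycle next
  injective : Function.Injective p
  ne : ∀ x, u x ≠ v x
  apply_next : ∀ x, p (next x) = swap (u x) (v x) * p x
  card_eq : ∀ i j, i ≠ j → #{x | s(u x, v x) = s(i, j)} = M

/-- There is an `M`-rainbow cycle for the permutations of `α`. -/
def HasRainbowCycle (M : ℕ) (α : Type*) [DecidableEq α] : Prop :=
  ∃ (ι : Type) (_ : Fintype ι) (next : ι → ι) (p : ι → Perm α) (u v : ι → α),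
    IsRainbowCycle M next p u v

theorem hasRainbowCycle_iff [Fintype α] [DecidableEq α] {M : ℕ} :
    HasRainbowCycle M α ↔ ∃ (N : ℕ) (π : Fin (N + 1) → Perm α),
      Function.Injective π ∧
      (∀ s : Fin (N + 1), ∃ i j : α, i ≠ j ∧ π (s + 1) = swap i j * π s) ∧
      (∀ i j : α, i ≠ j → #{s | π (s + 1) = swap i j * π s} = M) := by
  constructor
  · rintro ⟨ι, _, next, p, u, v, h⟩
    obtain ⟨x₀⟩ := h.nonempty
    obtain ⟨N, e, -, e_succ⟩ := h.isSingleCycle.exists_equiv_fin x₀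
    refine ⟨N, p ∘ e, h.injective.comp e.injective,
      fun s => ⟨_, _, h.ne (e s), ?_⟩, fun i j hij => ?_⟩
    · simp only [Function.comp_apply, e_succ, h.apply_next]
    · rw [← h.card_eq i j hij]
      refine card_equiv e fun s => ?_
      simp [e_succ, h.apply_next, swap_eq_swap_iff_sym2 (h.ne _)]
  · rintro ⟨N, π, injective, exists_swap, card_eq⟩
    choose u v ne apply_next using exists_swap
    refine ⟨Fin (N + 1), inferInstance, (· + 1), π, u, v, inferInstance,
      isSingleCycle_fin_add_one N, injective, ne, apply_next, fun i j hij => ?_⟩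
    rw [← card_eq i j hij]
    simp only [apply_next, mul_left_inj, swap_eq_swap_iff_sym2 (ne _)]

theorem HasRainbowCycle.congr [DecidableEq α] [DecidableEq β] {M : ℕ} (e : α ≃ β)
    (h : HasRainbowCycle M α) : HasRainbowCycle M β := by
  obtain ⟨ι, _, next, p, u, v, h⟩ := h
  refine ⟨ι, inferInstance, next, fun x => e.permCongr (p x), e ∘ u, e ∘ v, h.nonempty,
    h.isSingleCycle, e.permCongr.injective.comp h.injective,
    fun x => e.injective.ne (h.ne x), fun x => ?_, fun i j hij => ?_⟩
  · rw [h.apply_next, ← e.permCongrHom_coe, map_mul]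
    simp [Equiv.permCongr_def]
  · rw [← h.card_eq (e.symm i) (e.symm j) (e.symm.injective.ne hij)]
    simp [Equiv.eq_symm_apply]

namespace IsRainbowCycle

variable [DecidableEq α] [Fintype ι] {M : ℕ} {next : ι → ι} {p : ι → Perm α} {u v d a : ι → α}

theorem reorient (h : IsRainbowCycle M next p u v) (hda : ∀ x, s(d x, a x) = s(u x, v x)) :
    IsRainbowCycle M next p d a where
  nonempty := h.nonempty
  isSingleCycle := h.isSingleCycle
  injective := h.injective
  ne x := by
    rw [Ne, ← Sym2.mk_isDiag_iff, hda, Sym2.mk_isDiag_iff]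
    exact h.ne x
  apply_next x := by
    rw [h.apply_next, (swap_eq_swap_iff_sym2 (h.ne x)).2 (hda x).symm]
  card_eq i j hij := by simp only [hda, h.card_eq i j hij]

end IsRainbowCycle

/-! ### Detours -/

theorem optionCongr_mul (σ τ : Perm α) :
    (optionCongr (σ * τ) : Perm (Option α)) = optionCongr σ * optionCongr τ :=
  optionCongr_trans τ σ

/-- The cyclic list `ι`, with two new positions inserted after each position in `S`. -/
abbrev DetourIndex (S : Finset ι) : Type _ := ι ⊕ S ⊕ S

/-- The successor map of `DetourIndex S`. -/
def detourNext [DecidableEq ι] (S : Finset ι) (next : ι → ι) : DetourIndex S → DetourIndex S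
  | .inl x => if hx : x ∈ S then .inr (.inl ⟨x, hx⟩) else .inl (next x)
  | .inr (.inl x) => .inr (.inr x)
  | .inr (.inr x) => .inl (next x)

theorem isSingleCycle_detourNext [DecidableEq ι] {next : ι → ι} (h : IsSingleCycle next)
    (S : Finset ι) : IsSingleCycle (detourNext S next) := by
  have enter (x : S) : detourNext S next (.inl x) = .inr (.inl x) := by simp [detourNext]
  have to_next : ∀ x : ι, ReflTransGen (detourNext S next · = ·) (.inl x) (.inl (next x)) := by
    intro x
    by_cases hx : x ∈ S
    · exact .head (enter ⟨x, hx⟩) (.head rfl (.single rfl))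
    · exact .single (by simp [detourNext, hx])
  have inl_inl (x y : ι) : ReflTransGen (detourNext S next · = ·) (.inl x) (.inl y) :=
    (h x y).lift' Sum.inl fun x _ hxy => hxy ▸ to_next x
  have to_inl : ∀ x, ∃ y, ReflTransGen (detourNext S next · = ·) x (.inl y)
    | .inl x => ⟨x, .refl⟩
    | .inr (.inl x) => ⟨next x, .head rfl (.single rfl)⟩
    | .inr (.inr x) => ⟨next x, .single rfl⟩
  have from_inl : ∀ y, ∃ x, ReflTransGen (detourNext S next · = ·) (.inl x) y
    | .inl y => ⟨y, .refl⟩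
    | .inr (.inl y) => ⟨y, .single (enter y)⟩
    | .inr (.inr y) => ⟨y, .head (enter y) (.single rfl)⟩
  intro x y
  obtain ⟨x', hx⟩ := to_inl x
  obtain ⟨y', hy⟩ := from_inl y
  exact (hx.trans (inl_inl x' y')).trans hy

/-- The first of the two values exchanged by a step of `detourPerm`. -/
def detourFst (S : Finset ι) (d a : ι → α) : DetourIndex S → Option α
  | .inl x => some (d x)
  | .inr (.inl x) => some (d x)
  | .inr (.inr x) => some (a x)

/-- The second of the two values exchanged by a step of `detourPerm`. -/
def detourSnd [DecidableEq ι] (S : Finset ι) (a : ι → α) : DetourIndex S → Option α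
  | .inl x => if x ∈ S then none else some (a x)
  | .inr (.inl x) => some (a x)
  | .inr (.inr _) => none

theorem detourFst_ne_detourSnd [DecidableEq ι] {d a : ι → α} (hda : ∀ x, d x ≠ a x)
    (S : Finset ι) : ∀ x, detourFst S d a x ≠ detourSnd S a x
  | .inl x => by by_cases hx : x ∈ S <;> simp [detourFst, detourSnd, hx, hda]
  | .inr (.inl x) => by simp [detourFst, detourSnd, hda]
  | .inr (.inr x) => by simp [detourFst, detourSnd]

variable [DecidableEq α]

/-- The permutations of `Option α` along the cycle in which each step `(d x, a x)` with `x ∈ S`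
is replaced by the detour `(d x, ∞), (d x, a x), (a x, ∞)`, where `∞` is `none`. -/
def detourPerm (S : Finset ι) (next : ι → ι) (p : ι → Perm α) (d a : ι → α) :
    DetourIndex S → Perm (Option α)
  | .inl x => optionCongr (p x)
  | .inr (.inl x) => swap (some (d x)) none * optionCongr (p x)
  | .inr (.inr x) => swap (some (a x)) none * optionCongr (p (next x))

theorem detourPerm_detourNext [DecidableEq ι] {next : ι → ι} {p : ι → Perm α} {d a : ι → α}
    (hp : ∀ x, p (next x) = swap (d x) (a x) * p x) (S : Finset ι) :
    ∀ x, detourPerm S next p d a (detourNext S next x) =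
      swap (detourFst S d a x) (detourSnd S a x) * detourPerm S next p d a x
  | .inl x => by
    by_cases hx : x ∈ S
    · simp [detourPerm, detourNext, detourFst, detourSnd, hx]
    · simp [detourPerm, detourNext, detourFst, detourSnd, hx, hp, optionCongr_mul]
  | .inr (.inl x) => by
    have conj : swap (some (a x)) none * swap (some (d x)) (some (a x)) =
        swap (some (d x)) (some (a x)) * swap (some (d x)) none := by
      rw [mul_swap_eq_swap_mul (swap (some (d x)) (some (a x))), swap_apply_left,
        swap_apply_of_ne_of_ne (by simp) (by simp)]
    simp only [detourPerm, detourNext, detourFst, detourSnd, hp, optionCongr_mul,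
      optionCongr_swap, ← mul_assoc, conj]
  | .inr (.inr x) => by simp [detourPerm, detourNext, detourFst, detourSnd]

theorem detourPerm_injective {next : ι → ι} {p : ι → Perm α} {d a : ι → α}
    (hnext : Function.Injective next) (hp : Function.Injective p) {S : Finset ι}
    (hS : ∀ x ∈ S, next x ∈ S → d (next x) ≠ a x) :
    Function.Injective (detourPerm S next p d a) := by
  have unfold_swap {b c : α} {σ τ : Perm α} (h : swap (some b) none * optionCongr σ =
      swap (some c) none * (optionCongr τ : Perm (Option α))) : b = c ∧ σ = τ := by
    obtain rfl : b = c := by simpa using Equiv.congr_fun h none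
    exact ⟨rfl, optionCongr_injective (mul_left_cancel h)⟩
  have out_ne_back (x y : S) :
      detourPerm S next p d a (.inr (.inl x)) ≠ detourPerm S next p d a (.inr (.inr y)) := by
    intro h
    obtain ⟨hda, hxy⟩ := unfold_swap h
    have hxy := hp hxy
    exact hS y y.2 (hxy ▸ x.2) (hxy ▸ hda)
  have old_ne_new (x : ι) (y : S ⊕ S) :
      detourPerm S next p d a (.inl x) ≠ detourPerm S next p d a (.inr y) := by
    intro h
    have h_none := Equiv.congr_fun h none
    rcases y with y | y <;> simp [detourPerm] at h_none
  rintro (x | x | x) (y | y | y) h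
  · rw [hp (optionCongr_injective h)]
  · exact absurd h (old_ne_new x _)
  · exact absurd h (old_ne_new x _)
  · exact absurd h.symm (old_ne_new y _)
  · rw [Subtype.ext (hp (unfold_swap h).2)]
  · exact absurd h (out_ne_back x y)
  · exact absurd h.symm (old_ne_new y _)
  · exact absurd h.symm (out_ne_back y x)
  · rw [Subtype.ext (hnext (hp (unfold_swap h).2))]

theorem card_filter_detour [DecidableEq ι] [Fintype ι] (S : Finset ι) (d a : ι → α)
    (z : Sym2 (Option α)) :
    #{x | s(detourFst S d a x, detourSnd S a x) = z} =
      #{x | s(some (d x), some (a x)) = z} +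
        (#{x ∈ S | s(some (d x), none) = z} + #{x ∈ S | s(some (a x), none) = z}) := by
  let hit (q : Sym2 (Option α)) : ℕ := if q = z then 1 else 0
  let edge (x : DetourIndex S) := s(detourFst S d a x, detourSnd S a x)
  have old_steps : ∑ x, hit (edge (.inl x)) =
      ∑ x ∈ S, hit s(some (d x), none) +
        ∑ x ∈ Sᶜ, hit s(some (d x), some (a x)) := by
    rw [← sum_add_sum_compl S]
    congr 1 <;> refine sum_congr rfl fun x hx => ?_
    · simp [hit, edge, detourFst, detourSnd, hx]
    · simp [hit, edge, detourFst, detourSnd, mem_compl.1 hx]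
  have middle_steps : ∑ x : S, hit (edge (.inr (.inl x))) =
      ∑ x ∈ S, hit s(some (d x), some (a x)) :=
    sum_coe_sort S fun x => hit s(some (d x), some (a x))
  have last_steps : ∑ x : S, hit (edge (.inr (.inr x))) =
      ∑ x ∈ S, hit s(some (a x), none) :=
    sum_coe_sort S fun x => hit s(some (a x), none)
  calc #{x | edge x = z}
      = ∑ x ∈ S, hit s(some (d x), none) +
          ∑ x ∈ Sᶜ, hit s(some (d x), some (a x)) +
          (∑ x ∈ S, hit s(some (d x), some (a x)) +
            ∑ x ∈ S, hit s(some (a x), none)) := by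
        rw [card_filter, Fintype.sum_sum_type, Fintype.sum_sum_type, old_steps, middle_steps,
          last_steps]
    _ = _ := by
        rw [card_filter, card_filter, card_filter, ← sum_add_sum_compl S]
        ring

theorem card_filter_mem_sym2 {d a : ι → α} (hda : ∀ x, d x ≠ a x) (S : Finset ι) (i : α) :
    #{x ∈ S | i ∈ s(d x, a x)} = #{x ∈ S | d x = i} + #{x ∈ S | a x = i} := by
  classical
  rw [← card_union_of_disjoint, ← filter_or]
  · simp only [Sym2.mem_iff, eq_comm]
  · exact disjoint_filter.2 fun x _ hd ha => hda x (hd.trans ha.symm)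

omit [DecidableEq α] in
theorem injective_sym2_apply {ρ : α → α} (hρρ : ∀ i, i ≠ ρ (ρ i)) :
    Function.Injective fun i => s(i, ρ i) := by
  intro i j hij
  rcases Sym2.eq_iff.1 hij with ⟨hij, -⟩ | ⟨hij, hji⟩
  · exact hij
  · exact absurd (hij.trans (congrArg ρ hji).symm) (hρρ i)

theorem card_filter_mem_of_forall_eq_sym2 [Fintype ι] {e : ι → Sym2 α} {ρ : Perm α}
    (hρρ : ∀ i, i ≠ ρ (ρ i)) {R : α → Finset ι} (hR : ∀ i, ∀ x ∈ R i, e x = s(i, ρ i))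
    [DecidablePred fun x => ∃ j, x ∈ R j] (i : α) :
    #{x ∈ ({x | ∃ j, x ∈ R j} : Finset ι) | i ∈ e x} = #(R i) + #(R (ρ.symm i)) := by
  classical
  have steps_at_i : ({x ∈ ({x | ∃ j, x ∈ R j} : Finset ι) | i ∈ e x} : Finset ι) =
      R i ∪ R (ρ.symm i) := by
    ext x
    simp only [mem_filter, mem_univ, true_and, mem_union]
    constructor
    · rintro ⟨⟨j, hj⟩, hi⟩
      rw [hR j x hj, Sym2.mem_iff] at hi
      rcases hi with rfl | rfl
      · exact .inl hj
      · exact .inr (by simpa using hj)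
    · rintro (hx | hx) <;> exact ⟨⟨_, hx⟩, by simp [hR _ x hx]⟩
  have disj : Disjoint (R i) (R (ρ.symm i)) := disjoint_left.2 fun x hx hx' => by
    have hi : i = ρ.symm i :=
      injective_sym2_apply hρρ ((hR _ x hx).symm.trans (hR _ x hx'))
    have hρi : ρ i = i := ρ.eq_symm_apply.1 hi
    exact hρρ i (by rw [hρi, hρi])
  rw [steps_at_i, card_union_of_disjoint disj]

namespace IsRainbowCycle

variable [Fintype ι] {M : ℕ} {next : ι → ι} {p : ι → Perm α} {d a : ι → α}

theorem detour [DecidableEq ι] (h : IsRainbowCycle M next p d a) {S : Finset ι}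
    (hcard : ∀ i, #{x ∈ S | i ∈ s(d x, a x)} = M)
    (hS : ∀ x ∈ S, next x ∈ S → d (next x) ≠ a x) :
    IsRainbowCycle M (detourNext S next) (detourPerm S next p d a)
      (detourFst S d a) (detourSnd S a) where
  nonempty := h.nonempty.map Sum.inl
  isSingleCycle := isSingleCycle_detourNext h.isSingleCycle S
  injective := detourPerm_injective
    (Finite.injective_iff_surjective.2 h.isSingleCycle.surjective) h.injective hS
  ne := detourFst_ne_detourSnd h.ne S
  apply_next := detourPerm_detourNext h.apply_next S
  card_eq i j hij := by
    have card_none (i : α) :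
        #{x | s(detourFst S d a x, detourSnd S a x) = s(some i, none)} = M := by
      rw [card_filter_detour, ← hcard i, card_filter_mem_sym2 h.ne]
      simp
    rcases i with _ | i <;> rcases j with _ | j
    · exact absurd rfl hij
    · rw [Sym2.eq_swap, card_none]
    · exact card_none i
    · rw [card_filter_detour, ← h.card_eq i j (by simpa using hij)]
      simp

theorem exists_regular_steps (h : IsRainbowCycle M next p d a)
    (hM : 0 < M) (hMe : Even M) (ρ : Perm α) (hρρ : ∀ i, i ≠ ρ (ρ i)) :
    ∃ S : Finset ι, (∀ i, #{x ∈ S | i ∈ s(d x, a x)} = M) ∧ ∃ x, x ∉ S := by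
  classical
  obtain ⟨c, rfl⟩ := hMe
  have card_edge (i : α) : #{x | s(d x, a x) = s(i, ρ i)} = c + c :=
    h.card_eq i (ρ i) fun hi => hρρ i (by rw [← hi, ← hi])
  have exists_half (i : α) : ∃ R ⊆ ({x | s(d x, a x) = s(i, ρ i)} : Finset ι), #R = c :=
    exists_subset_card_eq (by rw [card_edge]; lia)
  choose R R_subset R_card using exists_half
  have edge_of_mem (i : α) (x : ι) (hx : x ∈ R i) : s(d x, a x) = s(i, ρ i) := by
    simpa using R_subset i hx
  refine ⟨({x | ∃ j, x ∈ R j} : Finset ι), fun i => ?_, ?_⟩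
  · rw [card_filter_mem_of_forall_eq_sym2 hρρ edge_of_mem, R_card, R_card]
  · obtain ⟨i⟩ := h.nonempty.map d
    obtain ⟨x, hx, hxR⟩ : ∃ x ∈ ({x | s(d x, a x) = s(i, ρ i)} : Finset ι), x ∉ R i :=
      exists_mem_notMem_of_card_lt_card (by rw [R_card, card_edge]; lia)
    refine ⟨x, fun hxS => ?_⟩
    obtain ⟨-, j, hj⟩ := mem_filter.1 hxS
    obtain rfl : i = j :=
      injective_sym2_apply hρρ ((mem_filter.1 hx).2.symm.trans (edge_of_mem j x hj))
    exact hxR hj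

end IsRainbowCycle

theorem HasRainbowCycle.option_of_perm {M : ℕ}
    (h : HasRainbowCycle M α) (hM : 0 < M) (hMe : Even M)
    (ρ : Perm α) (hρρ : ∀ i, i ≠ ρ (ρ i)) : HasRainbowCycle M (Option α) := by
  classical
  obtain ⟨ι, _, next, p, u, v, h⟩ := h
  obtain ⟨S, hcard, x₀, hx₀⟩ := h.exists_regular_steps hM hMe ρ hρρ
  obtain ⟨d, a, hda, hne⟩ := h.isSingleCycle.exists_orientation x₀ h.ne
  exact ⟨_, _, _, _, _, _, (h.reorient hda).detour (S := S) (by simpa only [hda] using hcard)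
    fun x _ hx => hne x (ne_of_mem_of_not_mem hx hx₀)⟩

theorem HasRainbowCycle.option_fin_two {M : ℕ} (h : HasRainbowCycle M (Fin 2)) :
    HasRainbowCycle M (Option (Fin 2)) := by
  classical
  obtain ⟨ι, _, next, p, u, v, h⟩ := h
  have all_edges_eq : ∀ i j : Fin 2, i ≠ j → s(0, 1) = s(i, j) := by decide
  replace h := h.reorient (d := fun _ => 0) (a := fun _ => 1) fun x => all_edges_eq _ _ (h.ne x)
  have card_univ_eq : #(univ : Finset ι) = M := by simpa using h.card_eq 0 1 (by decide)
  have all_mem : ∀ i : Fin 2, i ∈ s(0, 1) := by decide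
  exact ⟨_, _, _, _, _, _, h.detour (S := univ) (by simpa [all_mem] using card_univ_eq) (by simp)⟩

theorem HasRainbowCycle.option_fin {k M : ℕ} (h : HasRainbowCycle M (Fin k)) (hk : 2 ≤ k)
    (hM : 0 < M) (hMe : Even M) : HasRainbowCycle M (Option (Fin k)) := by
  rcases hk.eq_or_lt with rfl | hk
  · exact h.option_fin_two
  · obtain ⟨m, rfl⟩ : ∃ m, k = m + 3 := ⟨k - 3, by lia⟩
    refine h.option_of_perm hM hMe (Equiv.addRight 1) fun i => ?_
    simp [add_assoc, Fin.ext_iff, Fin.val_add, Nat.mod_eq_of_lt]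

/-- Let `k ≥ 2` and let `M ≥ 2` be even. If there is an `M`-rainbow cycle for
`S_k` under all transpositions (a cyclically indexed family of pairwise distinct
permutations of `[k]` in which any two cyclically consecutive members differ by applying
a transposition, each transposition being applied exactly `M` times), then there is an
`M`-rainbow cycle for `S_{k+1}` under all transpositions. -/
theorem rainbow_cycle_lift (k M : ℕ) (hk : 2 ≤ k) (hM : 2 ≤ M) (hMe : Even M)
    (h : ∃ (N : ℕ) (π : Fin (N + 1) → Equiv.Perm (Fin k)),
      Function.Injective π ∧
      (∀ s : Fin (N + 1), ∃ i j : Fin k, i ≠ j ∧ π (s + 1) = Equiv.swap i j * π s) ∧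
      (∀ i j : Fin k, i ≠ j →
        (Finset.univ.filter (fun s : Fin (N + 1) =>
          π (s + 1) = Equiv.swap i j * π s)).card = M)) :
    ∃ (N : ℕ) (π : Fin (N + 1) → Equiv.Perm (Fin (k + 1))),
      Function.Injective π ∧
      (∀ s : Fin (N + 1), ∃ i j : Fin (k + 1), i ≠ j ∧ π (s + 1) = Equiv.swap i j * π s) ∧
      (∀ i j : Fin (k + 1), i ≠ j →
        (Finset.univ.filter (fun s : Fin (N + 1) =>
          π (s + 1) = Equiv.swap i j * π s)).card = M) := by
  rw [← hasRainbowCycle_iff] at h ⊢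
  exact (h.option_fin hk (by lia) hMe).congr finSuccEquivLast.symm
end

section
/- Let n ≥ 2 be even. Then there exists a Gray code for S_{n+1} under adjacent position-swaps from the word 123⋯(n+1) to the word 213⋯(n+1): a list of all (n+1)! permutations of [n+1], each appearing exactly once, in which any two consecutive permutations differ by an adjacent position-swap. -/
/-!
This is the Steinhaus–Johnson–Trotter algorithm. Suppose the words of length `m ≥ 2` are listed so
that consecutive ones differ by an adjacent swap. Replace each word by the `m + 1` words obtained
by inserting a new largest letter, whose position sweeps alternately from right to left and from
left to right: a move of the new letter is an adjacent swap, and between two sweeps it rests at an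
end of the word, where it does not disturb the adjacent swap of the other letters. Since the number
`m!` of sweeps is even, the last sweep ends with the new letter on the right, so the last word
`213⋯m` turns into `213⋯m(m+1)`.
-/

section GrayCodes

variable {α β ι : Type*}

/-- A Gray code for `α` from `a` to `b`: a list of all elements of `α`, each exactly once, that
starts with `a`, ends with `b` and in which consecutive elements are related by `R`. -/
structure IsGrayCode (R : α → α → Prop) (a b : α) (l : List α) : Prop where
  isChain : l.IsChain R
  nodup : l.Nodup
  mem : ∀ x, x ∈ l
  head? : l.head? = some a
  getLast? : l.getLast? = some b

/-- The boustrophedon order on `l ×ˢ L`: the rows `{a} × L` for `a ∈ l`, traversed alternately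
forwards and backwards, beginning with a forward one. -/
def snake : List α → List ι → List (α × ι)
  | [], _ => []
  | a :: l, L => L.map (a, ·) ++ snake l L.reverse

theorem snake_perm_product (l : List α) (L : List ι) : (snake l L).Perm (l ×ˢ L) := by
  induction l generalizing L with
  | nil => exact .refl _
  | cons a l ih =>
    rw [snake, List.product_cons]
    exact ((ih L.reverse).trans ((List.Perm.refl l).product L.reverse_perm)).append_left _

theorem head?_snake {l : List α} {L : List ι} {a : α} {i : ι}
    (ha : l.head? = some a) (hi : L.head? = some i) : (snake l L).head? = some (a, i) := by
  obtain ⟨t, rfl⟩ := List.head?_eq_some_iff.1 ha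
  simp [snake, hi]

theorem getLast?_snake_of_even {l : List α} {L : List ι} {b : α} {i : ι} (hl : Even l.length)
    (hb : l.getLast? = some b) (hi : L.head? = some i) :
    (snake l L).getLast? = some (b, i) := by
  match l with
  | [] => simp at hb
  | [_] => simp at hl
  | [_, c] =>
    obtain rfl : c = b := by simpa using hb
    simp [snake, hi]
  | _ :: _ :: c :: l =>
    have ih : (snake (c :: l) L).getLast? = some (b, i) :=
      getLast?_snake_of_even (by simpa [Nat.even_add_one] using hl) (by simpa using hb) hi
    rw [snake, snake, List.reverse_reverse, ← List.append_assoc, List.getLast?_append, ih,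
      Option.some_or]

theorem isChain_snake {R : α → α → Prop} {Q : ι → ι → Prop} {T : α × ι → α × ι → Prop}
    {l : List α} {L : List ι} (hl : l.IsChain R) (hL : L.IsChain Q)
    (hforward : ∀ a i j, Q i j → T (a, i) (a, j)) (hbackward : ∀ a i j, Q i j → T (a, j) (a, i))
    (hhead : ∀ i ∈ L.head?, ∀ a b, R a b → T (a, i) (b, i))
    (hlast : ∀ i ∈ L.getLast?, ∀ a b, R a b → T (a, i) (b, i)) :
    (snake l L).IsChain T := by
  induction l generalizing L Q with
  | nil => exact .nil
  | cons a l ih =>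
    refine List.isChain_append.2 ⟨List.isChain_map_of_isChain _ (hforward a) hL, ?_, ?_⟩
    · exact ih hl.tail (Q := flip Q) (List.isChain_reverse.2 hL)
        (fun a i j => hbackward a j i) (fun a i j => hforward a j i) (by simpa using hlast)
        (by simpa using hhead)
    · cases l with
      | nil => simp [snake]
      | cons b l =>
        have hab : R a b := (List.isChain_cons_cons.1 hl).1
        cases hi : L.getLast? with
        | none => simp [hi]
        | some i => simpa [snake, hi] using hlast i hi a b hab

namespace IsGrayCode

variable {R : α → α → Prop} {a b : α} {l : List α}

theorem even_length [Fintype α] (hl : IsGrayCode R a b l) (hα : Even (Fintype.card α)) :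
    Even l.length := by
  classical
  rwa [← List.toFinset_card_of_nodup hl.nodup,
    Finset.eq_univ_of_forall fun x => List.mem_toFinset.2 (hl.mem x), Finset.card_univ]

theorem reverse (hl : IsGrayCode R a b l) : IsGrayCode (flip R) b a l.reverse where
  isChain := List.isChain_reverse.2 hl.isChain
  nodup := List.nodup_reverse.2 hl.nodup
  mem x := List.mem_reverse.2 (hl.mem x)
  head? := List.head?_reverse.trans hl.getLast?
  getLast? := List.getLast?_reverse.trans hl.head?

theorem map {S : β → β → Prop} {f : α → β} (hl : IsGrayCode R a b l) (hf : f.Bijective)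
    (hRS : ∀ x y, R x y → S (f x) (f y)) : IsGrayCode S (f a) (f b) (l.map f) where
  isChain := List.isChain_map_of_isChain f hRS hl.isChain
  nodup := hl.nodup.map hf.injective
  mem y := by
    obtain ⟨x, rfl⟩ := hf.surjective y
    exact List.mem_map_of_mem (hl.mem x)
  head? := by simp [hl.head?]
  getLast? := by simp [hl.getLast?]

theorem snake {Q : ι → ι → Prop} {T : α × ι → α × ι → Prop} {i j : ι} {L : List ι}
    (hl : IsGrayCode R a b l) (hL : IsGrayCode Q i j L) (heven : Even l.length)
    (hforward : ∀ a i j, Q i j → T (a, i) (a, j)) (hbackward : ∀ a i j, Q i j → T (a, j) (a, i))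
    (hhead : ∀ a b, R a b → T (a, i) (b, i)) (hlast : ∀ a b, R a b → T (a, j) (b, j)) :
    IsGrayCode T (a, i) (b, i) (snake l L) where
  isChain := isChain_snake hl.isChain hL.isChain hforward hbackward
    (by simpa [hL.head?] using hhead) (by simpa [hL.getLast?] using hlast)
  nodup := (snake_perm_product l L).nodup_iff.2 (hl.nodup.product hL.nodup)
  mem x := (snake_perm_product l L).mem_iff.2 (List.mem_product.2 ⟨hl.mem x.1, hL.mem x.2⟩)
  head? := head?_snake hl.head? hL.head?
  getLast? := getLast?_snake_of_even heven hl.getLast? hL.head?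

theorem exists_bijective_fin (hl : IsGrayCode R a b l) :
    ∃ (N : ℕ) (π : Fin (N + 1) → α), π.Bijective ∧ π 0 = a ∧ π (Fin.last N) = b ∧
      ∀ s : Fin N, R (π s.castSucc) (π s.succ) := by
  obtain ⟨t, rfl⟩ := List.head?_eq_some_iff.1 hl.head?
  refine ⟨t.length, (a :: t).get, ⟨List.nodup_iff_injective_get.1 hl.nodup, fun x => ?_⟩, rfl, ?_,
    fun s => ?_⟩
  · exact List.mem_iff_get.1 (hl.mem x)
  · have hlast := hl.getLast?
    rw [List.getLast?_eq_getElem?] at hlast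
    exact (List.getElem?_eq_some_iff.1 hlast).2
  · exact List.isChain_iff_getElem.1 hl.isChain s (by simp)

end IsGrayCode

theorem isGrayCode_finRange (n : ℕ) :
    IsGrayCode (fun i j => ∃ k : Fin n, i = k.castSucc ∧ j = k.succ) 0 (Fin.last n)
      (List.finRange (n + 1)) where
  isChain := List.isChain_iff_getElem.2 fun i hi => ⟨⟨i, by simpa using hi⟩, by simp, by simp⟩
  nodup := List.nodup_finRange _
  mem := List.mem_finRange
  head? := by simp [List.finRange_succ]
  getLast? := by simp [List.finRange_succ_last]

end GrayCodes

section Permutations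

open Equiv

variable {m : ℕ}

/-- The word obtained from `σ` by inserting a new largest letter at position `p`. -/
def insertLast (σ : Perm (Fin m)) (p : Fin (m + 1)) : Perm (Fin (m + 1)) :=
  (finSuccEquiv' p).trans ((optionCongr σ).trans (finSuccEquiv' (Fin.last m)).symm)

@[simp]
theorem insertLast_apply_self (σ : Perm (Fin m)) (p : Fin (m + 1)) :
    insertLast σ p p = Fin.last m := by
  simp [insertLast]

@[simp]
theorem insertLast_apply_succAbove (σ : Perm (Fin m)) (p : Fin (m + 1)) (j : Fin m) :
    insertLast σ p (p.succAbove j) = (σ j).castSucc := by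
  simp [insertLast]

theorem eq_insertLast_iff {σ : Perm (Fin m)} {p : Fin (m + 1)} {τ : Perm (Fin (m + 1))} :
    τ = insertLast σ p ↔ τ p = Fin.last m ∧ ∀ j, τ (p.succAbove j) = (σ j).castSucc := by
  refine ⟨?_, fun ⟨hp, hj⟩ => Equiv.ext fun x => ?_⟩
  · rintro rfl
    simp
  · obtain rfl | ⟨j, rfl⟩ := Fin.eq_self_or_eq_succAbove p x
    · rw [hp, insertLast_apply_self]
    · rw [hj, insertLast_apply_succAbove]

theorem bijective_uncurry_insertLast :
    (Function.uncurry (insertLast (m := m))).Bijective := by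
  refine (Fintype.bijective_iff_injective_and_card _).2 ⟨?_, ?_⟩
  · rintro ⟨σ, p⟩ ⟨τ, q⟩ h
    obtain ⟨hp, hj⟩ := eq_insertLast_iff.1 (show insertLast σ p = insertLast τ q from h)
    obtain rfl : q = p := (insertLast σ p).injective (by rw [insertLast_apply_self, hp])
    simpa [Equiv.ext_iff, eq_comm] using hj
  · simp [Fintype.card_perm, Nat.factorial_succ, mul_comm]

theorem insertLast_mul_swap (σ : Perm (Fin m)) (p : Fin (m + 1)) (i j : Fin m) :
    insertLast (σ * swap i j) p = insertLast σ p * swap (p.succAbove i) (p.succAbove j) := by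
  refine (eq_insertLast_iff.2 ⟨?_, fun k => ?_⟩).symm
  · rw [Perm.mul_apply, swap_apply_of_ne_of_ne (p.succAbove_ne i).symm (p.succAbove_ne j).symm,
      insertLast_apply_self]
  · rw [Perm.mul_apply, Perm.mul_apply, Fin.succAbove_right_injective.swap_apply,
      insertLast_apply_succAbove]

theorem insertLast_one_last : insertLast (1 : Perm (Fin m)) (Fin.last m) = 1 :=
  (eq_insertLast_iff.2 ⟨rfl, by simp⟩).symm

theorem insertLast_swap_last (i j : Fin m) :
    insertLast (swap i j) (Fin.last m) = swap i.castSucc j.castSucc := by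
  simpa [insertLast_one_last] using insertLast_mul_swap 1 (Fin.last m) i j

theorem swap_castSucc_succ_succAbove (p j : Fin m) :
    swap p.castSucc p.succ (p.succ.succAbove j) = p.castSucc.succAbove j := by
  simp only [swap_apply_def, Fin.succAbove, Fin.lt_def, Fin.ext_iff]
  grind

theorem insertLast_succ (σ : Perm (Fin m)) (p : Fin m) :
    insertLast σ p.succ = insertLast σ p.castSucc * swap p.castSucc p.succ := by
  refine (eq_insertLast_iff.2 ⟨?_, fun j => ?_⟩).symm
  · rw [Perm.mul_apply, swap_apply_right, insertLast_apply_self]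
  · rw [Perm.mul_apply, swap_castSucc_succ_succAbove, insertLast_apply_succAbove]

/-- `τ` arises from the word `σ` by an adjacent position-swap. -/
def AdjacentSwap (σ τ : Perm (Fin (m + 1))) : Prop :=
  ∃ i : Fin m, τ = σ * swap i.castSucc i.succ

theorem AdjacentSwap.symm {σ τ : Perm (Fin (m + 1))} (h : AdjacentSwap σ τ) :
    AdjacentSwap τ σ := by
  obtain ⟨i, rfl⟩ := h
  exact ⟨i, by rw [mul_assoc, swap_mul_self, mul_one]⟩

theorem adjacentSwap_insertLast_castSucc_succ (σ : Perm (Fin (m + 1))) (p : Fin (m + 1)) :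
    AdjacentSwap (insertLast σ p.castSucc) (insertLast σ p.succ) :=
  ⟨p, insertLast_succ σ p⟩

theorem AdjacentSwap.insertLast_last {σ τ : Perm (Fin (m + 1))} (h : AdjacentSwap σ τ) :
    AdjacentSwap (insertLast σ (Fin.last _)) (insertLast τ (Fin.last _)) := by
  obtain ⟨i, rfl⟩ := h
  exact ⟨i.castSucc, by
    simp only [insertLast_mul_swap, Fin.succAbove_last_apply, Fin.succ_castSucc]⟩

theorem AdjacentSwap.insertLast_zero {σ τ : Perm (Fin (m + 1))} (h : AdjacentSwap σ τ) :
    AdjacentSwap (insertLast σ 0) (insertLast τ 0) := by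
  obtain ⟨i, rfl⟩ := h
  exact ⟨i.succ, by
    simp only [insertLast_mul_swap, Fin.succAbove_zero_apply, Fin.succ_castSucc]⟩

theorem IsGrayCode.exists_insertLast {σ τ : Perm (Fin (m + 1))} {l : List (Perm (Fin (m + 1)))}
    (hl : IsGrayCode AdjacentSwap σ τ l) (heven : Even l.length) :
    ∃ l', IsGrayCode AdjacentSwap (insertLast σ (Fin.last _)) (insertLast τ (Fin.last _)) l' := by
  have hpositions := (isGrayCode_finRange (m + 1)).reverse
  have hpairs := hl.snake hpositions heven
    (T := fun x y => AdjacentSwap (Function.uncurry insertLast x) (Function.uncurry insertLast y))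
    (by rintro σ _ _ ⟨p, rfl, rfl⟩; exact (adjacentSwap_insertLast_castSucc_succ σ p).symm)
    (by rintro σ _ _ ⟨p, rfl, rfl⟩; exact adjacentSwap_insertLast_castSucc_succ σ p)
    (fun _ _ => AdjacentSwap.insertLast_last) (fun _ _ => AdjacentSwap.insertLast_zero)
  exact ⟨_, hpairs.map bijective_uncurry_insertLast fun _ _ => id⟩

theorem isGrayCode_perm_fin_two :
    IsGrayCode AdjacentSwap 1 (swap 0 1) [1, (swap 0 1 : Perm (Fin 2))] where
  isChain := by simp [AdjacentSwap]
  nodup := by decide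
  mem := by decide
  head? := rfl
  getLast? := rfl

theorem exists_isGrayCode_perm_fin (n : ℕ) :
    ∃ l, IsGrayCode AdjacentSwap 1 (swap 0 1 : Perm (Fin (n + 2))) l := by
  induction n with
  | zero => exact ⟨_, isGrayCode_perm_fin_two⟩
  | succ n ih =>
    obtain ⟨l, hl⟩ := ih
    have heven : Even (Fintype.card (Perm (Fin (n + 2)))) := by
      rw [Fintype.card_perm, Fintype.card_fin, even_iff_two_dvd]
      exact Nat.dvd_factorial two_pos (Nat.le_add_left 2 n)
    simpa [insertLast_one_last, insertLast_swap_last] using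
      hl.exists_insertLast (hl.even_length heven)

end Permutations

theorem gray_code_adjacent_succ_general (n : ℕ) (hn : 1 ≤ n) :
    ∃ (N : ℕ) (π : Fin (N + 1) → Equiv.Perm (Fin (n + 1))),
      N + 1 = Nat.factorial (n + 1) ∧
      Function.Bijective π ∧
      π 0 = 1 ∧
      π (Fin.last N) = Equiv.swap 0 1 ∧
      (∀ s : Fin (N + 1), (s : ℕ) < N →
        ∃ i : ℕ, ∃ h : i + 1 < n + 1,
          π (s + 1) = π s * Equiv.swap ⟨i, Nat.lt_of_succ_lt h⟩ ⟨i + 1, h⟩) := by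
  obtain ⟨m, rfl⟩ := Nat.exists_eq_add_of_le' hn
  obtain ⟨l, hl⟩ := exists_isGrayCode_perm_fin m
  obtain ⟨N, π, hbij, hzero, hlast, hadj⟩ := hl.exists_bijective_fin
  have hcard : N + 1 = (m + 2).factorial := by
    simpa [Fintype.card_perm] using Fintype.card_of_bijective hbij
  refine ⟨N, π, hcard, hbij, hzero, hlast, fun s hs => ?_⟩
  obtain ⟨t, rfl⟩ : ∃ t : Fin N, t.castSucc = s := ⟨s.castLT hs, s.castSucc_castLT hs⟩
  obtain ⟨i, hi⟩ := hadj t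
  exact ⟨i, Nat.succ_lt_succ i.isLt, by rw [Fin.coeSucc_eq_succ]; exact hi⟩

/-- Let `n ≥ 2` be even. Then there is a Gray code for `S_{n+1}` under
adjacent position-swaps from the identity word `123⋯(n+1)` to the word `213⋯(n+1)`:
a listing `π : Fin (N+1) → Perm (Fin (n+1))` of all `(n+1)!` permutations, each exactly
once, in which any two consecutive permutations differ by an adjacent position-swap
(`π (s+1) = π s * swap i (i+1)`). -/
theorem gray_code_adjacent_succ (n : ℕ) (hn : 2 ≤ n) (he : Even n) :
    ∃ (N : ℕ) (π : Fin (N + 1) → Equiv.Perm (Fin (n + 1))),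
      N + 1 = Nat.factorial (n + 1) ∧
      Function.Bijective π ∧
      π 0 = 1 ∧
      π (Fin.last N) = Equiv.swap 0 1 ∧
      (∀ s : Fin (N + 1), (s : ℕ) < N →
        ∃ i : ℕ, ∃ h : i + 1 < n + 1,
          π (s + 1) = π s * Equiv.swap ⟨i, by omega⟩ ⟨i + 1, h⟩) :=
  gray_code_adjacent_succ_general n (one_le_two.trans hn)
end
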